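/- Let K be a field of characteristic zero, D ⊆ Δ⁺ a basic subset, and φ : D → K ∖ {0}. The field of invariants K(V_{D,φ})^N of the coadjoint action of N = UT(n,K) on the field of rational functions on the basic variety V_{D,φ} is a purely transcendental extension of K of transcendence degree |C(D)| − |D|; that is, it is generated over K by |C(D)| − |D| algebraically independent elements. -/

import Mathlib

/-- A positive root `(i,j)`: `n ≥ i > j ≥ 1`. -/
def IsPosRoot (n : ℕ) (γ : ℕ × ℕ) : Prop := 1 ≤ γ.2 ∧ γ.2 < γ.1 ∧ γ.1 ≤ n

/-- `γ` is the sum of the roots `α` and `β` (in either order):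
`(i,j) + (j,k) = (i,k)`. -/
def RootSum (α β γ : ℕ × ℕ) : Prop :=
  (α.2 = β.1 ∧ γ = (α.1, β.2)) ∨ (β.2 = α.1 ∧ γ = (β.1, α.2))

/-- A basic subset: a set of positive roots with at most one root in each
row and at most one root in each column. -/
def IsBasic (n : ℕ) (D : Set (ℕ × ℕ)) : Prop :=
  (∀ γ ∈ D, IsPosRoot n γ) ∧
  (∀ α ∈ D, ∀ β ∈ D, α.1 = β.1 → α = β) ∧
  (∀ α ∈ D, ∀ β ∈ D, α.2 = β.2 → α = β)

/-- A positive root `α` is `D`-singular if `α + β ∈ D` for some positive root `β`. -/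
def IsSingular (n : ℕ) (D : Set (ℕ × ℕ)) (α : ℕ × ℕ) : Prop :=
  IsPosRoot n α ∧ ∃ β γ, IsPosRoot n β ∧ RootSum α β γ ∧ γ ∈ D

/-- `M(D) = R(D) \ D`, where `R(D)` is the set of `D`-regular positive roots. -/
def MD (n : ℕ) (D : Set (ℕ × ℕ)) : Set (ℕ × ℕ) :=
  {γ | IsPosRoot n γ ∧ ¬ IsSingular n D γ ∧ γ ∉ D}
open scoped Classical

/-- Marks used in the diagram of a basic subset. -/
inductive Mark : Type
  | otimes : Mark
  | plus : Mark
  | minus : Mark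
  | bullet : Mark
deriving DecidableEq

/-- A marking state of the diagram: a partial assignment of marks to places. -/
abbrev MState : Type := ℕ × ℕ → Option Mark

/-- Step 0 of the diagram construction: every root of `M(D)` is marked `•`. -/
noncomputable def initMark (n : ℕ) (D : Set (ℕ × ℕ)) : MState :=
  fun γ => if γ ∈ MD n D then some Mark.bullet else none

/-- One step of the diagram construction: mark `ξ` with `⊗`, and for every
decomposition `ξ = α + β` with `col α = col ξ`, `row β = row ξ` and both
`α`, `β` unmarked, mark `α` with `+` and `β` with `−`. -/
noncomputable def markStep (s : MState) (ξ : ℕ × ℕ) : MState :=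
  fun γ =>
    if γ = ξ then some Mark.otimes
    else if γ.2 = ξ.2 ∧ ξ.2 < γ.1 ∧ γ.1 < ξ.1 ∧ s γ = none ∧ s (ξ.1, γ.1) = none then
      some Mark.plus
    else if γ.1 = ξ.1 ∧ ξ.2 < γ.2 ∧ γ.2 < ξ.1 ∧ s γ = none ∧ s (γ.2, ξ.2) = none then
      some Mark.minus
    else s γ

/-- The list of all positive roots in decreasing order with respect to `≻`
(`(k,m) ≻ (i,j)` iff `m < j`, or `m = j` and `k > i`). -/
def rootList (n : ℕ) : List (ℕ × ℕ) :=
  (List.range n).flatMap (fun j0 =>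
    (List.range n).filterMap (fun k =>
      if j0 + 1 < n - k then some (n - k, j0 + 1) else none))

/-- Run the diagram construction along a list of places, recording at each
step `i` the pair (`ξ_i`, state after step `i`). -/
noncomputable def diagRun (s : MState) : List (ℕ × ℕ) → List ((ℕ × ℕ) × MState)
  | [] => []
  | ξ :: rest =>
    if s ξ = none then (ξ, markStep s ξ) :: diagRun (markStep s ξ) rest
    else diagRun s rest

/-- The full run of the diagram construction for a basic subset `D`. -/
noncomputable def diagSeq (n : ℕ) (D : Set (ℕ × ℕ)) : List ((ℕ × ℕ) × MState) :=
  diagRun (initMark n D) (rootList n)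

/-- `c`, the number of steps (= number of `⊗` marks) of the diagram. -/
noncomputable def numSteps (n : ℕ) (D : Set (ℕ × ℕ)) : ℕ := (diagSeq n D).length

/-- `ξ_i`, the root marked `⊗` at step `i` (for `1 ≤ i ≤ c`). -/
noncomputable def xiRoot (n : ℕ) (D : Set (ℕ × ℕ)) (i : ℕ) : ℕ × ℕ :=
  (((diagSeq n D).getD (i - 1) ((0, 0), initMark n D))).1

/-- The state of the diagram after step `i` (for `0 ≤ i ≤ c`); the state
"before step `i`" is `stateAfter n D (i-1)`. -/
noncomputable def stateAfter (n : ℕ) (D : Set (ℕ × ℕ)) : ℕ → MState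
  | 0 => initMark n D
  | i + 1 => (((diagSeq n D).getD i ((0, 0), initMark n D))).2

/-- `C(D)`: the set of roots marked `⊗` on the diagram. -/
noncomputable def CD (n : ℕ) (D : Set (ℕ × ℕ)) : Set (ℕ × ℕ) :=
  {γ | γ ∈ (diagSeq n D).map Prod.fst}

/-- `A_γ`: the set of roots of `C(D)` in the same row as `γ`, strictly to the
left of `γ`. -/
noncomputable def AD (n : ℕ) (D : Set (ℕ × ℕ)) (γ : ℕ × ℕ) : Set (ℕ × ℕ) :=
  {γ' | γ' ∈ CD n D ∧ γ'.1 = γ.1 ∧ γ'.2 < γ.2}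
open scoped Classical

/-- The variable set `{x_γ : γ ∈ Δ⁺}`: positive roots of `Δ⁺`. -/
abbrev PRoot (n : ℕ) : Type := {γ : ℕ × ℕ // IsPosRoot n γ}

/-- A point `v : Δ⁺ → K` of `𝔫₋` realized as a strictly lower triangular
matrix (`1`-based roots, `0`-based matrix indices). -/
noncomputable def matOf (n : ℕ) (K : Type) [Field K] (v : PRoot n → K) :
    Matrix (Fin n) (Fin n) K :=
  fun a b =>
    if h : IsPosRoot n ((a : ℕ) + 1, (b : ℕ) + 1) then v ⟨((a : ℕ) + 1, (b : ℕ) + 1), h⟩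
    else 0

/-- The point of `𝔫₋` given by the strictly lower triangular entries of a
matrix. -/
noncomputable def vecOf (n : ℕ) (K : Type) [Field K] (A : Matrix (Fin n) (Fin n) K)
    (γ : PRoot n) : K :=
  A ⟨γ.1.1 - 1, by obtain ⟨h1, h2, h3⟩ := γ.2; omega⟩
    ⟨γ.1.2 - 1, by obtain ⟨h1, h2, h3⟩ := γ.2; omega⟩

/-- `π`: the strictly lower triangular part of a matrix. -/
def lowerPart (n : ℕ) (K : Type) [Field K] (A : Matrix (Fin n) (Fin n) K) :
    Matrix (Fin n) (Fin n) K :=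
  fun a b => if (b : ℕ) < (a : ℕ) then A a b else 0

/-- Membership in `N = UT(n,K)`: upper triangular with units on the diagonal. -/
def IsUni (n : ℕ) (K : Type) [Field K] (g : Matrix (Fin n) (Fin n) K) : Prop :=
  (∀ i : Fin n, g i i = 1) ∧ ∀ i j : Fin n, j < i → g i j = 0

/-- The element `X_{D,φ} = Σ_{ξ ∈ D} φ(ξ) E_ξ` of `𝔫₋`. -/
noncomputable def XDphi (n : ℕ) (K : Type) [Field K] (D : Set (ℕ × ℕ)) (φ : ℕ × ℕ → K) :
    Matrix (Fin n) (Fin n) K :=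
  fun a b => if ((a : ℕ) + 1, (b : ℕ) + 1) ∈ D then φ ((a : ℕ) + 1, (b : ℕ) + 1) else 0

/-- The basic variety `V_{D,φ} = {π(g X_{D,φ} h) : g, h ∈ N}`, as a set of
points of `𝔫₋`. -/
noncomputable def VDvar (n : ℕ) (K : Type) [Field K] (D : Set (ℕ × ℕ)) (φ : ℕ × ℕ → K) :
    Set (PRoot n → K) :=
  {v | ∃ g h : Matrix (Fin n) (Fin n) K, IsUni n K g ∧ IsUni n K h ∧
    v = vecOf n K (lowerPart n K (g * XDphi n K D φ * h))}

/-- The basic cell `V_D^∘ = ⋃_φ V_{D,φ}`, over all `φ : D → K ∖ {0}`. -/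
noncomputable def VDcell (n : ℕ) (K : Type) [Field K] (D : Set (ℕ × ℕ)) :
    Set (PRoot n → K) :=
  {v | ∃ φ : ℕ × ℕ → K, (∀ γ ∈ D, φ γ ≠ 0) ∧ v ∈ VDvar n K D φ}

/-- The vanishing ideal `I(S)` of a set of points `S`. -/
noncomputable def vanishing (σ K : Type) [Field K] (S : Set (σ → K)) :
    Ideal (MvPolynomial σ K) where
  carrier := {f | ∀ v ∈ S, MvPolynomial.eval v f = 0}
  add_mem' := by
    intro a b ha hb v hv
    simp [map_add, ha v hv, hb v hv]
  zero_mem' := by intro v hv; simp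
  smul_mem' := by
    intro c f hf v hv
    simp [smul_eq_mul, hf v hv]
/-- The coadjoint action of `g ∈ N` on a point of `𝔫₋`: `X ↦ π(g X g⁻¹)`. -/
noncomputable def coadjPt (n : ℕ) (K : Type) [Field K]
    (g : Matrix (Fin n) (Fin n) K) (v : PRoot n → K) : PRoot n → K :=
  vecOf n K (lowerPart n K (g * matOf n K v * g⁻¹))

/-- The minor `P^w_{ij}(A)` for `w : ℕ → ℕ` and `1`-based indices `i, j`:
rows `I = w(J') ∪ {i}`, columns `J = J' ∪ {j}`, where
`J' = {b < j : w(b) > i}`, each listed in increasing order. -/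
noncomputable def minorW (n : ℕ) (R : Type) [CommRing R] (w : ℕ → ℕ)
    (A : Matrix (Fin n) (Fin n) R) (i j : ℕ) : R :=
  let J' : Finset (Fin n) := Finset.univ.filter (fun b => (b : ℕ) + 1 < j ∧ i < w ((b : ℕ) + 1))
  let JJ : Finset (Fin n) := J' ∪ Finset.univ.filter (fun b => (b : ℕ) + 1 = j)
  let II : Finset (Fin n) := Finset.univ.filter
    (fun a => (a : ℕ) + 1 = i ∨ ∃ b ∈ J', w ((b : ℕ) + 1) = (a : ℕ) + 1)
  if h : II.card = JJ.card then
    Matrix.det (Matrix.of fun a b : Fin JJ.card =>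
      A ((II.orderIsoOfFin h) a).val ((JJ.orderIsoOfFin rfl) b).val)
  else 0

/-- The generic matrix of `𝔫₋`, whose strictly lower triangular entries are
the variables `x_γ`. -/
noncomputable def genMat (n : ℕ) (K : Type) [Field K] :
    Matrix (Fin n) (Fin n) (MvPolynomial (PRoot n) K) :=
  fun a b =>
    if h : IsPosRoot n ((a : ℕ) + 1, (b : ℕ) + 1) then
      MvPolynomial.X ⟨((a : ℕ) + 1, (b : ℕ) + 1), h⟩
    else 0

/-- The field of rational functions `K(S)` on an (irreducible) subset
`S ⊆ 𝔫₋`: the fraction field of `K[x_γ]/I(S)`. -/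
noncomputable abbrev RatFld (n : ℕ) (K : Type) [Field K] (S : Set (PRoot n → K)) : Type :=
  FractionRing (MvPolynomial (PRoot n) K ⧸ vanishing (PRoot n) K S)

/-- `F ∈ K(S)` is an invariant of the coadjoint action of `N` on `S`:
writing `F = f/h` with `h ∉ I(S)`, for every `g ∈ N` the rational functions
`F ∘ (coadjoint action of g)` and `F` agree on `S`. -/
noncomputable def IsInvariantRat (n : ℕ) (K : Type) [Field K]
    (S : Set (PRoot n → K)) (F : RatFld n K S) : Prop :=
  ∃ f h : MvPolynomial (PRoot n) K,
    h ∉ vanishing (PRoot n) K S ∧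
    algebraMap (MvPolynomial (PRoot n) K ⧸ vanishing (PRoot n) K S) (RatFld n K S)
        (Ideal.Quotient.mk (vanishing (PRoot n) K S) h) * F =
      algebraMap (MvPolynomial (PRoot n) K ⧸ vanishing (PRoot n) K S) (RatFld n K S)
        (Ideal.Quotient.mk (vanishing (PRoot n) K S) f) ∧
    ∀ g : Matrix (Fin n) (Fin n) K, IsUni n K g → ∀ v ∈ S,
      MvPolynomial.eval (coadjPt n K g v) f * MvPolynomial.eval v h =
        MvPolynomial.eval v f * MvPolynomial.eval (coadjPt n K g v) h

/-!
Every point of the basic variety is conjugate, rationally in the point, to one of the form `π(X a)`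
with `X = X_{D,φ}` and `a ∈ N`, so only conjugacy within this slice matters. Let the label `c e` of
`e` be the column of the nonzero entry of `X` in row `e`, or at least `n` if there is none. Up to
conjugacy a point of the slice is described by a matrix `Y` supported on the places `(e, k)` with
`k < e` and `c k < c e ≤ k`, and two points are conjugate if and only if their matrices satisfy
`g Y = W g` on these places for some unipotent `g` of a pattern prescribed by `c`.

Let `d` be the first column that contains such places and `i` its lowest row. The entry `Y i d` is
an invariant, and where it does not vanish it is a pivot: clearing the rest of column `d` by a
conjugation, rational in `Y`, leaves the same problem for the labelling in which the labels of `d`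
and `i` are swapped. Repeating these bumps removes all the places, so that the pivots become a
complete set of independent invariants; those at the roots of `D` are constants. The diagram of `D`
performs the bumps one by one: the unmarked roots are at each step the places of the current
labelling, together with places forced by the roots of `D` that are still to come.

The conclusion is transported to fields of invariants by rational maps which match the conjugacy
relations generically and which have a rational section through every generic set.
-/

section RationalMaps

open MvPolynomial Filter

variable {K : Type} [Field K] {σ τ υ : Type}

/-- A nonempty irreducible set of points of an affine space: two polynomials that are not
identically zero on it have a common point where neither vanishes. -/
structure IrrSet (σ K : Type) [Field K] where
  carrier : Set (σ → K)
  nonempty : carrier.Nonempty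
  irr : ∀ f g : MvPolynomial σ K, (∃ v ∈ carrier, eval v f ≠ 0) →
    (∃ v ∈ carrier, eval v g ≠ 0) → ∃ v ∈ carrier, eval v f ≠ 0 ∧ eval v g ≠ 0

namespace IrrSet

/-- The principal open subset of an irreducible set where a polynomial does not vanish. -/
def basicOpen (S : IrrSet σ K) (q : MvPolynomial σ K) : Set (σ → K) :=
  {v | v ∈ S.carrier ∧ eval v q ≠ 0}

theorem basicOpen_one (S : IrrSet σ K) : S.basicOpen 1 = S.carrier := by
  simp [basicOpen]

theorem basicOpen_mul (S : IrrSet σ K) (p q : MvPolynomial σ K) :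
    S.basicOpen (p * q) = S.basicOpen p ∩ S.basicOpen q := by
  ext v
  simp only [basicOpen, map_mul, ne_eq, mul_eq_zero, not_or, Set.mem_ofPred_eq, Set.mem_inter_iff]
  tauto

theorem nonempty_basicOpen_mul {S : IrrSet σ K} {p q : MvPolynomial σ K}
    (hp : (S.basicOpen p).Nonempty) (hq : (S.basicOpen q).Nonempty) :
    (S.basicOpen (p * q)).Nonempty := by
  obtain ⟨v, hv, hpv, hqv⟩ := S.irr p q hp hq
  exact ⟨v, hv, by simp [hpv, hqv]⟩

/-- The filter of generic sets: those containing a nonempty principal open subset. -/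
def gen (S : IrrSet σ K) : Filter (σ → K) where
  sets := {U | ∃ q, (S.basicOpen q).Nonempty ∧ S.basicOpen q ⊆ U}
  univ_sets := ⟨1, by simpa only [basicOpen_one] using S.nonempty, Set.subset_univ _⟩
  sets_of_superset := by
    rintro U W ⟨q, hq, hqU⟩ hUW
    exact ⟨q, hq, hqU.trans hUW⟩
  inter_sets := by
    rintro U W ⟨p, hp, hpU⟩ ⟨q, hq, hqW⟩
    refine ⟨p * q, nonempty_basicOpen_mul hp hq, ?_⟩
    rw [basicOpen_mul]
    exact Set.inter_subset_inter hpU hqW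

theorem basicOpen_mem_gen {S : IrrSet σ K} {q : MvPolynomial σ K}
    (hq : (S.basicOpen q).Nonempty) : S.basicOpen q ∈ S.gen :=
  ⟨q, hq, subset_rfl⟩

theorem carrier_mem_gen (S : IrrSet σ K) : S.carrier ∈ S.gen :=
  ⟨1, by simpa only [basicOpen_one] using S.nonempty, S.basicOpen_one.subset⟩

instance (S : IrrSet σ K) : S.gen.NeBot := by
  rw [Filter.neBot_iff, ne_eq, ← Filter.empty_mem_iff_bot]
  rintro ⟨q, hq, hq'⟩
  exact (hq.mono hq').ne_empty rfl

theorem eval_eq_zero_of_eventually {S : IrrSet σ K} {p : MvPolynomial σ K}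
    (h : ∀ᶠ v in S.gen, eval v p = 0) : ∀ v ∈ S.carrier, eval v p = 0 := by
  by_contra! hc
  obtain ⟨v, hv, -, hne⟩ := (h.and (basicOpen_mem_gen hc)).exists
  exact hne hv

end IrrSet

/-- `r` is given on `U` by a single quotient of polynomials. -/
def RegOn (U : Set (σ → K)) (r : (σ → K) → K) : Prop :=
  ∃ a b : MvPolynomial σ K, ∀ p ∈ U, eval p b ≠ 0 ∧ r p = eval p a / eval p b

namespace RegOn
variable {U W : Set (σ → K)} {r s : (σ → K) → K}

theorem mono (h : RegOn U r) (hWU : W ⊆ U) : RegOn W r := by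
  obtain ⟨a, b, hab⟩ := h
  exact ⟨a, b, fun p hp => hab p (hWU hp)⟩

theorem congr (h : RegOn U r) (hrs : ∀ p ∈ U, s p = r p) : RegOn U s := by
  obtain ⟨a, b, hab⟩ := h
  exact ⟨a, b, fun p hp => ⟨(hab p hp).1, (hrs p hp).trans (hab p hp).2⟩⟩

theorem const (c : K) : RegOn U (fun _ => c) := ⟨C c, 1, fun p _ => by simp⟩

theorem coord (i : σ) : RegOn U (fun p => p i) := ⟨X i, 1, fun p _ => by simp⟩

theorem add (hr : RegOn U r) (hs : RegOn U s) : RegOn U (fun p => r p + s p) := by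
  obtain ⟨a, b, hab⟩ := hr
  obtain ⟨c, d, hcd⟩ := hs
  refine ⟨a * d + b * c, b * d, fun p hp => ?_⟩
  obtain ⟨hb, hra⟩ := hab p hp
  obtain ⟨hd, hsc⟩ := hcd p hp
  refine ⟨by simp [hb, hd], ?_⟩
  beta_reduce
  rw [hra, hsc]
  simp only [map_add, map_mul]
  field_simp

theorem mul (hr : RegOn U r) (hs : RegOn U s) : RegOn U (fun p => r p * s p) := by
  obtain ⟨a, b, hab⟩ := hr
  obtain ⟨c, d, hcd⟩ := hs
  refine ⟨a * c, b * d, fun p hp => ?_⟩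
  obtain ⟨hb, hra⟩ := hab p hp
  obtain ⟨hd, hsc⟩ := hcd p hp
  refine ⟨by simp [hb, hd], ?_⟩
  beta_reduce
  rw [hra, hsc]
  simp only [map_mul]
  field_simp

theorem neg (hr : RegOn U r) : RegOn U (fun p => - r p) :=
  ((const (-1)).mul hr).congr fun p _ => by ring

theorem sub (hr : RegOn U r) (hs : RegOn U s) : RegOn U (fun p => r p - s p) :=
  (hr.add hs.neg).congr fun p _ => by ring

theorem div (hr : RegOn U r) (hs : RegOn U s) (h0 : ∀ p ∈ U, s p ≠ 0) :
    RegOn U (fun p => r p / s p) := by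
  obtain ⟨a, b, hab⟩ := hr
  obtain ⟨c, d, hcd⟩ := hs
  refine ⟨a * d, b * c, fun p hp => ?_⟩
  obtain ⟨hb, hra⟩ := hab p hp
  obtain ⟨hd, hsc⟩ := hcd p hp
  have hsp := h0 p hp
  rw [hsc] at hsp
  have hc : eval p c ≠ 0 := fun h => hsp (by simp [h])
  refine ⟨by simp [hb, hc], ?_⟩
  beta_reduce
  rw [hra, hsc]
  simp only [map_mul]
  field_simp

theorem sum {ι : Type*} (t : Finset ι) {f : ι → (σ → K) → K} (hf : ∀ i ∈ t, RegOn U (f i)) :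
    RegOn U (fun p => ∑ i ∈ t, f i p) := by
  induction t using Finset.induction_on with
  | empty => exact (const 0).congr fun p _ => by simp
  | insert a t ha ih =>
    refine ((hf a (by simp)).add (ih fun i hi => hf i (by simp [hi]))).congr fun p _ => ?_
    rw [Finset.sum_insert ha]

theorem ite (c : Prop) [Decidable c] (hr : c → RegOn U r) (hs : ¬c → RegOn U s) :
    RegOn U (fun p => if c then r p else s p) := by
  by_cases h : c
  · simpa [h] using hr h
  · simpa [h] using hs h

theorem eval_comp {ρ : (σ → K) → τ → K} (hρ : ∀ i, RegOn U (fun v => ρ v i))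
    (f : MvPolynomial τ K) : RegOn U (fun v => eval (ρ v) f) := by
  induction f using MvPolynomial.induction_on with
  | C a => simpa using const a
  | add p q hp hq => simpa using hp.add hq
  | mul_X p i hp => simpa using hp.mul (hρ i)

theorem comp {W : Set (τ → K)} {r : (τ → K) → K} {ρ : (σ → K) → τ → K}
    (hρ : ∀ i, RegOn U (fun v => ρ v i)) (hr : RegOn W r) (hUW : ∀ v ∈ U, ρ v ∈ W) :
    RegOn U (fun v => r (ρ v)) := by
  obtain ⟨a, b, hab⟩ := hr
  exact ((eval_comp hρ a).div (eval_comp hρ b) fun p hp => (hab _ (hUW p hp)).1).congr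
    fun p hp => (hab _ (hUW p hp)).2

end RegOn

/-- `r` is a rational function on the irreducible set `S`. -/
def RatOn (S : IrrSet σ K) (r : (σ → K) → K) : Prop := ∃ U ∈ S.gen, RegOn U r

namespace RatOn
variable {S : IrrSet σ K} [Finite τ] {ρ : (σ → K) → τ → K}

theorem exists_common (hρ : ∀ i, RatOn S (fun v => ρ v i)) :
    ∃ U ∈ S.gen, ∀ i, RegOn U (fun v => ρ v i) := by
  choose U hU hr using hρ
  exact ⟨⋂ i, U i, Filter.iInter_mem.mpr hU, fun i => (hr i).mono (Set.iInter_subset U i)⟩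

theorem comp (hρ : ∀ i, RatOn S (fun v => ρ v i)) {W : Set (τ → K)} {r : (τ → K) → K}
    (hr : RegOn W r) (hW : ∀ᶠ v in S.gen, ρ v ∈ W) : RatOn S (fun v => r (ρ v)) := by
  obtain ⟨U, hU, hreg⟩ := exists_common hρ
  exact ⟨U ∩ {v | ρ v ∈ W}, Filter.inter_mem hU hW,
    RegOn.comp (fun i => (hreg i).mono Set.inter_subset_left) hr fun v hv => hv.2⟩

end RatOn

theorem RegOn.eventually_ne_zero {S : IrrSet σ K} {q : MvPolynomial σ K} {r : (σ → K) → K}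
    (hr : RegOn (S.basicOpen q) r) {x : σ → K} (hx : x ∈ S.basicOpen q) (hrx : r x ≠ 0) :
    ∀ᶠ v in S.gen, v ∈ S.basicOpen q ∧ r v ≠ 0 := by
  obtain ⟨a, b, hab⟩ := hr
  have ha : eval x a ≠ 0 := fun h0 => hrx (by rw [(hab x hx).2, h0, zero_div])
  filter_upwards [IrrSet.basicOpen_mem_gen ⟨x, hx⟩, IrrSet.basicOpen_mem_gen ⟨x, hx.1, ha⟩]
    with v hv hva
  refine ⟨hv, ?_⟩
  rw [(hab v hv).2]
  exact div_ne_zero hva.2 (hab v hv).1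

/-- The quotient of `S` by `r` is birational to the quotient of `T` by `r'`: there is a dominant
rational map `S → T` matching the relations generically and having, up to `r'`, a rational section
through any generic set. -/
def Reduces (S : IrrSet σ K) (r : (σ → K) → (σ → K) → Prop) (T : IrrSet τ K)
    (r' : (τ → K) → (τ → K) → Prop) : Prop :=
  ∃ ρ : (σ → K) → τ → K, (∀ i, RatOn S (fun v => ρ v i)) ∧ Tendsto ρ S.gen T.gen ∧
    (∃ U ∈ S.gen, ∀ v ∈ U, ∀ w ∈ U, r v w ↔ r' (ρ v) (ρ w)) ∧
    ∀ P ∈ S.gen, ∃ s : (τ → K) → σ → K, (∀ i, RatOn T (fun p => s p i)) ∧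
      ∀ᶠ p in T.gen, s p ∈ P ∧ r' (ρ (s p)) p

theorem Reduces.trans [Finite σ] [Finite τ] [Finite υ] {S : IrrSet σ K}
    {r : (σ → K) → (σ → K) → Prop} {T : IrrSet τ K} {r' : (τ → K) → (τ → K) → Prop}
    {F : IrrSet υ K} {r'' : (υ → K) → (υ → K) → Prop} [IsTrans (υ → K) r'']
    (h₁ : Reduces S r T r') (h₂ : Reduces T r' F r'') : Reduces S r F r'' := by
  obtain ⟨ρ₁, hρ₁, ht₁, ⟨U₁, hU₁, hr₁⟩, hs₁⟩ := h₁
  obtain ⟨ρ₂, hρ₂, ht₂, ⟨U₂, hU₂, hr₂⟩, hs₂⟩ := h₂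
  refine ⟨fun v => ρ₂ (ρ₁ v), fun i => ?_, ht₂.comp ht₁,
    ⟨U₁ ∩ ρ₁ ⁻¹' U₂, inter_mem hU₁ (ht₁ hU₂), fun v hv w hw =>
      (hr₁ v hv.1 w hw.1).trans (hr₂ _ hv.2 _ hw.2)⟩, fun P hP => ?_⟩
  · obtain ⟨W, hW, hreg⟩ := hρ₂ i
    exact RatOn.comp hρ₁ hreg (ht₁ hW)
  · obtain ⟨s₁, hs₁r, hs₁e⟩ := hs₁ (P ∩ ρ₁ ⁻¹' U₂) (inter_mem hP (ht₁ hU₂))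
    obtain ⟨W, hW, hreg⟩ := RatOn.exists_common hs₁r
    obtain ⟨s₂, hs₂r, hs₂e⟩ := hs₂ _ (inter_mem (inter_mem hs₁e hU₂) hW)
    refine ⟨fun q => s₁ (s₂ q), fun i => RatOn.comp hs₂r (hreg i)
      (hs₂e.mono fun q hq => hq.1.2), hs₂e.mono fun q hq => ?_⟩
    obtain ⟨⟨⟨⟨hqP, hqU⟩, hqr⟩, hqU₂⟩, -⟩ := hq.1
    exact ⟨hqP, _root_.trans ((hr₂ _ hqU _ hqU₂).mp hqr) hq.2⟩

theorem RatOn.exists_eventually_eq_comp [Finite σ] {S : IrrSet σ K} {T : IrrSet τ K}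
    {r : (σ → K) → (σ → K) → Prop} {ρ : (σ → K) → τ → K} (hρ : Tendsto ρ S.gen T.gen)
    {U : Set (σ → K)} (hU : U ∈ S.gen) (hr : ∀ v ∈ U, ∀ w ∈ U, r v w ↔ ρ v = ρ w)
    (hsec : ∀ P ∈ S.gen, ∃ s : (τ → K) → σ → K, (∀ i, RatOn T (fun p => s p i)) ∧
      ∀ᶠ p in T.gen, s p ∈ P ∧ ρ (s p) = p)
    {g : (σ → K) → K} (hg : RatOn S g)
    {W : Set (σ → K)} (hW : W ∈ S.gen) (hinv : ∀ v ∈ W, ∀ w ∈ W, r v w → g v = g w) :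
    ∃ h, RatOn T h ∧ ∀ᶠ v in S.gen, g v = h (ρ v) := by
  obtain ⟨V, hV, hreg⟩ := hg
  obtain ⟨s, hs, hsρ⟩ := hsec _ (inter_mem (inter_mem hU hW) hV)
  refine ⟨fun p => g (s p), RatOn.comp hs hreg (hsρ.mono fun p hp => hp.1.2), ?_⟩
  filter_upwards [hU, hW, hρ.eventually hsρ] with v hvU hvW hv
  obtain ⟨⟨⟨hsU, hsW⟩, -⟩, hsv⟩ := hv
  exact hinv v hvW _ hsW ((hr v hvU _ hsU).mpr hsv.symm)

theorem tendsto_gen_of_surjOn {S : IrrSet σ K} {T : IrrSet τ K} {q : MvPolynomial σ K}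
    {q' : MvPolynomial τ K} (hq : (S.basicOpen q).Nonempty) {ρ : (σ → K) → τ → K}
    (hρ : ∀ i, RegOn (S.basicOpen q) (fun v => ρ v i))
    (hmaps : Set.MapsTo ρ (S.basicOpen q) (T.basicOpen q'))
    (hsurj : Set.SurjOn ρ (S.basicOpen q) (T.basicOpen q')) : Tendsto ρ S.gen T.gen := by
  rintro W ⟨h, hne, hW⟩
  obtain ⟨p, hp⟩ := IrrSet.nonempty_basicOpen_mul hne (hq.image ρ |>.mono hmaps.image_subset)
  rw [IrrSet.basicOpen_mul] at hp
  obtain ⟨x, hx, rfl⟩ := hsurj hp.2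
  change ∀ᶠ v in S.gen, ρ v ∈ W
  filter_upwards [(RegOn.eval_comp hρ h).eventually_ne_zero hx hp.1.2] with v hv
  exact hW ⟨(hmaps hv.1).1, hv.2⟩

theorem Reduces.of_sections [Finite τ] {S : IrrSet σ K} {r : (σ → K) → (σ → K) → Prop}
    {T : IrrSet τ K} {r' : (τ → K) → (τ → K) → Prop} {q : MvPolynomial σ K}
    {q' : MvPolynomial τ K} (hq : (S.basicOpen q).Nonempty) {ρ : (σ → K) → τ → K}
    (hρ : ∀ i, RegOn (S.basicOpen q) (fun v => ρ v i))
    (hmaps : Set.MapsTo ρ (S.basicOpen q) (T.basicOpen q'))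
    (hsurj : Set.SurjOn ρ (S.basicOpen q) (T.basicOpen q'))
    (hr : ∀ v ∈ S.basicOpen q, ∀ w ∈ S.basicOpen q, (r v w ↔ r' (ρ v) (ρ w)))
    {s : (σ → K) → (τ → K) → σ → K}
    (hs : ∀ x ∈ S.basicOpen q, ∀ i, RegOn (T.basicOpen q') (fun p => s x p i))
    (hsρ : ∀ x ∈ S.basicOpen q, s x (ρ x) = x)
    (hρs : ∀ x ∈ S.basicOpen q, ∀ p ∈ T.basicOpen q', s x p ∈ S.carrier ∧ r' (ρ (s x p)) p) :
    Reduces S r T r' := by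
  have hSq := IrrSet.basicOpen_mem_gen hq
  have hTq : T.basicOpen q' ∈ T.gen :=
    IrrSet.basicOpen_mem_gen (hq.image ρ |>.mono hmaps.image_subset)
  refine ⟨ρ, fun i => ⟨_, hSq, hρ i⟩, tendsto_gen_of_surjOn hq hρ hmaps hsurj, ⟨_, hSq, hr⟩, ?_⟩
  rintro P ⟨h, hne, hP⟩
  obtain ⟨x, hx⟩ := IrrSet.nonempty_basicOpen_mul hne hq
  rw [IrrSet.basicOpen_mul] at hx
  refine ⟨s x, fun i => ⟨_, hTq, hs x hx.2 i⟩, ?_⟩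
  filter_upwards [(RegOn.eval_comp (hs x hx.2) h).eventually_ne_zero (hmaps hx.2)
    (by simpa only [hsρ x hx.2] using hx.1.2)] with p hp
  obtain ⟨hmem, hrel⟩ := hρs x hx.2 p hp.1
  exact ⟨hP ⟨hmem, hp.2⟩, hrel⟩

theorem Reduces.of_iff {S : IrrSet τ K} {r r' : (τ → K) → (τ → K) → Prop}
    (hrefl : ∀ y, r' y y) (h : ∀ y ∈ S.carrier, ∀ w ∈ S.carrier, (r y w ↔ r' y w)) :
    Reduces S r S r' :=
  have hreg : ∀ t, RatOn S fun y => y t := fun t => ⟨_, S.carrier_mem_gen, RegOn.coord t⟩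
  ⟨id, hreg, Filter.tendsto_id, ⟨_, S.carrier_mem_gen, h⟩, fun _ hP =>
    ⟨id, hreg, Filter.mem_of_superset hP fun y hy => ⟨hy, hrefl y⟩⟩⟩

end RationalMaps

section AffineSubspaces

open MvPolynomial Filter

variable {K : Type} [Field K] {σ τ κ : Type}

/-- Substitute in `P` the constant `y₀ t` for every variable outside the range of `e`: the
restriction of `P` to the coordinate affine subspace through `y₀` with coordinates `e`. -/
noncomputable def restrictPoly (e : κ → τ) (y₀ : τ → K) : MvPolynomial τ K →ₐ[K] MvPolynomial κ K :=
  bind₁ (Function.extend e X (C ∘ y₀))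

theorem eval_restrictPoly (e : κ → τ) (y₀ : τ → K) (z : κ → K) (P : MvPolynomial τ K) :
    eval z (restrictPoly e y₀ P) = eval (Function.extend e z y₀) P := by
  have h : (fun t => eval z (Function.extend e X (C ∘ y₀) t)) = Function.extend e z y₀ := by
    funext t
    rw [Function.apply_extend (eval z)]
    congr 1 <;> funext <;> simp
  simpa only [restrictPoly, h, aeval_eq_eval] using
    aeval_bind₁ z (Function.extend e X (C ∘ y₀)) P

theorem eval_comp_restrictPoly {e : κ → τ} {y₀ y : τ → K} (hy : ∀ t ∉ Set.range e, y t = y₀ t)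
    (P : MvPolynomial τ K) : eval (y ∘ e) (restrictPoly e y₀ P) = eval y P := by
  rw [eval_restrictPoly]
  congr 2
  funext t
  by_cases ht : ∃ k, e k = t
  · obtain ⟨k, hk⟩ := ht
    rw [Function.extend_def, dif_pos ⟨k, hk⟩]
    exact congrArg y (Classical.choose_spec (p := fun k => e k = t) _)
  · rw [Function.extend_apply' _ _ _ ht, hy t ht]

theorem exists_eval_ne_zero [Infinite K] {f : MvPolynomial τ K} (hf : f ≠ 0) :
    ∃ z, eval z f ≠ 0 := by
  by_contra! hc
  exact hf (MvPolynomial.funext fun z => by simpa using hc z)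

/-- The coordinate affine subspace through `y₀` with free coordinates in `Fr`. -/
noncomputable def affineIrr [Infinite K] (Fr : Set τ) (y₀ : τ → K) : IrrSet τ K where
  carrier := {y | ∀ t ∉ Fr, y t = y₀ t}
  nonempty := ⟨y₀, fun _ _ => rfl⟩
  irr := by
    have restrict_ne_zero : ∀ f, (∃ v ∈ {y : τ → K | ∀ t ∉ Fr, y t = y₀ t}, eval v f ≠ 0) →
        restrictPoly (Subtype.val : Fr → τ) y₀ f ≠ 0 := by
      rintro f ⟨v, hv, hne⟩ h0
      apply hne
      rw [← eval_comp_restrictPoly (e := Subtype.val) (fun t ht => hv t (by simpa using ht)), h0,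
        map_zero]
    intro f g hf hg
    obtain ⟨z, hz⟩ := exists_eval_ne_zero
      (mul_ne_zero (restrict_ne_zero f hf) (restrict_ne_zero g hg))
    rw [map_mul, eval_restrictPoly, eval_restrictPoly] at hz
    exact ⟨_, fun t ht => Function.extend_apply' _ _ _ (by simpa using ht),
      left_ne_zero_of_mul hz, right_ne_zero_of_mul hz⟩

theorem eventually_eval_ne_zero_of_tendsto [Infinite K] {S : IrrSet σ K} {e : κ → τ}
    {y₀ : τ → K} (he : Function.Injective e) {ρ : (σ → K) → τ → K}
    (hρ : Tendsto ρ S.gen (affineIrr (Set.range e) y₀).gen) {f : MvPolynomial κ K} (hf : f ≠ 0) :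
    ∀ᶠ v in S.gen, eval (ρ v ∘ e) f ≠ 0 := by
  obtain ⟨z, hz⟩ := exists_eval_ne_zero hf
  have hne : ((affineIrr (Set.range e) y₀).basicOpen (rename e f)).Nonempty := by
    refine ⟨Function.extend e z y₀, fun t ht => Function.extend_apply' _ _ _ ht, ?_⟩
    rwa [eval_rename, Function.extend_comp he]
  filter_upwards [hρ (IrrSet.basicOpen_mem_gen hne)] with v hv
  simpa only [eval_rename] using hv.2

theorem exists_mem_affineIrr_ne_zero [Infinite K] {Fr : Set τ} {y₀ : τ → K} {t : τ}
    (h : t ∉ Fr → y₀ t ≠ 0) : ∃ y ∈ (affineIrr Fr y₀).carrier, y t ≠ 0 := by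
  by_cases ht : t ∈ Fr
  · refine ⟨Function.update y₀ t 1, fun s hs => Function.update_of_ne ?_ _ _, ?_⟩
    · rintro rfl
      exact hs ht
    · rw [Function.update_self]
      exact one_ne_zero
  · exact ⟨y₀, fun _ _ => rfl, h ht⟩

theorem Reduces.forget [Infinite K] [Finite τ] {Fr Fr' : Set τ} {y₀ : τ → K} (hFr : Fr' ⊆ Fr)
    {r : (τ → K) → (τ → K) → Prop} (hrefl : ∀ y, r y y)
    (hr : ∀ y w y' w', (∀ t ∉ Fr \ Fr', y t = y' t) → (∀ t ∉ Fr \ Fr', w t = w' t) →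
      (r y w ↔ r y' w')) : Reduces (affineIrr Fr y₀) r (affineIrr Fr' y₀) r := by
  have hρ : ∀ y ∈ (affineIrr Fr y₀).carrier, ∀ t ∉ Fr \ Fr',
      y t = if t ∈ Fr' then y t else y₀ t := by
    intro y hy t ht
    split_ifs with h
    · rfl
    · exact hy t fun hFr => ht ⟨hFr, h⟩
  have hsub : ∀ y ∈ (affineIrr Fr' y₀).carrier, y ∈ (affineIrr Fr y₀).carrier := fun y hy t ht =>
    hy t fun h => ht (hFr h)
  have hfix : ∀ y ∈ (affineIrr Fr' y₀).carrier, (fun t => if t ∈ Fr' then y t else y₀ t) = y :=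
    fun y hy => funext fun t => ite_eq_left_iff.mpr fun h => (hy t h).symm
  refine Reduces.of_sections (q := 1) (q' := 1) ⟨y₀, ?_⟩
    (ρ := fun y t => if t ∈ Fr' then y t else y₀ t)
    (fun t => RegOn.ite _ (fun _ => RegOn.coord t) fun _ => RegOn.const _) ?_ ?_ ?_
    (s := fun x p t => if t ∈ Fr' then p t else x t)
    (fun x _ t => RegOn.ite _ (fun _ => RegOn.coord t) fun _ => RegOn.const _) ?_ ?_
  all_goals simp only [IrrSet.basicOpen_one]
  · exact fun _ _ => rfl
  · exact fun y _ t ht => if_neg ht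
  · exact fun p hp => ⟨p, hsub p hp, hfix p hp⟩
  · exact fun y hy w hw => hr y w _ _ (hρ y hy) (hρ w hw)
  · exact fun x _ => funext fun t => by grind
  · intro x hx p hp
    refine ⟨fun t ht => ?_, ?_⟩
    · exact (if_neg fun h => ht (hFr h)).trans (hx t ht)
    · convert hrefl p using 1
      exact funext fun t => by
        have := hp t
        grind

end AffineSubspaces

section Invariants

open MvPolynomial Filter

variable {K : Type} [Field K]

theorem notMem_vanishing {σ : Type} {S : Set (σ → K)} {f : MvPolynomial σ K} :
    f ∉ vanishing σ K S ↔ ∃ v ∈ S, eval v f ≠ 0 := by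
  change (¬ ∀ v ∈ S, eval v f = 0) ↔ _
  push Not
  rfl

/-- The irreducible set attached to a set with prime vanishing ideal. -/
def IrrSet.ofPrime {σ : Type} (S : Set (σ → K)) (hI : (vanishing σ K S).IsPrime) : IrrSet σ K where
  carrier := S
  nonempty := by
    obtain ⟨v, hv, -⟩ := notMem_vanishing.mp hI.one_notMem
    exact ⟨v, hv⟩
  irr := by
    intro f g hf hg
    rw [← notMem_vanishing] at hf hg
    obtain ⟨v, hv, hne⟩ := notMem_vanishing.mp fun h => (hI.mem_or_mem h).elim hf hg
    rw [map_mul, mul_ne_zero_iff] at hne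
    exact ⟨v, hv, hne⟩

variable {n : ℕ} {S : Set (PRoot n → K)}

/-- A polynomial viewed as a rational function on `S`. -/
noncomputable def toRat (n : ℕ) (S : Set (PRoot n → K)) :
    MvPolynomial (PRoot n) K →+* RatFld n K S :=
  (algebraMap (MvPolynomial (PRoot n) K ⧸ vanishing (PRoot n) K S) (RatFld n K S)).comp
    (Ideal.Quotient.mk (vanishing (PRoot n) K S))

theorem toRat_eq_zero {f : MvPolynomial (PRoot n) K} :
    toRat n S f = 0 ↔ f ∈ vanishing (PRoot n) K S := by
  rw [toRat, RingHom.comp_apply, FaithfulSMul.algebraMap_eq_zero_iff,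
    Ideal.Quotient.eq_zero_iff_mem]

theorem toRat_C (c : K) : toRat n S (C c) = algebraMap K (RatFld n K S) c := by
  rw [IsScalarTower.algebraMap_apply K
    (MvPolynomial (PRoot n) K ⧸ vanishing (PRoot n) K S) (RatFld n K S)]
  rfl

variable [hI : (vanishing (PRoot n) K S).IsPrime]

/-- The element `F` of the fraction field is represented by the function `r`: away from the zeros
of a denominator, `r` takes the values of `F`. -/
def Represents (F : RatFld n K S) (r : (PRoot n → K) → K) : Prop :=
  ∃ a b : MvPolynomial (PRoot n) K, b ∉ vanishing (PRoot n) K S ∧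
    toRat n S b * F = toRat n S a ∧
    ∀ᶠ v in (IrrSet.ofPrime S hI).gen, r v * eval v b = eval v a

theorem eventually_eval_ne_zero {b : MvPolynomial (PRoot n) K}
    (hb : b ∉ vanishing (PRoot n) K S) : ∀ᶠ v in (IrrSet.ofPrime S hI).gen, eval v b ≠ 0 :=
  mem_of_superset (IrrSet.basicOpen_mem_gen (notMem_vanishing.mp hb)) fun _ hv => hv.2

namespace Represents

theorem congr {F : RatFld n K S} {r s : (PRoot n → K) → K} (h : Represents F r)
    (hrs : ∀ᶠ v in (IrrSet.ofPrime S hI).gen, s v = r v) : Represents F s := by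
  obtain ⟨a, b, hb, he, hv⟩ := h
  exact ⟨a, b, hb, he, by filter_upwards [hv, hrs] with v hav hrsv; rw [hrsv, hav]⟩

theorem unique {F G : RatFld n K S} {r : (PRoot n → K) → K} (hF : Represents F r)
    (hG : Represents G r) : F = G := by
  obtain ⟨a, b, hb, he, hv⟩ := hF
  obtain ⟨c, d, hd, he', hv'⟩ := hG
  have hz : a * d - c * b ∈ vanishing (PRoot n) K S := by
    refine IrrSet.eval_eq_zero_of_eventually (S := IrrSet.ofPrime S hI) ?_
    filter_upwards [hv, hv'] with v hav hcv
    simp only [map_sub, map_mul, ← hav, ← hcv]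
    ring
  rw [← toRat_eq_zero, map_sub, map_mul, map_mul, ← he, ← he'] at hz
  have hb₀ := mt toRat_eq_zero.mp hb
  have hd₀ := mt toRat_eq_zero.mp hd
  have : toRat n S b * toRat n S d * (F - G) = 0 := by rw [← hz]; ring
  simpa [hb₀, hd₀, sub_eq_zero] using this

theorem eventually_eq_zero {r : (PRoot n → K) → K} (h : Represents (0 : RatFld n K S) r) :
    ∀ᶠ v in (IrrSet.ofPrime S hI).gen, r v = 0 := by
  obtain ⟨a, b, hb, he, hv⟩ := h
  rw [mul_zero] at he
  have ha := toRat_eq_zero.mp he.symm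
  filter_upwards [hv, eventually_eval_ne_zero hb, (IrrSet.ofPrime S hI).carrier_mem_gen]
    with v hav hbv hvS
  rw [ha v hvS] at hav
  simpa [hbv] using hav

theorem const (c : K) : Represents (algebraMap K (RatFld n K S) c) (fun _ => c) :=
  ⟨C c, 1, hI.one_notMem, by rw [map_one, one_mul, toRat_C], by simp⟩

theorem add {F G : RatFld n K S} {r s : (PRoot n → K) → K} (hF : Represents F r)
    (hG : Represents G s) : Represents (F + G) (fun v => r v + s v) := by
  obtain ⟨a, b, hb, he, hv⟩ := hF
  obtain ⟨c, d, hd, he', hv'⟩ := hG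
  refine ⟨a * d + b * c, b * d, fun h => (hI.mem_or_mem h).elim hb hd, ?_, ?_⟩
  · simp only [map_add, map_mul, ← he, ← he']
    ring
  · filter_upwards [hv, hv'] with v hav hcv
    simp only [map_add, map_mul, ← hav, ← hcv]
    ring

theorem mul {F G : RatFld n K S} {r s : (PRoot n → K) → K} (hF : Represents F r)
    (hG : Represents G s) : Represents (F * G) (fun v => r v * s v) := by
  obtain ⟨a, b, hb, he, hv⟩ := hF
  obtain ⟨c, d, hd, he', hv'⟩ := hG
  refine ⟨a * c, b * d, fun h => (hI.mem_or_mem h).elim hb hd, ?_, ?_⟩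
  · simp only [map_mul, ← he, ← he']
    ring
  · filter_upwards [hv, hv'] with v hav hcv
    simp only [map_mul, ← hav, ← hcv]
    ring

theorem aeval {κ : Type} {F : κ → RatFld n K S} {r : (PRoot n → K) → κ → K}
    (h : ∀ k, Represents (F k) (fun v => r v k)) (f : MvPolynomial κ K) :
    Represents (MvPolynomial.aeval F f) (fun v => eval (r v) f) := by
  induction f using MvPolynomial.induction_on with
  | C a => simpa [algebraMap_eq] using const a
  | add p q hp hq => simpa using hp.add hq
  | mul_X p i hp => simpa using hp.mul (h i)

theorem of_ratOn {r : (PRoot n → K) → K} (h : RatOn (IrrSet.ofPrime S hI) r) :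
    ∃ F : RatFld n K S, Represents F r := by
  obtain ⟨U, hU, a, b, hab⟩ := h
  have hb : b ∉ vanishing (PRoot n) K S := by
    obtain ⟨v, hvU, hvS⟩ :=
      nonempty_of_mem (inter_mem hU (IrrSet.ofPrime S hI).carrier_mem_gen)
    exact notMem_vanishing.mpr ⟨v, hvS, (hab v hvU).1⟩
  have hb0 := mt toRat_eq_zero.mp hb
  refine ⟨toRat n S a / toRat n S b, a, b, hb, by field_simp, ?_⟩
  filter_upwards [hU] with v hv
  obtain ⟨hv0, hrv⟩ := hab v hv
  rw [hrv]
  field_simp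

theorem algebraicIndependent {κ : Type} {F : κ → RatFld n K S} {r : (PRoot n → K) → κ → K}
    (hF : ∀ k, Represents (F k) (fun v => r v k))
    (hr : ∀ f : MvPolynomial κ K, f ≠ 0 →
      ∀ᶠ v in (IrrSet.ofPrime S hI).gen, eval (r v) f ≠ 0) : AlgebraicIndependent K F := by
  refine algebraicIndependent_iff.mpr fun f hf => ?_
  by_contra hf0
  have h0 := aeval hF f
  rw [hf] at h0
  obtain ⟨v, hv0, hv⟩ := (h0.eventually_eq_zero.and (hr f hf0)).exists
  exact hv hv0

theorem mem_adjoin {κ : Type} {F : κ → RatFld n K S} {r : (PRoot n → K) → κ → K}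
    (hF : ∀ k, Represents (F k) (fun v => r v k)) {G : RatFld n K S} {g : (PRoot n → K) → K}
    (hG : Represents G g) {A B : MvPolynomial κ K}
    (hg : ∀ᶠ v in (IrrSet.ofPrime S hI).gen,
      eval (r v) B ≠ 0 ∧ g v = eval (r v) A / eval (r v) B) :
    G ∈ IntermediateField.adjoin K (Set.range F) := by
  have hB0 : MvPolynomial.aeval F B ≠ 0 := by
    intro h0
    have hB := aeval hF B
    rw [h0] at hB
    obtain ⟨v, hv0, hv, -⟩ := (hB.eventually_eq_zero.and hg).exists
    exact hv hv0
  have hprod : G * MvPolynomial.aeval F B = MvPolynomial.aeval F A := by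
    refine (hG.mul (aeval hF B)).unique ((aeval hF A).congr ?_)
    filter_upwards [hg] with v hv
    rw [hv.2, div_mul_cancel₀ _ hv.1]
  have hmem : ∀ P : MvPolynomial κ K,
      MvPolynomial.aeval F P ∈ IntermediateField.adjoin K (Set.range F) := by
    intro P
    apply IntermediateField.algebra_adjoin_le_adjoin
    rw [Algebra.adjoin_range_eq_range_aeval]
    exact ⟨P, rfl⟩
  rw [eq_div_of_mul_eq hB0 hprod]
  exact div_mem (hmem A) (hmem B)

theorem isInvariantRat {F : RatFld n K S} {r : (PRoot n → K) → K} (hF : Represents F r)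
    (htend : ∀ g : Matrix (Fin n) (Fin n) K, IsUni n K g →
      Tendsto (coadjPt n K g) (IrrSet.ofPrime S hI).gen (IrrSet.ofPrime S hI).gen)
    (hpoly : ∀ (g : Matrix (Fin n) (Fin n) K) (f : MvPolynomial (PRoot n) K),
      ∃ f' : MvPolynomial (PRoot n) K, ∀ v, eval v f' = eval (coadjPt n K g v) f)
    (hr : ∀ g : Matrix (Fin n) (Fin n) K, IsUni n K g →
      ∀ᶠ v in (IrrSet.ofPrime S hI).gen, r (coadjPt n K g v) = r v) :
    IsInvariantRat n K S F := by
  obtain ⟨a, b, hb, hab, hv⟩ := hF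
  refine ⟨a, b, hb, hab, fun g hg v hvS => ?_⟩
  obtain ⟨a', ha'⟩ := hpoly g a
  obtain ⟨b', hb'⟩ := hpoly g b
  have hgen : ∀ᶠ v in (IrrSet.ofPrime S hI).gen, eval v (a' * b - a * b') = 0 := by
    filter_upwards [hv, (htend g hg).eventually hv, hr g hg] with v hav hav' hrv
    simp only [map_sub, map_mul, ha', hb', ← hav, ← hav', hrv]
    ring
  have h0 := IrrSet.eval_eq_zero_of_eventually hgen v hvS
  simpa only [map_sub, map_mul, ha', hb', sub_eq_zero] using h0

end Represents

variable (n S) in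
/-- The invariants form an intermediate field. -/
noncomputable def invariantField : IntermediateField K (RatFld n K S) where
  carrier := {F | IsInvariantRat n K S F}
  mul_mem' := by
    rintro F G ⟨f, h, hh, he, hv⟩ ⟨f', h', hh', he', hv'⟩
    refine ⟨f * f', h * h', fun hm => (hI.mem_or_mem hm).elim hh hh', ?_, fun g hg v hvS => ?_⟩
    · simp only [map_mul, ← he, ← he']
      ring
    · simp only [map_mul]
      linear_combination (eval (coadjPt n K g v) f' * eval v h') * hv g hg v hvS +
        (eval v f * eval (coadjPt n K g v) h) * hv' g hg v hvS
  add_mem' := by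
    rintro F G ⟨f, h, hh, he, hv⟩ ⟨f', h', hh', he', hv'⟩
    refine ⟨f * h' + f' * h, h * h', fun hm => (hI.mem_or_mem hm).elim hh hh', ?_,
      fun g hg v hvS => ?_⟩
    · simp only [map_mul, map_add, ← he, ← he']
      ring
    · simp only [map_mul, map_add]
      linear_combination (eval (coadjPt n K g v) h' * eval v h') * hv g hg v hvS +
        (eval v h * eval (coadjPt n K g v) h) * hv' g hg v hvS
  algebraMap_mem' c :=
    ⟨C c, 1, hI.one_notMem, by rw [map_one, map_one, one_mul]; exact (toRat_C c).symm, by simp⟩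
  inv_mem' := by
    rintro F ⟨f, h, hh, he, hv⟩
    by_cases hF : F = 0
    · exact hF ▸ ⟨0, 1, hI.one_notMem, by simp, by simp⟩
    · refine ⟨h, f, fun hf => ?_, ?_, fun g hg v hvS => by linear_combination - hv g hg v hvS⟩
      · have he' : toRat n S h * F = toRat n S f := he
        rw [toRat_eq_zero.mpr hf] at he'
        simp [mt toRat_eq_zero.mp hh, hF] at he'
      · rw [← he]
        field_simp

instance (n : ℕ) : Finite (PRoot n) :=
  ((Set.finite_Iic n).prod (Set.finite_Iic n)).subset
    fun _ h => ⟨h.2.2, (h.2.1.trans_le h.2.2).le⟩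

theorem IsInvariantRat.exists_represents {G : RatFld n K S} (hG : IsInvariantRat n K S G) :
    ∃ g, Represents G g ∧ RatOn (IrrSet.ofPrime S hI) g ∧ ∃ W ∈ (IrrSet.ofPrime S hI).gen,
      ∀ v ∈ W, ∀ w ∈ W, (∃ u, IsUni n K u ∧ coadjPt n K u v = w) → g v = g w := by
  obtain ⟨f, h, hh, hG, hv⟩ := hG
  have hopen : (IrrSet.ofPrime S hI).basicOpen h ∈ (IrrSet.ofPrime S hI).gen :=
    IrrSet.basicOpen_mem_gen (notMem_vanishing.mp hh)
  refine ⟨fun v => eval v f / eval v h, ⟨f, h, hh, hG, ?_⟩,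
    ⟨_, hopen, f, h, fun v hv => ⟨hv.2, rfl⟩⟩, _, hopen, ?_⟩
  · filter_upwards [hopen] with v hv
    exact div_mul_cancel₀ _ hv.2
  · rintro v ⟨hvS, hv0⟩ w ⟨-, hw0⟩ ⟨u, hu, rfl⟩
    exact ((div_eq_div_iff hw0 hv0).mpr (hv u hu v hvS)).symm

theorem exists_generators_of_reduces [Infinite K] {τ κ : Type} [Finite τ]
    (htend : ∀ g : Matrix (Fin n) (Fin n) K, IsUni n K g →
      Tendsto (coadjPt n K g) (IrrSet.ofPrime S hI).gen (IrrSet.ofPrime S hI).gen)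
    (hpoly : ∀ (g : Matrix (Fin n) (Fin n) K) (f : MvPolynomial (PRoot n) K),
      ∃ f' : MvPolynomial (PRoot n) K, ∀ v, eval v f' = eval (coadjPt n K g v) f)
    {y₀ : τ → K} {e : κ → τ} (he : Function.Injective e)
    (hred : Reduces (IrrSet.ofPrime S hI)
      (fun v w => ∃ g, IsUni n K g ∧ coadjPt n K g v = w) (affineIrr (Set.range e) y₀) Eq) :
    ∃ F : κ → RatFld n K S,
      (∀ ξ, IsInvariantRat n K S (F ξ)) ∧ AlgebraicIndependent K F ∧
      (∀ G ∈ IntermediateField.adjoin K (Set.range F), IsInvariantRat n K S G) ∧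
      (∀ G, IsInvariantRat n K S G → G ∈ IntermediateField.adjoin K (Set.range F)) := by
  obtain ⟨ρ, hρ, ht, ⟨U, hU, hr⟩, hsec⟩ := hred
  choose F hF using fun k => Represents.of_ratOn (hρ (e k))
  have hinv : ∀ k, IsInvariantRat n K S (F k) := fun k =>
    (hF k).isInvariantRat htend hpoly fun g hg => by
      filter_upwards [hU, htend g hg hU] with v hv hgv
      exact congrFun ((hr v hv _ hgv).mp ⟨g, hg, rfl⟩).symm (e k)
  have hle : IntermediateField.adjoin K (Set.range F) ≤ invariantField n S :=
    IntermediateField.adjoin_le_iff.mpr (Set.range_subset_iff.mpr hinv)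
  refine ⟨F, hinv, Represents.algebraicIndependent (r := fun v => ρ v ∘ e) hF
    fun f hf => eventually_eval_ne_zero_of_tendsto he ht hf, fun G hG => hle hG, fun G hG => ?_⟩
  obtain ⟨g, hGg, hg, W, hW, hgW⟩ := hG.exists_represents
  obtain ⟨h, ⟨V, hV, A, B, hAB⟩, hgh⟩ :=
    hg.exists_eventually_eq_comp ht hU hr hsec hW hgW
  refine Represents.mem_adjoin (r := fun v => ρ v ∘ e) hF hGg (A := restrictPoly e y₀ A)
    (B := restrictPoly e y₀ B) ?_
  filter_upwards [hgh, ht hV, ht (affineIrr (Set.range e) y₀).carrier_mem_gen] with v hv hρV hρv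
  rw [eval_comp_restrictPoly hρv, eval_comp_restrictPoly hρv, hv]
  exact hAB _ hρV

end Invariants

section Bump

variable {n : ℕ} {c : Fin n → ℕ} {d i k e : Fin n}

/-- The place `(e, k)` carries a coordinate attached to the labelling `c`. -/
def Tri (c : Fin n → ℕ) (k e : Fin n) : Prop := k < e ∧ c k < c e ∧ c e ≤ k

/-- The place `(i, d)` can be bumped: `d` is the first column carrying coordinates and `i` is the
lowest row of that column. -/
structure IsBump (c : Fin n → ℕ) (d i : Fin n) : Prop where
  inj : Function.Injective c
  tri : Tri c d i
  min : ∀ k e, Tri c k e → d ≤ k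
  max : ∀ e, Tri c d e → e ≤ i

/-- The labelling after the bump at `(i, d)`. -/
def bumpLabel (c : Fin n → ℕ) (d i : Fin n) : Fin n → ℕ := c ∘ Equiv.swap d i

theorem bumpLabel_injective (hc : Function.Injective c) (d i : Fin n) :
    Function.Injective (bumpLabel c d i) :=
  hc.comp (Equiv.swap d i).injective

theorem bumpLabel_left (c : Fin n → ℕ) (d i : Fin n) : bumpLabel c d i d = c i := by
  simp [bumpLabel]

theorem bumpLabel_right (c : Fin n → ℕ) (d i : Fin n) : bumpLabel c d i i = c d := by
  simp [bumpLabel]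

theorem bumpLabel_of_ne (c : Fin n → ℕ) (hd : k ≠ d) (hi : k ≠ i) : bumpLabel c d i k = c k := by
  simp [bumpLabel, Equiv.swap_apply_of_ne_of_ne hd hi]

theorem IsBump.tri_iff (h : IsBump c d i) (k e : Fin n) :
    Tri (bumpLabel c d i) k e ↔ Tri c k e ∧ ¬(k = d ∧ c e ≤ c i) ∧ ¬(e = i ∧ Tri c d k) := by
  have hdi := h.tri
  have hmin := h.min k
  have hmax := h.max
  have hinj := h.inj
  simp only [Tri, bumpLabel, Function.comp_apply, Equiv.swap_apply_def] at *
  grind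

theorem IsBump.tri_of (h : IsBump c d i) (ht : Tri (bumpLabel c d i) k e) : Tri c k e :=
  ((h.tri_iff k e).mp ht).1

theorem IsBump.not_tri_bumpLabel (h : IsBump c d i) : ¬ Tri (bumpLabel c d i) d i := fun ht =>
  ((h.tri_iff d i).mp ht).2.1 ⟨rfl, le_rfl⟩

end Bump

section Shear

open Matrix

variable {K : Type} [Field K] {n : ℕ} {i : Fin n} {α β γ : Fin n → K}
  {A : Matrix (Fin n) (Fin n) K}

/-- The elementary matrix which, multiplied from the left, adds multiples of row `i` to the other
rows. -/
def colAdd (i : Fin n) (β : Fin n → K) : Matrix (Fin n) (Fin n) K :=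
  1 + Matrix.of fun a b => if b = i then β a else 0

theorem colAdd_mul (i : Fin n) (β : Fin n → K) (A : Matrix (Fin n) (Fin n) K) (e k : Fin n) :
    (colAdd i β * A) e k = A e k + β e * A i k := by
  rw [colAdd, add_mul, one_mul, Matrix.add_apply]
  simp [Matrix.mul_apply]

theorem mul_colAdd (i : Fin n) (β : Fin n → K) (A : Matrix (Fin n) (Fin n) K) (e k : Fin n) :
    (A * colAdd i β) e k = A e k + if k = i then ∑ b, A e b * β b else 0 := by
  rw [colAdd, mul_add, mul_one, Matrix.add_apply]
  by_cases h : k = i <;> simp [Matrix.mul_apply, h]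

theorem colAdd_mul_colAdd_neg (h : β i = 0) : colAdd i β * colAdd i (-β) = 1 := by
  ext e k
  rw [colAdd_mul]
  by_cases hk : k = i
  · simp [colAdd, hk, h, Matrix.one_apply]
  · simp [colAdd, hk, Ne.symm hk, Matrix.one_apply]

/-- The matrix `M` after subtracting from each row `e` the `γ e`-fold of row `i` and then adding to
column `i` the `β b`-fold of each column `b`. For `γ = β` this is a conjugate of `M`. -/
def shear (i : Fin n) (γ β : Fin n → K) (M : Matrix (Fin n) (Fin n) K) : Matrix (Fin n) (Fin n) K :=
  colAdd i (-γ) * M * colAdd i β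

theorem shear_apply (i : Fin n) (γ β : Fin n → K) (M : Matrix (Fin n) (Fin n) K) (e k : Fin n) :
    shear i γ β M e k = (M e k - γ e * M i k) +
      if k = i then ∑ b, (M e b - γ e * M i b) * β b else 0 := by
  simp only [shear, mul_colAdd, colAdd_mul, Pi.neg_apply, neg_mul, ← sub_eq_add_neg]

theorem shear_apply_of_ne (γ β : Fin n → K) (M : Matrix (Fin n) (Fin n) K) {e k : Fin n}
    (hk : k ≠ i) : shear i γ β M e k = M e k - γ e * M i k := by
  rw [shear_apply, if_neg hk, add_zero]

theorem shear_ne_zero {e k : Fin n} (h : shear i γ β A e k ≠ 0) :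
    A e k ≠ 0 ∨ (γ e ≠ 0 ∧ (A i k ≠ 0 ∨ k = i)) ∨ k = i ∧ ∃ b, A e b ≠ 0 ∧ β b ≠ 0 := by
  contrapose! h
  obtain ⟨h0, hγ, hβ⟩ := h
  by_cases he : γ e = 0
  · rw [shear_apply, h0, he, zero_mul, sub_zero, zero_add]
    refine ite_eq_right_iff.mpr fun hk => Finset.sum_eq_zero fun b _ => ?_
    by_cases hb : A e b = 0
    · rw [hb, zero_mul, sub_zero, zero_mul]
    · rw [hβ hk b hb, mul_zero]
  · rw [shear_apply_of_ne γ β A (hγ he).2, h0, (hγ he).1, mul_zero, sub_zero]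

theorem shear_mul_shear (h : β i = 0) (A B : Matrix (Fin n) (Fin n) K) :
    shear i α β A * shear i β γ B = shear i α γ (A * B) := by
  simp only [shear, Matrix.mul_assoc]
  rw [← Matrix.mul_assoc (colAdd i β), colAdd_mul_colAdd_neg h, Matrix.one_mul]

theorem shear_sub (γ β : Fin n → K) (A B : Matrix (Fin n) (Fin n) K) :
    shear i γ β (A - B) = shear i γ β A - shear i γ β B := by
  simp only [shear, Matrix.mul_sub, Matrix.sub_mul]

theorem shear_neg_shear (hγ : γ i = 0) (hβ : β i = 0) (M : Matrix (Fin n) (Fin n) K) :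
    shear i (-γ) (-β) (shear i γ β M) = M := by
  simp only [shear, Matrix.mul_assoc, colAdd_mul_colAdd_neg hβ, Matrix.mul_one]
  rw [← Matrix.mul_assoc, neg_neg, colAdd_mul_colAdd_neg hγ, Matrix.one_mul]

/-- The multiples of entry `i` of the vector `v` to be subtracted from its other entries to clear
them. -/
noncomputable def pivotRatio (i : Fin n) (v : Fin n → K) : Fin n → K :=
  fun e => if e = i then 0 else v e / v i

theorem pivotRatio_self (i : Fin n) (v : Fin n → K) : pivotRatio i v i = 0 := if_pos rfl

theorem pivotRatio_mul {v : Fin n → K} (hv : v i ≠ 0) {e : Fin n} (he : e ≠ i) :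
    pivotRatio i v e * v i = v e := by
  rw [pivotRatio, if_neg he, div_mul_cancel₀ _ hv]

theorem add_sum_mul_pivotRatio {v : Fin n → K} (hv : v i ≠ 0) (a : Fin n → K) :
    (a i + ∑ b, a b * pivotRatio i v b) * v i = ∑ b, a b * v b := by
  rw [add_mul, Finset.sum_mul, ← Finset.add_sum_erase _ _ (Finset.mem_univ i), pivotRatio_self,
    ← Finset.add_sum_erase Finset.univ (fun b => a b * v b) (Finset.mem_univ i), mul_zero, zero_mul,
    zero_add]
  congr 1
  refine Finset.sum_congr rfl fun b hb => ?_
  rw [mul_assoc, pivotRatio_mul hv (Finset.ne_of_mem_erase hb)]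

end Shear

section Pattern

open Matrix

variable {K : Type} [Field K] {n : ℕ} {c : Fin n → ℕ} {d i k e : Fin n}
  {g A B Y W : Matrix (Fin n) (Fin n) K}

/-- Row `k` of `g` is unipotent, with off-diagonal entries only to the right of the diagonal and in
columns with larger label. -/
def PatRow (c : Fin n → ℕ) (g : Matrix (Fin n) (Fin n) K) (k : Fin n) : Prop :=
  g k k = 1 ∧ ∀ l, g k l ≠ 0 → k = l ∨ (k < l ∧ c k < c l)

theorem PatRow.le (h : PatRow c g k) {l : Fin n} (hl : g k l ≠ 0) : k ≤ l ∧ c k ≤ c l := by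
  have := h.2 l hl
  grind

/-- The unipotent matrices of the pattern prescribed by `c`. -/
def IsPat (c : Fin n → ℕ) (g : Matrix (Fin n) (Fin n) K) : Prop := ∀ k, PatRow c g k

/-- The rows of `g` below row `d` have the pattern prescribed by `c`. -/
def IsPatBelow (c : Fin n → ℕ) (d : Fin n) (g : Matrix (Fin n) (Fin n) K) : Prop :=
  ∀ k, d < k → PatRow c g k

/-- The matrix `Y` is supported on the places of `Tri c`. -/
def SuppTri (c : Fin n → ℕ) (Y : Matrix (Fin n) (Fin n) K) : Prop := ∀ e k, Y e k ≠ 0 → Tri c k e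

/-- The matrix `g` intertwines `Y` and `W` on the places of `Tri c`. -/
def Intertwines (c : Fin n → ℕ) (Y W g : Matrix (Fin n) (Fin n) K) : Prop :=
  ∀ k e, Tri c k e → (W * g) e k = (g * Y) e k

/-- The matrix `Y` with column `d` replaced by zero. -/
def cutCol (d : Fin n) (Y : Matrix (Fin n) (Fin n) K) : Matrix (Fin n) (Fin n) K :=
  fun e k => if k = d then 0 else Y e k

/-- The support condition enjoyed by `cutCol d Y` for `Y` supported on `Tri c` and by its
conjugates. -/
def SuppBeyond (c : Fin n → ℕ) (d : Fin n) (A : Matrix (Fin n) (Fin n) K) : Prop :=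
  ∀ e k, A e k ≠ 0 → c e ≤ k ∧ d < k

theorem cutCol_ne_zero (hmin : ∀ k e, Tri c k e → d ≤ k) (hY : SuppTri c Y)
    (h : cutCol d Y e k ≠ 0) : Tri c k e ∧ d < k := by
  obtain ⟨hk, h⟩ := ite_ne_left_iff.mp h
  have ht := hY e k h.symm
  exact ⟨ht, lt_of_le_of_ne (hmin k e ht) (Ne.symm hk)⟩

theorem suppBeyond_cutCol (hmin : ∀ k e, Tri c k e → d ≤ k) (hY : SuppTri c Y) :
    SuppBeyond c d (cutCol d Y) := fun _ _ h =>
  have ⟨ht, hk⟩ := cutCol_ne_zero hmin hY h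
  ⟨ht.2.2, hk⟩

theorem commutator_eq_zero_of_lt_or_le (hA : SuppBeyond c d A) (hB : SuppBeyond c d B)
    (hg : IsPatBelow c d g) (he : d < e) (hk : k < c e ∨ k ≤ d) :
    (g * A - B * g) e k = 0 := by
  rw [Matrix.sub_apply, Matrix.mul_apply, Matrix.mul_apply, sub_eq_zero]
  refine (Finset.sum_eq_zero fun l _ => ?_).trans (Finset.sum_eq_zero fun l _ => ?_).symm
  · by_contra hne
    have hgl := (hg e he).le (left_ne_zero_of_mul hne)
    have hAl := hA _ _ (right_ne_zero_of_mul hne)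
    omega
  · by_contra hne
    have hBl := hB _ _ (left_ne_zero_of_mul hne)
    have hgl := (hg l hBl.2).le (right_ne_zero_of_mul hne)
    omega

/-- The matrix `A` restricted to the places of `Tri c` beyond column `d`. -/
noncomputable def maskBeyond (c : Fin n → ℕ) (d : Fin n) (A : Matrix (Fin n) (Fin n) K) :
    Matrix (Fin n) (Fin n) K := fun e k => if Tri c k e ∧ k ≠ d then A e k else 0

theorem mul_maskBeyond (hA : SuppBeyond c d A) (hg : IsPatBelow c d g) (he : d < e)
    (ht : Tri c k e) : (g * maskBeyond c d A) e k = (g * A) e k := by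
  simp only [Matrix.mul_apply]
  refine Finset.sum_congr rfl fun l _ => ?_
  by_cases hne : g e l * A l k = 0
  · rw [hne, maskBeyond]
    split_ifs <;> simp [hne]
  have hgl := (hg e he).le (left_ne_zero_of_mul hne)
  have hAl := hA _ _ (right_ne_zero_of_mul hne)
  rw [maskBeyond, if_pos ⟨by unfold Tri at *; omega, hAl.2.ne'⟩]

theorem maskBeyond_mul (hA : SuppBeyond c d A) (hg : IsPatBelow c d g) (ht : Tri c k e) :
    (maskBeyond c d A * g) e k = (A * g) e k := by
  simp only [Matrix.mul_apply]
  refine Finset.sum_congr rfl fun l _ => ?_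
  by_cases hne : A e l * g l k = 0
  · rw [hne, maskBeyond]
    split_ifs <;> simp [hne]
  have hAl := hA _ _ (left_ne_zero_of_mul hne)
  have hgl := (hg l hAl.2).le (right_ne_zero_of_mul hne)
  rw [maskBeyond, if_pos ⟨by unfold Tri at *; omega, hAl.2.ne'⟩]

end Pattern

section IntertwinesBelow

open Matrix

variable {K : Type} [Field K] {n : ℕ} {c : Fin n → ℕ} {d i k e : Fin n} {r : Fin n → K}
  {g Y W : Matrix (Fin n) (Fin n) K}

/-- The part of the intertwining condition for `Y` and `W` seen by the rows below row `d` of an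
intertwining matrix: these rows are those of `g`, and row `d` is `r` off the diagonal. -/
structure IntertwinesBelow (c : Fin n → ℕ) (d : Fin n) (Y W g : Matrix (Fin n) (Fin n) K)
    (r : Fin n → K) : Prop where
  pat : IsPatBelow c d g
  supp : ∀ k, r k ≠ 0 → d < k ∧ c d < c k
  col : ∀ e, Tri c d e → W e d = ∑ l, g e l * Y l d
  comm : ∀ k e, Tri c k e → k ≠ d → (g * cutCol d Y - cutCol d W * g) e k = W e d * r k

theorem mul_apply_eq_add_cutCol_mul (d : Fin n) (W g : Matrix (Fin n) (Fin n) K) (e k : Fin n) :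
    (W * g) e k = W e d * g d k + (cutCol d W * g) e k := by
  simp only [Matrix.mul_apply, cutCol]
  rw [← Finset.add_sum_erase _ _ (Finset.mem_univ d),
    ← Finset.add_sum_erase _ (fun l => (if l = d then 0 else W e l) * g l k) (Finset.mem_univ d),
    if_pos rfl, zero_mul, zero_add]
  congr 1
  exact Finset.sum_congr rfl fun l hl => by rw [if_neg (Finset.ne_of_mem_erase hl)]

theorem mul_cutCol_apply (Y g : Matrix (Fin n) (Fin n) K) (e : Fin n) (hk : k ≠ d) :
    (g * cutCol d Y) e k = (g * Y) e k := by
  simp [Matrix.mul_apply, cutCol, hk]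

theorem cutCol_mul_apply_self (hmin : ∀ k e, Tri c k e → d ≤ k) (hW : SuppTri c W)
    (hg : IsPatBelow c d g) (e : Fin n) : (cutCol d W * g) e d = 0 := by
  rw [Matrix.mul_apply]
  refine Finset.sum_eq_zero fun l _ => ?_
  by_contra hne
  have hWl := (cutCol_ne_zero hmin hW (left_ne_zero_of_mul hne)).2
  have hgl := (hg l hWl).le (right_ne_zero_of_mul hne)
  omega

theorem Intertwines.intertwinesBelow (hmin : ∀ k e, Tri c k e → d ≤ k) (hW : SuppTri c W)
    (hg : IsPat c g) (h : Intertwines c Y W g) :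
    IntertwinesBelow c d Y W g fun k => if k = d then 0 else g d k where
  pat k _ := hg k
  supp k hk := by
    obtain ⟨hkd, hk⟩ := ite_ne_left_iff.mp hk
    exact ((hg d).2 k hk.symm).resolve_left (Ne.symm hkd)
  col e he := by
    have := h d e he
    rwa [mul_apply_eq_add_cutCol_mul d, cutCol_mul_apply_self hmin hW fun k _ => hg k, (hg d).1,
      mul_one, add_zero] at this
  comm k e hke hk := by
    have := h k e hke
    rw [mul_apply_eq_add_cutCol_mul d] at this
    rw [Matrix.sub_apply, mul_cutCol_apply _ _ _ hk, if_neg hk, ← this, add_sub_cancel_right]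

/-- The matrix with row `d` given by `r` off the diagonal, the rows of `g` below it, and the rows of
the identity matrix above it. -/
noncomputable def withRow (d : Fin n) (r : Fin n → K) (g : Matrix (Fin n) (Fin n) K) :
    Matrix (Fin n) (Fin n) K :=
  fun k l => if d < k then g k l else (1 : Matrix (Fin n) (Fin n) K) k l + if k = d then r l else 0

theorem withRow_apply_of_ne (r : Fin n → K) (g : Matrix (Fin n) (Fin n) K) (hk : k ≠ d) :
    withRow d r g d k = r k := by
  simp [withRow, Matrix.one_apply_ne hk.symm]

theorem IntertwinesBelow.isPat_withRow (h : IntertwinesBelow c d Y W g r) :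
    IsPat c (withRow d r g) := by
  intro k
  by_cases hk : d < k
  · simpa only [PatRow, withRow, if_pos hk] using h.pat k hk
  · simp only [PatRow, withRow, if_neg hk, Matrix.one_apply]
    grind [h.supp]

theorem IntertwinesBelow.intertwines (hmin : ∀ k e, Tri c k e → d ≤ k) (hW : SuppTri c W)
    (h : IntertwinesBelow c d Y W g r) : Intertwines c Y W (withRow d r g) := by
  have hrd : r d = 0 := by_contra fun hr => lt_irrefl d (h.supp d hr).1
  have hrow : ∀ k, d < k → withRow d r g k = g k := fun k hk => by
    funext l
    simp [withRow, hk]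
  intro k e hke
  have hde := (hmin k e hke).trans_lt hke.1
  have hleft : (withRow d r g * Y) e k = (g * Y) e k := by rw [Matrix.mul_apply, hrow e hde]; rfl
  have hright : (cutCol d W * withRow d r g) e k = (cutCol d W * g) e k := by
    simp only [Matrix.mul_apply]
    refine Finset.sum_congr rfl fun l _ => ?_
    by_cases hl : cutCol d W e l = 0
    · rw [hl, zero_mul, zero_mul]
    · rw [hrow l (cutCol_ne_zero hmin hW hl).2]
  rw [mul_apply_eq_add_cutCol_mul d, hleft, hright]
  by_cases hk : k = d
  · subst hk
    rw [cutCol_mul_apply_self hmin hW h.pat, h.col e hke]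
    simp [withRow, hrd, Matrix.mul_apply]
  · have := h.comm k e hke hk
    rw [Matrix.sub_apply, mul_cutCol_apply _ _ _ hk] at this
    rw [withRow_apply_of_ne r g hk, ← this, sub_add_cancel]

theorem exists_intertwines_iff (hmin : ∀ k e, Tri c k e → d ≤ k) (hW : SuppTri c W) :
    (∃ g, IsPat c g ∧ Intertwines c Y W g) ↔ ∃ g r, IntertwinesBelow c d Y W g r :=
  ⟨fun ⟨_, hg, h⟩ => ⟨_, _, h.intertwinesBelow hmin hW hg⟩,
    fun ⟨_, _, h⟩ => ⟨_, h.isPat_withRow, h.intertwines hmin hW⟩⟩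

end IntertwinesBelow

section BumpIntertwiner

open Matrix

variable {K : Type} [Field K] {n : ℕ} {c : Fin n → ℕ} {d i k e : Fin n} {y w r β : Fin n → K}
  {g E Y W : Matrix (Fin n) (Fin n) K}

theorem pivotRatio_ne_zero (hy : ∀ e, y e ≠ 0 → Tri c d e) (he : pivotRatio i y e ≠ 0) :
    Tri c d e ∧ e ≠ i := by
  obtain ⟨hei, he⟩ := ite_ne_left_iff.mp he
  exact ⟨hy e fun h0 => he (by rw [h0, zero_div]), hei⟩

/-- The column `y` restricted to the places of `Tri c` in column `d`. -/
noncomputable def maskCol (c : Fin n → ℕ) (d : Fin n) (y : Fin n → K) : Fin n → K :=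
  fun e => if Tri c d e then y e else 0

theorem IsBump.eq_zero_of_tri (h : IsBump c d i) (hg : ∀ l, g i l ≠ 0 → i ≤ l) {b : Fin n}
    (hb : Tri c d b) (hbi : b ≠ i) : g i b = 0 := by
  by_contra hne
  exact hbi (le_antisymm (h.max b hb) (hg b hne))

theorem shear_pivotRatio_apply_self (hyi : y i ≠ 0) (γ : Fin n → K) (g : Matrix (Fin n) (Fin n) K)
    (e : Fin n) :
    shear i γ (pivotRatio i y) g e i * y i = ∑ l, g e l * y l - γ e * ∑ l, g i l * y l := by
  rw [shear_apply, if_pos rfl, add_sum_mul_pivotRatio hyi fun l => g e l - γ e * g i l,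
    Finset.mul_sum, ← Finset.sum_sub_distrib]
  exact Finset.sum_congr rfl fun l _ => by ring

theorem IsBump.shear_apply_self (h : IsBump c d i) (hyi : y i ≠ 0) (hyw : y i = w i)
    (hcol : ∀ e, Tri c d e → w e = ∑ l, g e l * y l) :
    shear i (pivotRatio i w) (pivotRatio i y) g i i = 1 ∧
      ∀ e, Tri c d e → e ≠ i → shear i (pivotRatio i w) (pivotRatio i y) g e i = 0 := by
  have key := shear_pivotRatio_apply_self hyi (pivotRatio i w) g
  rw [← hcol i h.tri] at key
  refine ⟨mul_right_cancel₀ hyi ?_, fun e he hei => mul_right_cancel₀ hyi ?_⟩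
  · rw [key, ← hcol i h.tri, pivotRatio_self, zero_mul, sub_zero, one_mul, hyw]
  · rw [key, ← hcol e he, pivotRatio_mul (hyw ▸ hyi) hei, sub_self, zero_mul]

theorem IsBump.lt_of_sum_ne_zero (h : IsBump c d i) (hy : ∀ e, y e ≠ 0 → Tri c d e) (hde : d < e)
    (he : ¬ Tri c d e) (hg : PatRow c g e) (hsum : ∑ l, g e l * y l ≠ 0) :
    e < i ∧ c e < c d := by
  obtain ⟨b, -, hb⟩ := Finset.exists_ne_zero_of_sum_ne_zero hsum
  have hgb := hg.2 b (left_ne_zero_of_mul hb)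
  have hyb := hy b (right_ne_zero_of_mul hb)
  have hbi := h.max b hyb
  have hinj := @h.inj e d
  unfold Tri at *
  grind

theorem IsBump.isPatBelow_shear (h : IsBump c d i) (hy : ∀ e, y e ≠ 0 → Tri c d e)
    (hw : ∀ e, w e ≠ 0 → Tri c d e) (hyi : y i ≠ 0) (hyw : y i = w i) (hg : IsPatBelow c d g)
    (hcol : ∀ e, Tri c d e → w e = ∑ l, g e l * y l) :
    IsPatBelow (bumpLabel c d i) d (shear i (pivotRatio i w) (pivotRatio i y) g) := by
  intro e hde
  have hdi := h.tri.1
  have hself := h.shear_apply_self hyi hyw hcol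
  have hle : ∀ l, g i l ≠ 0 → i ≤ l := fun l hl => ((hg i hdi).le hl).1
  have hγ := pivotRatio_ne_zero (i := i) (e := e) hw
  constructor
  · by_cases hei : e = i
    · rw [hei, hself.1]
    · rw [shear_apply_of_ne _ _ _ hei, (hg e hde).1, sub_eq_self, mul_eq_zero]
      refine or_iff_not_imp_left.mpr fun h0 => h.eq_zero_of_tri hle (hγ h0).1 hei
  · intro l hl
    refine or_iff_not_imp_left.mpr fun hel => ?_
    by_cases hli : l = i
    · subst hli
      have heU : ¬ Tri c d e := fun he => hl (hself.2 e he hel)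
      have h0 : pivotRatio l w e = 0 := by_contra fun h0 => heU (hγ h0).1
      have hsum := shear_pivotRatio_apply_self hyi (pivotRatio l w) g e
      rw [h0, zero_mul, sub_zero] at hsum
      have := h.lt_of_sum_ne_zero hy hde heU (hg e hde) (hsum ▸ mul_ne_zero hl hyi)
      rwa [bumpLabel_right, bumpLabel_of_ne c hde.ne' hel]
    · rw [shear_apply_of_ne _ _ _ hli] at hl
      have hgel := (hg e hde).2 l
      have hgil := (hg i hdi).2 l
      have hne : g e l ≠ 0 ∨ pivotRatio i w e ≠ 0 ∧ g i l ≠ 0 := by grind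
      have hdi := h.tri
      have hlmax := h.max l
      have hemax := h.max e
      clear hcol hself hy hw hg
      simp only [bumpLabel, Function.comp_apply, Equiv.swap_apply_def]
      unfold Tri at *
      grind

theorem IsBump.sum_shear_mul_maskCol (h : IsBump c d i) (hg : IsPatBelow c d g) (γ β : Fin n → K)
    (hcol : w e = ∑ l, g e l * y l) (he : Tri (bumpLabel c d i) d e)
    (hy : ∀ e, y e ≠ 0 → Tri c d e) :
    w e = ∑ l, shear i γ β g e l * maskCol (bumpLabel c d i) d y l := by
  rw [hcol]
  refine Finset.sum_congr rfl fun l _ => ?_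
  have hl := h.tri_iff d l
  rw [maskCol]
  split_ifs with hlt
  · have hli : l ≠ i := fun hli => h.not_tri_bumpLabel (hli ▸ hlt)
    rw [shear_apply_of_ne _ _ _ hli, h.eq_zero_of_tri (fun l hl => ((hg i h.tri.1).le hl).1)
      (h.tri_of hlt) hli, mul_zero, sub_zero]
  · rw [mul_zero, mul_eq_zero]
    by_contra! hne
    have hgl := (hg e he.1).le hne.1
    have hyl := hy l hne.2
    have hde := (h.tri_iff d e).mp he
    unfold Tri at *
    grind

theorem pivotRatio_mul_eq (he : e ≠ i) (a : K) :
    pivotRatio i w e * a = w e * (a / w i) := by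
  rw [pivotRatio, if_neg he]
  ring

theorem IsBump.sum_mul_eq_zero (h : IsBump c d i) (hw : ∀ e, w e ≠ 0 → Tri c d e)
    (hβ : ∀ b, β b ≠ 0 → Tri c d b) {s : Fin n → K} (hs₀ : ∀ k : Fin n, k < c e → s k = 0)
    (hs : ∀ k, Tri c k e → k ≠ d → s k = w e * r k) (hie : Tri c i e) : ∑ b, s b * β b = 0 := by
  refine Finset.sum_eq_zero fun b _ => ?_
  by_cases hb : β b = 0
  · rw [hb, mul_zero]
  have hdb := hβ b hb
  have hbi := h.max b hdb
  have hemax := h.max e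
  have hwe : w e = 0 := by_contra fun h0 => absurd (hemax (hw e h0)) (not_le.mpr hie.1)
  rw [mul_eq_zero]
  by_cases hbe : b < c e
  · exact Or.inl (hs₀ b hbe)
  · have hi := h.tri
    have hbt : Tri c b e := by
      clear hs hs₀ hw hβ
      unfold Tri at *
      omega
    exact Or.inl (by rw [hs b hbt hdb.1.ne', hwe, zero_mul])

theorem IsBump.shear_commutator_of_not_tri (h : IsBump c d i) (hw : ∀ e, w e ≠ 0 → Tri c d e)
    (hβ : ∀ b, β b ≠ 0 → Tri c d b) (hE₀ : ∀ e k : Fin n, d < e → k < c e → E e k = 0)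
    (hE : ∀ k e, Tri c k e → k ≠ d → E e k = w e * r k) (hke : Tri c k e) (hk : k ≠ d)
    (he : ¬ Tri c d e) : shear i (pivotRatio i w) β E e k = 0 := by
  have hdk := lt_of_le_of_ne (h.min k e hke) hk.symm
  have hwe : w e = 0 := by_contra fun h0 => he (hw e h0)
  have hγ : pivotRatio i w e = 0 := by rw [pivotRatio, hwe, zero_div, ite_self]
  rw [shear_apply, hγ, hE k e hke hk, hwe]
  simp only [zero_mul, sub_zero, zero_add]
  refine ite_eq_right_iff.mpr fun hki => ?_
  exact h.sum_mul_eq_zero hw hβ (hE₀ e · (hdk.trans hke.1)) (fun k => hE k e) (hki ▸ hke)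

theorem IsBump.shear_commutator (h : IsBump c d i) (hw : ∀ e, w e ≠ 0 → Tri c d e) (hwi : w i ≠ 0)
    (hβ : ∀ b, β b ≠ 0 → Tri c d b) (hr : ∀ k, r k ≠ 0 → d < k ∧ c d < c k)
    (hE₀ : ∀ e k : Fin n, d < e → k < c e → E e k = 0)
    (hE : ∀ k e, Tri c k e → k ≠ d → E e k = w e * r k)
    (hke : Tri (bumpLabel c d i) k e) (hk : k ≠ d) :
    shear i (pivotRatio i w) β E e k = maskCol (bumpLabel c d i) d w e *
      if d < k ∧ c i < c k then r k - E i k / w i else 0 := by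
  have hke' := (h.tri_iff k e).mp hke
  have hdk := lt_of_le_of_ne (h.min k e hke'.1) hk.symm
  have hi := h.tri
  have hmask := h.tri_iff d e
  have hmax := h.max e
  rw [maskCol]
  by_cases heU : Tri c d e
  swap
  · rw [h.shear_commutator_of_not_tri hw hβ hE₀ hE hke'.1 hk heU,
      if_neg fun he => heU (h.tri_of he), zero_mul]
  have hki : k ≠ i := fun hki => absurd (hmax heU) (not_le.mpr (hki ▸ hke.1))
  rw [shear_apply_of_ne _ _ _ hki, hE k e hke'.1 hk]
  by_cases hei : e = i
  · subst hei
    have hrk : r k = 0 := by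
      by_contra h0
      have := hr k h0
      unfold Tri at *
      grind
    rw [if_neg h.not_tri_bumpLabel, pivotRatio_self, hrk]
    ring
  rw [pivotRatio_mul_eq hei]
  by_cases hik : c i < c k
  · rw [if_pos (hmask.mpr ⟨heU, by unfold Tri at *; grind, by tauto⟩), if_pos ⟨hdk, hik⟩]
    ring
  · have hck := @h.inj k i
    have hki' : Tri c k i := by unfold Tri at *; grind
    have hnot : ¬(d < k ∧ c i < c k) := fun hh => hik hh.2
    rw [if_neg hnot, hE k i hki' hk, mul_div_cancel_left₀ _ hwi, sub_self, mul_zero]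

end BumpIntertwiner

section BumpIntertwinerBack

open Matrix

variable {K : Type} [Field K] {n : ℕ} {c : Fin n → ℕ} {d i k e : Fin n} {y w r β : Fin n → K}
  {g E Y W : Matrix (Fin n) (Fin n) K}

theorem IsBump.mul_pivotRatio_eq_zero (h : IsBump c d i) (hy : ∀ e, y e ≠ 0 → Tri c d e)
    (hg : ∀ l, g i l ≠ 0 → i ≤ l) (b : Fin n) : g i b * pivotRatio i y b = 0 := by
  by_contra hne
  have hb := pivotRatio_ne_zero hy (right_ne_zero_of_mul hne)
  exact left_ne_zero_of_mul hne (h.eq_zero_of_tri hg hb.1 hb.2)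

theorem sum_unshear_mul (hyi : y i ≠ 0) (hgi : g i i = 1) (γ : Fin n → K) (e : Fin n) :
    ∑ b, shear i (-γ) (-pivotRatio i y) g e b * y b = (g e i + γ e) * y i := by
  rw [← add_sum_mul_pivotRatio hyi fun b => shear i (-γ) (-pivotRatio i y) g e b]
  have hmul : shear i (-γ) (-pivotRatio i y) g * colAdd i (pivotRatio i y) = colAdd i γ * g := by
    have := colAdd_mul_colAdd_neg (i := i) (β := -pivotRatio i y) (by simp [pivotRatio_self])
    rw [neg_neg] at this
    rw [shear, Matrix.mul_assoc, this, Matrix.mul_one, neg_neg]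
  have := congrFun (congrFun hmul e) i
  rw [mul_colAdd, if_pos rfl, colAdd_mul, hgi, mul_one] at this
  rw [this]

theorem IsBump.unshear_apply_self_mul (h : IsBump c d i) (hy : ∀ e, y e ≠ 0 → Tri c d e)
    (hyi : y i ≠ 0) (hgi : PatRow (bumpLabel c d i) g i) (γ : Fin n → K) (e : Fin n) :
    shear i (-γ) (-pivotRatio i y) g e i * y i =
      (g e i + γ e) * y i - ∑ b, g e b * Function.update y i 0 b := by
  have hterm : ∀ b, (g e b + γ e * g i b) * -pivotRatio i y b * y i =
      -(g e b * Function.update y i 0 b) := fun b => by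
    have h0 := h.mul_pivotRatio_eq_zero hy (fun l hl => (hgi.le hl).1) b
    have hratio : pivotRatio i y b * y i = Function.update y i 0 b := by
      by_cases hb : b = i
      · rw [hb, pivotRatio_self, zero_mul, Function.update_self]
      · rw [pivotRatio_mul hyi hb, Function.update_of_ne hb]
    linear_combination (-γ e * y i) * h0 - g e b * hratio
  rw [shear_apply, if_pos rfl, hgi.1, add_mul, Finset.sum_mul, sub_eq_add_neg, sub_eq_add_neg,
    ← Finset.sum_neg_distrib]
  simp only [Pi.neg_apply, neg_mul, neg_neg, sub_neg_eq_add, mul_one] at hterm ⊢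
  exact congrArg _ (Finset.sum_congr rfl fun b _ => by rw [← hterm])

theorem IsPatBelow.apply_bump_eq_zero (hg : IsPatBelow (bumpLabel c d i) d g)
    (he : Tri c d e) (hei : e ≠ i) : g e i = 0 := by
  by_contra hne
  have hrow := (hg e he.1).2 i hne
  rw [bumpLabel_right, bumpLabel_of_ne c he.1.ne' hei] at hrow
  unfold Tri at he
  grind

theorem IsBump.sum_unshear_eq (h : IsBump c d i) (hyi : y i ≠ 0) (hyw : y i = w i)
    (hg : IsPatBelow (bumpLabel c d i) d g) (he : Tri c d e) :
    w e = ∑ b, shear i (-pivotRatio i w) (-pivotRatio i y) g e b * y b := by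
  have hgi := (hg i h.tri.1).1
  rw [sum_unshear_mul hyi hgi]
  by_cases hei : e = i
  · rw [hei, pivotRatio_self, hgi, add_zero, one_mul, hyw]
  · rw [hg.apply_bump_eq_zero he hei, zero_add, hyw, pivotRatio_mul (hyw ▸ hyi) hei]

theorem IsBump.sum_mul_maskCol (h : IsBump c d i) (hy : ∀ e, y e ≠ 0 → Tri c d e)
    (hg : IsPatBelow (bumpLabel c d i) d g) (he : Tri c d e) (hie : c i < c e) :
    ∑ b, g e b * maskCol (bumpLabel c d i) d y b = ∑ b, g e b * Function.update y i 0 b := by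
  have hei : e ≠ i := by
    rintro rfl
    exact lt_irrefl _ hie
  refine Finset.sum_congr rfl fun b _ => ?_
  by_cases hb : g e b = 0
  · rw [hb, zero_mul, zero_mul]
  have hbi : b ≠ i := by
    rintro rfl
    exact hb (hg.apply_bump_eq_zero he hei)
  rw [Function.update_of_ne hbi, maskCol]
  split_ifs with hb'
  · rfl
  · congr 1
    by_contra! h0
    refine hb' ((h.tri_iff d b).mpr ⟨hy b h0.symm, ?_, fun hb => hbi hb.1⟩)
    have hle := ((hg e he.1).le hb).2
    rw [bumpLabel_of_ne c he.1.ne' hei, bumpLabel_of_ne c (hy b h0.symm).1.ne' hbi] at hle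
    omega

theorem IsBump.unshear_apply_self_eq_zero (h : IsBump c d i) (hy : ∀ e, y e ≠ 0 → Tri c d e)
    (hyi : y i ≠ 0) (hyw : y i = w i) (hg : IsPatBelow (bumpLabel c d i) d g)
    (hcol : ∀ e, Tri (bumpLabel c d i) d e → w e = ∑ l, g e l * maskCol (bumpLabel c d i) d y l)
    (he : Tri c d e) (hie : c i < c e) :
    shear i (-pivotRatio i w) (-pivotRatio i y) g e i = 0 := by
  have hei : e ≠ i := by
    rintro rfl
    exact lt_irrefl _ hie
  have he' : Tri (bumpLabel c d i) d e := (h.tri_iff d e).mpr ⟨he, by omega, fun hh => hei hh.1⟩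
  refine mul_right_cancel₀ hyi ?_
  rw [h.unshear_apply_self_mul hy hyi (hg i h.tri.1), ← h.sum_mul_maskCol hy hg he hie,
    ← hcol e he', hg.apply_bump_eq_zero he hei, zero_add, hyw, pivotRatio_mul (hyw ▸ hyi) hei,
    sub_self, zero_mul]

theorem IsBump.lt_of_unshear_ne_zero_of_not_tri (h : IsBump c d i) (hy : ∀ e, y e ≠ 0 → Tri c d e)
    (hyi : y i ≠ 0) (hg : IsPatBelow (bumpLabel c d i) d g) {γ : Fin n → K} (hγ : γ e = 0)
    (hde : d < e) (he : ¬ Tri c d e) (hne : shear i (-γ) (-pivotRatio i y) g e i ≠ 0) :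
    e < i ∧ c e < c d := by
  have hdi := h.tri
  have hei : e ≠ i := fun hei => he (hei ▸ hdi)
  have key := h.unshear_apply_self_mul hy hyi (hg i hdi.1) γ e
  rw [hγ, add_zero] at key
  have hrow := (hg e hde).2
  rw [bumpLabel_of_ne c hde.ne' hei] at hrow
  by_cases hgi : g e i = 0
  · have hsum : ∑ b, g e b * Function.update y i 0 b ≠ 0 := by
      intro h0
      rw [hgi, h0, zero_mul, sub_zero] at key
      exact mul_ne_zero hne hyi key
    obtain ⟨b, -, hb⟩ := Finset.exists_ne_zero_of_sum_ne_zero hsum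
    have hbi : b ≠ i := by
      rintro rfl
      exact hb (by rw [hgi, zero_mul])
    rw [Function.update_of_ne hbi] at hb
    have hgb := hrow b (left_ne_zero_of_mul hb)
    have hyb := hy b (right_ne_zero_of_mul hb)
    have hbi' := h.max b hyb
    have hinj := @h.inj e d
    rw [bumpLabel_of_ne c hyb.1.ne' hbi] at hgb
    unfold Tri at *
    grind
  · have := (hrow i hgi).resolve_left hei
    rwa [bumpLabel_right] at this

theorem IsBump.lt_of_unshear_ne_zero (h : IsBump c d i) (hy : ∀ e, y e ≠ 0 → Tri c d e)
    (hw : ∀ e, w e ≠ 0 → Tri c d e) (hyi : y i ≠ 0) (hyw : y i = w i)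
    (hg : IsPatBelow (bumpLabel c d i) d g)
    (hcol : ∀ e, Tri (bumpLabel c d i) d e → w e = ∑ l, g e l * maskCol (bumpLabel c d i) d y l)
    (hde : d < e) (hei : e ≠ i)
    (hne : shear i (-pivotRatio i w) (-pivotRatio i y) g e i ≠ 0) : e < i ∧ c e < c i := by
  by_cases he : Tri c d e
  · have h0 : ¬ c i < c e := fun hlt =>
      hne (h.unshear_apply_self_eq_zero hy hyi hyw hg hcol he hlt)
    have := @h.inj e i
    have := h.max e he
    grind
  · have h0 : pivotRatio i w e = 0 := by_contra fun h0 => he (pivotRatio_ne_zero hw h0).1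
    have := h.lt_of_unshear_ne_zero_of_not_tri hy hyi hg h0 hde he hne
    exact ⟨this.1, this.2.trans h.tri.2.1⟩

theorem IsBump.unshear_apply_pivot (h : IsBump c d i) (hy : ∀ e, y e ≠ 0 → Tri c d e)
    (hyi : y i ≠ 0) (hgi : PatRow (bumpLabel c d i) g i) {γ : Fin n → K} (hγ : γ i = 0) :
    shear i (-γ) (-pivotRatio i y) g i i = 1 := by
  refine mul_right_cancel₀ hyi ?_
  have hzero : ∑ b, g i b * Function.update y i 0 b = 0 := by
    refine Finset.sum_eq_zero fun b _ => ?_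
    by_cases hb : b = i
    · rw [hb, Function.update_self, mul_zero]
    · have := h.mul_pivotRatio_eq_zero hy (fun l hl => (hgi.le hl).1) b
      rw [Function.update_of_ne hb, ← pivotRatio_mul hyi hb, ← mul_assoc, this, zero_mul]
  rw [h.unshear_apply_self_mul hy hyi hgi, hzero, hγ, hgi.1, add_zero, sub_zero]

theorem IsBump.isPatBelow_unshear (h : IsBump c d i) (hy : ∀ e, y e ≠ 0 → Tri c d e)
    (hw : ∀ e, w e ≠ 0 → Tri c d e) (hyi : y i ≠ 0) (hyw : y i = w i)
    (hg : IsPatBelow (bumpLabel c d i) d g)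
    (hcol : ∀ e, Tri (bumpLabel c d i) d e → w e = ∑ l, g e l * maskCol (bumpLabel c d i) d y l) :
    IsPatBelow c d (shear i (-pivotRatio i w) (-pivotRatio i y) g) := by
  intro e hde
  have hdi := h.tri
  have hgi := hg i hdi.1
  have hle : ∀ l, g i l ≠ 0 → i ≤ l := fun l hl => (hgi.le hl).1
  have hγ := pivotRatio_ne_zero (i := i) (e := e) hw
  constructor
  · by_cases hei : e = i
    · rw [hei, h.unshear_apply_pivot hy hyi hgi (pivotRatio_self i w)]
    · rw [shear_apply_of_ne _ _ _ hei, (hg e hde).1, sub_eq_self, Pi.neg_apply, neg_mul,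
        neg_eq_zero, mul_eq_zero]
      refine or_iff_not_imp_left.mpr fun h0 => h.eq_zero_of_tri hle (hγ h0).1 hei
  · intro l hl
    refine or_iff_not_imp_left.mpr fun hel => ?_
    by_cases hli : l = i
    · subst hli
      exact h.lt_of_unshear_ne_zero hy hw hyi hyw hg hcol hde hel hl
    · rw [shear_apply_of_ne _ _ _ hli] at hl
      have hgel := (hg e hde).2 l
      have hgil := hgi.2 l
      have hne : g e l ≠ 0 ∨ pivotRatio i w e ≠ 0 ∧ g i l ≠ 0 := by
        by_contra! h0
        by_cases hratio : pivotRatio i w e = 0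
        · simp [h0.1, hratio] at hl
        · simp [h0.1, h0.2 hratio] at hl
      have hemax := h.max e
      have hlmax := h.max l
      clear hcol hy hw hg hl hle hgi hyi hyw
      simp only [bumpLabel, Function.comp_apply, Equiv.swap_apply_def] at hgel hgil
      unfold Tri at *
      rcases hne with hne | hne <;> grind

theorem IsBump.commutator_pivotCol_eq_zero (h : IsBump c d i)
    (hβ : ∀ b, β b ≠ 0 → Tri c d b ∧ b ≠ i) (hE₀ : ∀ e k : Fin n, d < e → k < c e → E e k = 0)
    (hE : ∀ k e, Tri (bumpLabel c d i) k e → k ≠ d →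
      E e k = maskCol (bumpLabel c d i) d w e * r k)
    (hie : Tri c i e) : E e i = 0 ∧ ∑ b, E e b * β b = 0 := by
  have hdi := h.tri
  have heU := h.max e
  have hmask : maskCol (bumpLabel c d i) d w e = 0 :=
    if_neg fun he => absurd (heU (h.tri_of he)) (not_le.mpr hie.1)
  have hzero : ∀ b, Tri (bumpLabel c d i) b e → b ≠ d → E e b = 0 := fun b hb hbd => by
    rw [hE b e hb hbd, hmask, zero_mul]
  constructor
  · refine hzero i ((h.tri_iff i e).mpr ⟨hie, fun hh => hdi.1.ne' hh.1, fun hh => ?_⟩) hdi.1.ne'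
    exact hie.1.ne' hh.1
  · refine Finset.sum_eq_zero fun b _ => ?_
    by_cases hb : β b = 0
    · rw [hb, mul_zero]
    have hdb := hβ b hb
    have hbi := h.max b hdb.1
    rw [mul_eq_zero]
    left
    by_cases hbe : b < c e
    · exact hE₀ e b (hdi.1.trans hie.1) hbe
    · refine hzero b ((h.tri_iff b e).mpr ⟨?_, fun hh => hdb.1.1.ne' hh.1, fun hh => ?_⟩)
        hdb.1.1.ne'
      · clear hE hzero hβ
        unfold Tri at *
        omega
      · exact hie.1.ne' hh.1

theorem IsBump.commutator_pivotRow_eq_zero (h : IsBump c d i)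
    (hE : ∀ k e, Tri (bumpLabel c d i) k e → k ≠ d →
      E e k = maskCol (bumpLabel c d i) d w e * r k)
    (ht : Tri c k i) (hk : k ≠ d) (hlt : ¬ c d < c k) : E i k = 0 := by
  rw [hE k i ((h.tri_iff k i).mpr ⟨ht, fun hh => hk hh.1, fun hh => hlt hh.2.2.1⟩) hk, maskCol,
    if_neg h.not_tri_bumpLabel, zero_mul]

theorem IsBump.unshear_commutator_pivotCol (h : IsBump c d i) (hw : ∀ e, w e ≠ 0 → Tri c d e)
    (hβ : ∀ b, β b ≠ 0 → Tri c d b ∧ b ≠ i) (hE₀ : ∀ e k : Fin n, d < e → k < c e → E e k = 0)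
    (hE : ∀ k e, Tri (bumpLabel c d i) k e → k ≠ d →
      E e k = maskCol (bumpLabel c d i) d w e * r k)
    (hie : Tri c i e) : w e = 0 ∧ shear i (-pivotRatio i w) (-β) E e i = 0 := by
  have hwe : w e = 0 := by_contra fun h0 => absurd (h.max e (hw e h0)) (not_le.mpr hie.1)
  have hγ : pivotRatio i w e = 0 := by rw [pivotRatio, hwe, zero_div, ite_self]
  obtain ⟨hEi, hsum⟩ := h.commutator_pivotCol_eq_zero hβ hE₀ hE hie
  refine ⟨hwe, ?_⟩
  rw [shear_apply, if_pos rfl, hEi]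
  simp [hγ, hsum]

theorem IsBump.unshear_commutator_pivotRow (h : IsBump c d i) (hwi : w i ≠ 0)
    (hr : ∀ k, r k ≠ 0 → d < k ∧ c i < c k)
    (hE : ∀ k e, Tri (bumpLabel c d i) k e → k ≠ d →
      E e k = maskCol (bumpLabel c d i) d w e * r k)
    (hki : Tri c k i) (hk : k ≠ d) :
    shear i (-pivotRatio i w) (-β) E i k = w i *
      if d < k ∧ c d < c k then r k + E i k / w i else 0 := by
  rw [shear_apply_of_ne _ _ _ hki.1.ne, Pi.neg_apply, neg_mul, sub_neg_eq_add, pivotRatio_self,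
    zero_mul, add_zero]
  split_ifs with hlt
  · have hr0 : r k = 0 := by_contra fun h0 => absurd (hr k h0).2 (not_lt.mpr hki.2.1.le)
    rw [hr0, zero_add, mul_div_cancel₀ _ hwi]
  · have hdk := lt_of_le_of_ne (h.min k i hki) hk.symm
    rw [h.commutator_pivotRow_eq_zero hE hki hk fun hh => hlt ⟨hdk, hh⟩, mul_zero]

theorem IsBump.unshear_commutator (h : IsBump c d i) (hw : ∀ e, w e ≠ 0 → Tri c d e)
    (hwi : w i ≠ 0) (hβ : ∀ b, β b ≠ 0 → Tri c d b ∧ b ≠ i)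
    (hr : ∀ k, r k ≠ 0 → d < k ∧ c i < c k) (hE₀ : ∀ e k : Fin n, d < e → k < c e → E e k = 0)
    (hE : ∀ k e, Tri (bumpLabel c d i) k e → k ≠ d →
      E e k = maskCol (bumpLabel c d i) d w e * r k)
    (hke : Tri c k e) (hk : k ≠ d) :
    shear i (-pivotRatio i w) (-β) E e k = w e *
      if d < k ∧ c d < c k then r k + E i k / w i else 0 := by
  have hdi := h.tri
  have hdk := lt_of_le_of_ne (h.min k e hke) hk.symm
  by_cases hki : k = i
  · subst hki
    obtain ⟨hwe, hzero⟩ := h.unshear_commutator_pivotCol hw hβ hE₀ hE hke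
    rw [hzero, hwe, zero_mul]
  by_cases hei : e = i
  · subst hei
    exact h.unshear_commutator_pivotRow hwi hr hE hke hk
  have hke' := h.tri_iff k e
  have hrk := hr k
  rw [shear_apply_of_ne _ _ _ hki, Pi.neg_apply, neg_mul, sub_neg_eq_add]
  rw [hE k e (hke'.mpr ⟨hke, fun hh => hk hh.1, fun hh => hei hh.1⟩) hk, pivotRatio_mul_eq hei]
  have hmask : maskCol (bumpLabel c d i) d w e * r k = w e * r k := by
    rw [maskCol, h.tri_iff d e]
    have := hw e
    unfold Tri at *
    grind
  rw [hmask, ← mul_add]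
  by_cases hwe : w e = 0
  · rw [hwe, zero_mul, zero_mul]
  have heU := hw e hwe
  have hmax := h.max e heU
  split_ifs with hlt
  · rfl
  · have hr0 : r k = 0 := by_contra fun h0 => hlt ⟨hdk, hdi.2.1.trans (hrk h0).2⟩
    have ht : Tri c k i := by unfold Tri at *; omega
    rw [hr0, h.commutator_pivotRow_eq_zero hE ht hk fun hh => hlt ⟨hdk, hh⟩, zero_div, add_zero]

end BumpIntertwinerBack

section BumpMatrix

open Matrix

variable {K : Type} [Field K] {n : ℕ} {c : Fin n → ℕ} {d i k e : Fin n} {r : Fin n → K}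
  {g A B Y W : Matrix (Fin n) (Fin n) K}

/-- The conjugate of the columns of `Y` other than column `d` by the row operations clearing
column `d` with pivot `(i, d)`. -/
noncomputable def pivotConj (d i : Fin n) (Y : Matrix (Fin n) (Fin n) K) :
    Matrix (Fin n) (Fin n) K :=
  shear i (pivotRatio i (Y.col d)) (pivotRatio i (Y.col d)) (cutCol d Y)

/-- The matrix of coordinates attached to the labelling after the bump at `(i, d)`. -/
noncomputable def bumpMat (c : Fin n → ℕ) (d i : Fin n) (Y : Matrix (Fin n) (Fin n) K) :
    Matrix (Fin n) (Fin n) K :=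
  fun e k => if Tri (bumpLabel c d i) k e then (if k = d then Y e d else pivotConj d i Y e k) else 0

theorem cutCol_eq_unshear_pivotConj (d i : Fin n) (Y : Matrix (Fin n) (Fin n) K) :
    shear i (-pivotRatio i (Y.col d)) (-pivotRatio i (Y.col d)) (pivotConj d i Y) = cutCol d Y :=
  shear_neg_shear (pivotRatio_self i _) (pivotRatio_self i _) _

theorem suppTri_bumpMat : SuppTri (bumpLabel c d i) (bumpMat c d i Y) := fun _ _ h =>
  (ite_ne_right_iff.mp h).1

theorem bumpMat_apply_left (e : Fin n) :
    bumpMat c d i Y e d = maskCol (bumpLabel c d i) d (Y.col d) e := by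
  simp [bumpMat, maskCol]

theorem cutCol_bumpMat :
    cutCol d (bumpMat c d i Y) = maskBeyond (bumpLabel c d i) d (pivotConj d i Y) := by
  ext e k
  simp only [cutCol, bumpMat, maskBeyond]
  grind

theorem IsBump.suppBeyond_pivotConj (h : IsBump c d i) (hY : SuppTri c Y) :
    SuppBeyond (bumpLabel c d i) d (pivotConj d i Y) := by
  intro e k hne
  have hβ : ∀ b, pivotRatio i (Y.col d) b ≠ 0 → Tri c d b ∧ b ≠ i := fun b hb =>
    pivotRatio_ne_zero (y := Y.col d) (fun e => hY e d) hb
  have hA : ∀ e k, cutCol d Y e k ≠ 0 → Tri c k e ∧ d < k := fun e k => cutCol_ne_zero h.min hY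
  have hdi := h.tri
  simp only [bumpLabel, Function.comp_apply, Equiv.swap_apply_def]
  rcases shear_ne_zero hne with hAk | ⟨hAk, hk⟩ | ⟨rfl, b, hAk, hβb⟩
  · have := hA e k hAk
    unfold Tri at *
    grind
  · have := hβ e hAk
    have hdk : d < k := hk.elim (fun hk => (hA i k hk).2) fun hk => hk ▸ hdi.1
    unfold Tri at *
    grind
  · have hAb := hA e b hAk
    have hbi := h.max b (hβ b hβb).1
    unfold Tri at *
    grind

theorem IsBump.commutator_bumpMat (h : IsBump c d i) (hY : SuppTri c Y) (hW : SuppTri c W)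
    (hg : IsPatBelow (bumpLabel c d i) d g) (hke : Tri (bumpLabel c d i) k e) :
    (g * cutCol d (bumpMat c d i Y) - cutCol d (bumpMat c d i W) * g) e k =
      (g * pivotConj d i Y - pivotConj d i W * g) e k := by
  have hde := (h.min k e (h.tri_of hke)).trans_lt (h.tri_of hke).1
  rw [cutCol_bumpMat, cutCol_bumpMat, Matrix.sub_apply, Matrix.sub_apply,
    mul_maskBeyond (h.suppBeyond_pivotConj hY) hg hde hke,
    maskBeyond_mul (h.suppBeyond_pivotConj hW) hg hke]

theorem IsBump.eq_of_intertwinesBelow (h : IsBump c d i) (hY : SuppTri c Y)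
    (hg : IntertwinesBelow c d Y W g r) : Y i d = W i d := by
  rw [hg.col i h.tri, Finset.sum_eq_single i, (hg.pat i h.tri.1).1, one_mul]
  · intro l _ hl
    by_contra hne
    refine left_ne_zero_of_mul hne (h.eq_zero_of_tri ?_ (hY l d (right_ne_zero_of_mul hne)) hl)
    exact fun l hl => ((hg.pat i h.tri.1).le hl).1
  · simp

theorem IsBump.intertwinesBelow_bumpMat (h : IsBump c d i) (hY : SuppTri c Y) (hW : SuppTri c W)
    (hYi : Y i d ≠ 0) (hYW : Y i d = W i d) (hg : IntertwinesBelow c d Y W g r) :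
    IntertwinesBelow (bumpLabel c d i) d (bumpMat c d i Y) (bumpMat c d i W)
      (shear i (pivotRatio i (W.col d)) (pivotRatio i (Y.col d)) g)
      fun k => if d < k ∧ c i < c k then
        r k - (g * cutCol d Y - cutCol d W * g) i k / W i d else 0 := by
  have hpat := h.isPatBelow_shear (y := Y.col d) (w := W.col d) (fun e => hY e d) (fun e => hW e d)
    hYi hYW hg.pat hg.col
  refine ⟨hpat, fun k hk => ?_, fun e he => ?_, fun k e hke hk => ?_⟩
  · obtain ⟨hk, -⟩ := ite_ne_right_iff.mp hk
    rwa [bumpLabel_left, bumpLabel_of_ne c hk.1.ne' fun hki => hk.2.ne' (by rw [hki])]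
  · simp only [bumpMat_apply_left]
    rw [maskCol, if_pos he]
    exact h.sum_shear_mul_maskCol (y := Y.col d) (w := W.col d) hg.pat _ _
      (hg.col e (h.tri_of he)) he fun e => hY e d
  · rw [h.commutator_bumpMat hY hW hpat hke, bumpMat_apply_left, pivotConj, pivotConj,
      shear_mul_shear (pivotRatio_self i _), shear_mul_shear (pivotRatio_self i _), ← shear_sub]
    exact h.shear_commutator (w := W.col d) (fun e => hW e d) (by rwa [Matrix.col_apply, ← hYW])
      (fun b hb => (pivotRatio_ne_zero (y := Y.col d) (fun e => hY e d) hb).1) hg.supp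
      (fun e k hde hk => commutator_eq_zero_of_lt_or_le (suppBeyond_cutCol h.min hY)
        (suppBeyond_cutCol h.min hW) hg.pat hde (Or.inl hk)) hg.comm hke hk

theorem IsBump.intertwinesBelow_of_bumpMat (h : IsBump c d i) (hY : SuppTri c Y) (hW : SuppTri c W)
    (hYi : Y i d ≠ 0) (hYW : Y i d = W i d)
    (hg : IntertwinesBelow (bumpLabel c d i) d (bumpMat c d i Y) (bumpMat c d i W) g r) :
    IntertwinesBelow c d Y W
      (shear i (-pivotRatio i (W.col d)) (-pivotRatio i (Y.col d)) g)
      fun k => if d < k ∧ c d < c k then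
        r k + (g * pivotConj d i Y - pivotConj d i W * g) i k / W i d else 0 := by
  have hcol : ∀ e, Tri (bumpLabel c d i) d e →
      W e d = ∑ l, g e l * maskCol (bumpLabel c d i) d (Y.col d) l := fun e he => by
    have := hg.col e he
    simp only [bumpMat_apply_left] at this
    rwa [maskCol, if_pos he] at this
  have hy : ∀ e, Y.col d e ≠ 0 → Tri c d e := fun e => hY e d
  have hpat := h.isPatBelow_unshear hy (w := W.col d) (fun e => hW e d) hYi hYW hg.pat hcol
  have hsupp : ∀ k, r k ≠ 0 → d < k ∧ c i < c k := fun k hk => by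
    have := hg.supp k hk
    have hki : k ≠ i := by
      rintro rfl
      rw [bumpLabel_left, bumpLabel_right] at this
      exact absurd this.2 (not_lt.mpr h.tri.2.1.le)
    rwa [bumpLabel_left, bumpLabel_of_ne c this.1.ne' hki] at this
  refine ⟨hpat, fun k hk => (ite_ne_right_iff.mp hk).1, fun e he => ?_, fun k e hke hk => ?_⟩
  · exact h.sum_unshear_eq (y := Y.col d) (w := W.col d) hYi hYW hg.pat he
  · nth_rewrite 1 [← cutCol_eq_unshear_pivotConj d i Y]
    nth_rewrite 1 [← cutCol_eq_unshear_pivotConj d i W]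
    have hβ : ∀ M : Matrix (Fin n) (Fin n) K, (-pivotRatio i (M.col d)) i = 0 := fun M => by
      rw [Pi.neg_apply, pivotRatio_self, neg_zero]
    rw [shear_mul_shear (hβ Y), shear_mul_shear (hβ W), ← shear_sub]
    refine h.unshear_commutator (w := W.col d) (fun e => hW e d) (by rwa [Matrix.col_apply, ← hYW])
      (fun b hb => pivotRatio_ne_zero hy hb) hsupp (fun e k hde hk => ?_)
      (fun k e hke hk => ?_) hke hk
    · refine commutator_eq_zero_of_lt_or_le (h.suppBeyond_pivotConj hY) (h.suppBeyond_pivotConj hW)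
        hg.pat hde ?_
      by_cases hei : e = i
      · have := h.tri.2.2
        subst hei
        omega
      · rw [bumpLabel_of_ne c hde.ne' hei]
        exact Or.inl hk
    · rw [← h.commutator_bumpMat hY hW hg.pat hke, hg.comm k e hke hk, bumpMat_apply_left]

theorem IsBump.exists_intertwines_iff (h : IsBump c d i) (hY : SuppTri c Y) (hW : SuppTri c W)
    (hYi : Y i d ≠ 0) :
    (∃ g, IsPat c g ∧ Intertwines c Y W g) ↔ Y i d = W i d ∧
      ∃ g, IsPat (bumpLabel c d i) g ∧
        Intertwines (bumpLabel c d i) (bumpMat c d i Y) (bumpMat c d i W) g := by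
  rw [_root_.exists_intertwines_iff h.min hW,
    _root_.exists_intertwines_iff (fun k e ht => h.min k e (h.tri_of ht)) suppTri_bumpMat]
  constructor
  · rintro ⟨g, r, hg⟩
    have hYW := h.eq_of_intertwinesBelow hY hg
    exact ⟨hYW, _, _, h.intertwinesBelow_bumpMat hY hW hYi hYW hg⟩
  · rintro ⟨hYW, g, r, hg⟩
    exact ⟨_, _, h.intertwinesBelow_of_bumpMat hY hW hYi hYW hg⟩

end BumpMatrix

section BumpPoints

open Matrix

variable {K : Type} [Field K] {n : ℕ} {c : Fin n → ℕ} {d i k e : Fin n} {β : Fin n → K}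
  {A : Matrix (Fin n) (Fin n) K} {y w y' w' : Fin n × Fin n → K} {Col : Set (Fin n × Fin n)}

/-- The matrix of the coordinates of `y` at the places of `Tri c`. -/
noncomputable def maskMat (c : Fin n → ℕ) (y : Fin n × Fin n → K) : Matrix (Fin n) (Fin n) K :=
  fun e k => if Tri c k e then y (e, k) else 0

theorem suppTri_maskMat (c : Fin n → ℕ) (y : Fin n × Fin n → K) : SuppTri c (maskMat c y) :=
  fun _ _ h => (ite_ne_right_iff.mp h).1

theorem maskMat_apply (h : Tri c k e) (y : Fin n × Fin n → K) : maskMat c y e k = y (e, k) :=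
  if_pos h

/-- Two points are related if they agree at the places in `Col` and their coordinates at the places
of `Tri c` are intertwined by a unipotent matrix of pattern `c`. -/
def BumpRel (c : Fin n → ℕ) (Col : Set (Fin n × Fin n)) (y w : Fin n × Fin n → K) : Prop :=
  (∀ t ∈ Col, y t = w t) ∧ ∃ g, IsPat c g ∧ Intertwines c (maskMat c y) (maskMat c w) g

theorem BumpRel.refl (c : Fin n → ℕ) (Col : Set (Fin n × Fin n)) (y : Fin n × Fin n → K) :
    BumpRel c Col y y := by
  refine ⟨fun _ _ => rfl, 1, fun k => ⟨Matrix.one_apply_eq k, fun l hl => Or.inl ?_⟩,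
    fun k e _ => ?_⟩
  · exact by_contra fun hkl => hl (Matrix.one_apply_ne hkl)
  · rw [Matrix.mul_one, Matrix.one_mul]

/-- The places `(e, k)` with `Tri c k e`. -/
def triPlaces (c : Fin n → ℕ) : Set (Fin n × Fin n) := {t | Tri c t.2 t.1}

theorem BumpRel.congr (hy : ∀ t ∈ triPlaces c ∪ Col, y t = y' t)
    (hw : ∀ t ∈ triPlaces c ∪ Col, w t = w' t) : BumpRel c Col y w ↔ BumpRel c Col y' w' := by
  have hmask : ∀ {y y' : Fin n × Fin n → K}, (∀ t ∈ triPlaces c ∪ Col, y t = y' t) →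
      maskMat c y = maskMat c y' := fun h => by
    ext e k
    exact ite_congr rfl (fun ht => h (e, k) (Or.inl ht)) fun _ => rfl
  rw [BumpRel, BumpRel, hmask hy, hmask hw]
  exact and_congr_left' (forall₂_congr fun t ht => by rw [hy t (Or.inr ht), hw t (Or.inr ht)])

/-- The point `y` with the coordinates at the places of `Tri c` outside column `d` replaced by those
of a conjugate matrix. -/
noncomputable def conjPt (c : Fin n → ℕ) (d i : Fin n) (β : Fin n → K) (y : Fin n × Fin n → K) :
    Fin n × Fin n → K :=
  fun t => if Tri c t.2 t.1 ∧ t.2 ≠ d then shear i β β (cutCol d (maskMat c y)) t.1 t.2 else y t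

theorem conjPt_apply_of_not_tri {t : Fin n × Fin n} (h : ¬ Tri c t.2 t.1) :
    conjPt c d i β y t = y t :=
  if_neg fun hh => h hh.1

theorem conjPt_apply_left (e : Fin n) : conjPt c d i β y (e, d) = y (e, d) :=
  if_neg fun hh => hh.2 rfl

theorem cutCol_maskMat_conjPt :
    cutCol d (maskMat c (conjPt c d i β y)) =
      maskBeyond c d (shear i β β (cutCol d (maskMat c y))) := by
  ext e k
  simp only [cutCol, maskMat, maskBeyond, conjPt]
  grind

theorem maskMat_conjPt_col : (maskMat c (conjPt c d i β y)).col d = (maskMat c y).col d := by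
  ext e
  simp only [Matrix.col_apply, maskMat, conjPt_apply_left]

theorem IsBump.suppBeyond_shear (h : IsBump c d i) (hA : SuppTri c A)
    (hβ : ∀ b, β b ≠ 0 → Tri c d b ∧ b ≠ i) : SuppBeyond c d (shear i β β (cutCol d A)) := by
  intro e k hne
  have hA : ∀ e k, cutCol d A e k ≠ 0 → Tri c k e ∧ d < k := fun e k => cutCol_ne_zero h.min hA
  have hdi := h.tri.1
  rcases shear_ne_zero hne with hAk | ⟨hAk, hk⟩ | ⟨rfl, b, hAk, hβb⟩
  · exact ⟨(hA e k hAk).1.2.2, (hA e k hAk).2⟩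
  · have hdk : d < k := hk.elim (fun hk => (hA i k hk).2) fun hk => hk ▸ hdi
    exact ⟨(hβ e hAk).1.2.2.trans hdk.le, hdk⟩
  · have hbk := h.max b (hβ b hβb).1
    exact ⟨(hA e b hAk).1.2.2.trans hbk, hdi⟩

theorem IsBump.unshear_maskBeyond_shear (h : IsBump c d i)
    (hβ : ∀ b, β b ≠ 0 → Tri c d b ∧ b ≠ i) (hA : SuppTri c A) (hke : Tri c k e) (hk : k ≠ d) :
    shear i (-β) (-β) (maskBeyond c d (shear i β β (cutCol d A))) e k = A e k := by
  have hβi : β i = 0 := by_contra fun hi => (hβ i hi).2 rfl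
  set B := shear i β β (cutCol d A) with hB
  have hsupp : SuppBeyond c d B := h.suppBeyond_shear hA hβ
  have hrow : β e * maskBeyond c d B i k = β e * B i k := by
    by_cases he : β e = 0
    · rw [he, zero_mul, zero_mul]
    · have hki : k < i := hke.1.trans_le (h.max e (hβ e he).1)
      have hBA : B i k = cutCol d A i k := by
        rw [hB, shear_apply_of_ne β β _ hki.ne, hβi, zero_mul, sub_zero]
      rw [maskBeyond, hBA]
      congr 1
      exact ite_eq_left_iff.mpr fun hn => by_contra fun h0 =>
        hn ⟨(cutCol_ne_zero h.min hA (Ne.symm h0)).1, hk⟩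
  have hsum : k = i → ∀ b, maskBeyond c d B e b * β b = B e b * β b := fun hki b => by
    by_cases hb : B e b * β b = 0
    · rw [maskBeyond, ite_mul, zero_mul, hb, ite_self]
    · have hBb := hsupp e b (left_ne_zero_of_mul hb)
      have hβb := hβ b (right_ne_zero_of_mul hb)
      have hbi := h.max b hβb.1
      have hemax := h.max e
      have hdi := h.tri
      rw [maskBeyond, if_pos ⟨by unfold Tri at *; grind, hBb.2.ne'⟩]
  have hAB : shear i (-β) (-β) B e k = A e k := by
    rw [hB, shear_neg_shear hβi hβi, cutCol, if_neg hk]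
  rw [← hAB, shear_apply, shear_apply, Pi.neg_apply, neg_mul, neg_mul, hrow, maskBeyond,
    if_pos ⟨hke, hk⟩]
  congr 1
  refine ite_congr rfl (fun hki => Finset.sum_congr rfl fun b _ => ?_) fun _ => rfl
  have hβe : β e = 0 := by_contra fun he => (h.max e (hβ e he).1).not_gt (hki ▸ hke.1)
  rw [hβe, Pi.neg_apply, neg_zero, zero_mul, zero_mul, sub_zero, sub_zero, mul_neg, mul_neg,
    hsum hki b]

theorem IsBump.conjPt_neg_conjPt (h : IsBump c d i) (hβ : ∀ b, β b ≠ 0 → Tri c d b ∧ b ≠ i)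
    (y : Fin n × Fin n → K) : conjPt c d i (-β) (conjPt c d i β y) = y := by
  ext t
  by_cases ht : Tri c t.2 t.1 ∧ t.2 ≠ d
  · rw [conjPt, if_pos ht, cutCol_maskMat_conjPt,
      h.unshear_maskBeyond_shear hβ (suppTri_maskMat c y) ht.1 ht.2, maskMat_apply ht.1]
  · rw [conjPt, if_neg ht, conjPt, if_neg ht]

theorem IsBump.conjPt_apply_of_eq (h : IsBump c d i) (hβ : ∀ b, β b ≠ 0 → Tri c d b ∧ b ≠ i)
    (y : Fin n × Fin n → K) (hce : c e = k) : conjPt c d i β y (e, k) = y (e, k) := by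
  refine ite_eq_right_iff.mpr fun ht => ?_
  have hdk : d < k := lt_of_le_of_ne (h.min k e ht.1) ht.2.symm
  have hβe : β e = 0 := by_contra fun he => by have := (hβ e he).1.2.2; omega
  have hA : ∀ b, cutCol d (maskMat c y) e b ≠ 0 → Tri c b e := fun b hb =>
    (cutCol_ne_zero h.min (suppTri_maskMat c y) hb).1
  rw [shear_apply, hβe, zero_mul, sub_zero, cutCol, if_neg ht.2, maskMat_apply ht.1]
  refine add_eq_left.mpr (ite_eq_right_iff.mpr fun hki => Finset.sum_eq_zero fun b _ => ?_)
  by_contra hb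
  rw [zero_mul, sub_zero] at hb
  have hAb := (hA b (left_ne_zero_of_mul hb)).2.2
  have hβb := hβ b (right_ne_zero_of_mul hb)
  have hbi := lt_of_le_of_ne (h.max b hβb.1) hβb.2
  have hki : k = i := hki
  omega

/-- The ratios of the coordinates of `y` in column `d` to the pivot coordinate at `(i, d)`. -/
noncomputable def bumpRatio (c : Fin n → ℕ) (d i : Fin n) (y : Fin n × Fin n → K) : Fin n → K :=
  pivotRatio i ((maskMat c y).col d)

theorem bumpRatio_ne_zero {b : Fin n} (h : bumpRatio c d i y b ≠ 0) : Tri c d b ∧ b ≠ i :=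
  pivotRatio_ne_zero (y := (maskMat c y).col d) (fun e => suppTri_maskMat c y e d) h

theorem bumpRatio_conjPt : bumpRatio c d i (conjPt c d i β y) = bumpRatio c d i y := by
  rw [bumpRatio, maskMat_conjPt_col, bumpRatio]

theorem IsBump.maskMat_conjPt (h : IsBump c d i) (y : Fin n × Fin n → K) :
    maskMat (bumpLabel c d i) (conjPt c d i (bumpRatio c d i y) y) =
      bumpMat c d i (maskMat c y) := by
  ext e k
  refine ite_congr rfl (fun ht => ?_) fun _ => rfl
  have ht := h.tri_of ht
  by_cases hk : k = d
  · rw [hk, conjPt_apply_left, if_pos rfl]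
    exact (maskMat_apply (hk ▸ ht) y).symm
  · rw [if_neg hk, conjPt, if_pos ⟨ht, hk⟩]
    rfl

theorem IsBump.bumpRel_iff (h : IsBump c d i) (hCol : ∀ t ∈ Col, ¬ Tri c t.2 t.1)
    (hy : y (i, d) ≠ 0) : BumpRel c Col y w ↔
      BumpRel (bumpLabel c d i) (insert (i, d) Col) (conjPt c d i (bumpRatio c d i y) y)
        (conjPt c d i (bumpRatio c d i w) w) := by
  rw [BumpRel, BumpRel, h.maskMat_conjPt, h.maskMat_conjPt,
    h.exists_intertwines_iff (suppTri_maskMat c y) (suppTri_maskMat c w)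
      (by rwa [maskMat_apply h.tri]), maskMat_apply h.tri, maskMat_apply h.tri,
    Set.forall_mem_insert, conjPt_apply_left, conjPt_apply_left, ← and_assoc,
    and_comm (a := y (i, d) = w (i, d))]
  refine and_congr_left' (and_congr_left' (forall₂_congr fun t ht => ?_))
  rw [conjPt_apply_of_not_tri (hCol t ht), conjPt_apply_of_not_tri (hCol t ht)]

end BumpPoints

section BumpChain

open MvPolynomial

variable {K : Type} [Field K] {n : ℕ} {c : Fin n → ℕ} {d i : Fin n} {y₀ : Fin n × Fin n → K}
  {Col F : Set (Fin n × Fin n)}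

theorem regOn_maskMat {U : Set (Fin n × Fin n → K)} (e k : Fin n) :
    RegOn U fun y => maskMat c y e k :=
  RegOn.ite _ (fun _ => RegOn.coord _) fun _ => RegOn.const 0

theorem regOn_bumpRatio {U : Set (Fin n × Fin n → K)} (h : Tri c d i)
    (hU : ∀ y ∈ U, y (i, d) ≠ 0) (e : Fin n) : RegOn U fun y => bumpRatio c d i y e :=
  RegOn.ite _ (fun _ => RegOn.const 0) fun _ => (regOn_maskMat e d).div (regOn_maskMat i d)
    fun y hy => (maskMat_apply h y).trans_ne (hU y hy)

theorem regOn_conjPt {U : Set (Fin n × Fin n → K)} {β : (Fin n × Fin n → K) → Fin n → K}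
    (hβ : ∀ e, RegOn U fun y => β y e) (t : Fin n × Fin n) :
    RegOn U fun y => conjPt c d i (β y) y t := by
  refine RegOn.ite _ (fun _ => ?_) fun _ => RegOn.coord t
  simp only [shear_apply]
  have hcut : ∀ e k, RegOn U fun y => cutCol d (maskMat c y) e k := fun e k =>
    RegOn.ite _ (fun _ => RegOn.const 0) fun _ => regOn_maskMat e k
  have hrow : ∀ e k, RegOn U fun y =>
      cutCol d (maskMat c y) e k - β y e * cutCol d (maskMat c y) i k := fun e k =>
    (hcut e k).sub ((hβ e).mul (hcut i k))
  exact (hrow t.1 t.2).add (RegOn.ite _ (fun _ => RegOn.sum _ fun b _ => (hrow t.1 b).mul (hβ b))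
    fun _ => RegOn.const 0)

variable [Infinite K]

theorem IsBump.conjPt_mem_affineIrr (h : IsBump c d i)
    (hF : ∀ k e, Tri c k e → (e, k) ∈ F → c e = k) {β : Fin n → K}
    (hβ : ∀ b, β b ≠ 0 → Tri c d b ∧ b ≠ i) {y : Fin n × Fin n → K}
    (hy : y ∈ (affineIrr ((triPlaces c ∪ Col) \ F) y₀).carrier) :
    conjPt c d i β y ∈ (affineIrr ((triPlaces c ∪ Col) \ F) y₀).carrier := fun t ht => by
  rw [← hy t ht]
  by_cases htri : Tri c t.2 t.1
  · exact h.conjPt_apply_of_eq hβ y (hF _ _ htri (by_contra fun hn => ht ⟨Or.inl htri, hn⟩))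
  · exact conjPt_apply_of_not_tri htri

theorem IsBump.reduces_conjPt (h : IsBump c d i) (hCol : ∀ t ∈ Col, ¬ Tri c t.2 t.1)
    (hF : ∀ k e, Tri c k e → (e, k) ∈ F → c e = k) (hy₀ : ∀ t ∈ F, y₀ t ≠ 0) :
    Reduces (affineIrr ((triPlaces c ∪ Col) \ F) y₀) (BumpRel c Col)
      (affineIrr ((triPlaces c ∪ Col) \ F) y₀) (BumpRel (bumpLabel c d i) (insert (i, d) Col)) := by
  set S := affineIrr ((triPlaces c ∪ Col) \ F) y₀
  have hq : ∀ y ∈ S.basicOpen (X (i, d)), y (i, d) ≠ 0 := fun y hy => by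
    simpa only [eval_X] using hy.2
  have hmaps : ∀ y ∈ S.basicOpen (X (i, d)), ∀ β : Fin n → K,
      (∀ b, β b ≠ 0 → Tri c d b ∧ b ≠ i) → conjPt c d i β y ∈ S.basicOpen (X (i, d)) :=
    fun y hy β hβ => ⟨h.conjPt_mem_affineIrr hF hβ hy.1, by
      rw [eval_X, conjPt_apply_left]
      exact hq y hy⟩
  have hneg : ∀ y : Fin n × Fin n → K, ∀ b, (-bumpRatio c d i y) b ≠ 0 → Tri c d b ∧ b ≠ i :=
    fun y b hb => bumpRatio_ne_zero (neg_ne_zero.mp hb)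
  have hback : ∀ y : Fin n × Fin n → K, conjPt c d i (bumpRatio c d i y)
      (conjPt c d i (-bumpRatio c d i y) y) = y := fun y => by
    simpa only [neg_neg] using h.conjPt_neg_conjPt (hneg y) y
  have hβ : ∀ e, RegOn (S.basicOpen (X (i, d))) fun y => bumpRatio c d i y e :=
    regOn_bumpRatio h.tri hq
  refine Reduces.of_sections (q := X (i, d)) (q' := X (i, d)) ?_
    (ρ := fun y => conjPt c d i (bumpRatio c d i y) y) (regOn_conjPt hβ)
    (fun y hy => hmaps y hy _ fun b => bumpRatio_ne_zero)
    (fun y hy => ⟨_, hmaps y hy _ (hneg y), ?_⟩)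
    (fun y hy w _ => h.bumpRel_iff hCol (hq y hy))
    (s := fun _ y => conjPt c d i (-bumpRatio c d i y) y)
    (fun _ _ => regOn_conjPt fun e => (hβ e).neg) (fun y _ => ?_)
    (fun _ _ y hy => ⟨(hmaps y hy _ (hneg y)).1, ?_⟩)
  · obtain ⟨y, hy, hyi⟩ := exists_mem_affineIrr_ne_zero (Fr := (triPlaces c ∪ Col) \ F) (y₀ := y₀)
      (t := (i, d)) fun hn => hy₀ _ (by_contra fun hF => hn ⟨Or.inl h.tri, hF⟩)
    exact ⟨y, hy, by rwa [eval_X]⟩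
  · simp only [bumpRatio_conjPt, hback]
  · simp only [bumpRatio_conjPt]
    exact h.conjPt_neg_conjPt (fun b => bumpRatio_ne_zero) y
  · simp only [bumpRatio_conjPt, hback]
    exact BumpRel.refl _ _ y

theorem IsBump.reduces_bump (h : IsBump c d i) (hCol : ∀ t ∈ Col, ¬ Tri c t.2 t.1)
    (hF : ∀ k e, Tri c k e → (e, k) ∈ F → c e = k) (hy₀ : ∀ t ∈ F, y₀ t ≠ 0)
    {τ : Type} [Finite τ] {T : IrrSet τ K}
    (hT : Reduces (affineIrr ((triPlaces (bumpLabel c d i) ∪ insert (i, d) Col) \ F) y₀)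
      (BumpRel (bumpLabel c d i) (insert (i, d) Col)) T Eq) :
    Reduces (affineIrr ((triPlaces c ∪ Col) \ F) y₀) (BumpRel c Col) T Eq := by
  have hsub : (triPlaces (bumpLabel c d i) ∪ insert (i, d) Col) \ F ⊆ (triPlaces c ∪ Col) \ F := by
    refine Set.sdiff_subset_sdiff_left ?_
    rintro t (ht | rfl | ht)
    exacts [Or.inl (h.tri_of ht), Or.inl h.tri, Or.inr ht]
  refine (h.reduces_conjPt hCol hF hy₀).trans ((Reduces.forget hsub (BumpRel.refl _ _)
    fun y w y' w' hy hw => BumpRel.congr (fun t ht => hy t ?_) fun t ht => hw t ?_).trans hT)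
  exacts [fun hn => hn.2 ⟨ht, hn.1.2⟩, fun hn => hn.2 ⟨ht, hn.1.2⟩]

/-- The list `l` records the places of a sequence of bumps which starts from the labelling `c` and
ends when no coordinates are left. -/
inductive BumpChain : (Fin n → ℕ) → List (Fin n × Fin n) → Prop
  | nil {c : Fin n → ℕ} (h : ∀ k e, ¬ Tri c k e) : BumpChain c []
  | cons {c : Fin n → ℕ} {d i : Fin n} {l : List (Fin n × Fin n)} (h : IsBump c d i)
      (hl : BumpChain (bumpLabel c d i) l) : BumpChain c ((i, d) :: l)

theorem bumpRel_iff_eq (h : ∀ k e, ¬ Tri c k e) {y w : Fin n × Fin n → K}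
    (hy : y ∈ (affineIrr ((triPlaces c ∪ Col) \ F) y₀).carrier)
    (hw : w ∈ (affineIrr ((triPlaces c ∪ Col) \ F) y₀).carrier) :
    BumpRel c Col y w ↔ y = w := by
  refine ⟨fun hyw => funext fun t => ?_, fun hyw => hyw ▸ BumpRel.refl c Col y⟩
  by_cases ht : t ∈ Col
  · exact hyw.1 t ht
  · have ht : t ∉ (triPlaces c ∪ Col) \ F := fun hn => hn.1.elim (h _ _) ht
    rw [hy t ht, hw t ht]

theorem IsBump.bumpLabel_eq_of_mem (h : IsBump c d i)
    (hF : ∀ k e, Tri c k e → (e, k) ∈ F → c e = k) (k e : Fin n) (ht : Tri (bumpLabel c d i) k e)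
    (hke : (e, k) ∈ F) : bumpLabel c d i e = k := by
  have hc := hF k e (h.tri_of ht) hke
  have hdk := h.min k e (h.tri_of ht)
  have hiff := (h.tri_iff k e).mp ht
  have hid := h.tri.2.2
  rwa [bumpLabel_of_ne c (hdk.trans_lt ht.1).ne']
  rintro rfl
  exact hiff.2.1 ⟨by omega, le_rfl⟩

theorem BumpChain.reduces {l : List (Fin n × Fin n)} (hl : BumpChain c l)
    (hCol : ∀ t ∈ Col, ¬ Tri c t.2 t.1) (hF : ∀ k e, Tri c k e → (e, k) ∈ F → c e = k)
    (hy₀ : ∀ t ∈ F, y₀ t ≠ 0) :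
    Reduces (affineIrr ((triPlaces c ∪ Col) \ F) y₀) (BumpRel c Col)
      (affineIrr ((Col ∪ {t | t ∈ l}) \ F) y₀) Eq := by
  induction hl generalizing Col with
  | @nil c h =>
    have hFr : (triPlaces c ∪ Col) \ F = (Col ∪ {t | t ∈ ([] : List (Fin n × Fin n))}) \ F := by
      ext t
      simp [triPlaces, h]
    rw [← hFr]
    exact Reduces.of_iff (fun _ => rfl) fun y hy w hw => bumpRel_iff_eq h hy hw
  | @cons c d i l h _ ih =>
    have hCol' : ∀ t ∈ insert (i, d) Col, ¬ Tri (bumpLabel c d i) t.2 t.1 := by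
      rintro t (rfl | ht) htri
      exacts [h.not_tri_bumpLabel htri, hCol t ht (h.tri_of htri)]
    have hplaces : Col ∪ {t | t ∈ (i, d) :: l} = insert (i, d) Col ∪ {t | t ∈ l} := by
      ext t
      simp only [Set.mem_union, Set.mem_insert_iff, Set.mem_ofPred_eq, List.mem_cons]
      tauto
    rw [hplaces]
    exact h.reduces_bump hCol hF hy₀ (ih hCol' (h.bumpLabel_eq_of_mem hF))

end BumpChain

section Orbits
variable {n : ℕ} {K : Type}

/-- The matrices `A` and `B` have the same strictly lower triangular part. -/
def LowEq (A B : Matrix (Fin n) (Fin n) K) : Prop := ∀ a b : Fin n, b < a → A a b = B a b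

namespace LowEq
variable {A B C : Matrix (Fin n) (Fin n) K}

theorem refl (A : Matrix (Fin n) (Fin n) K) : LowEq A A := fun _ _ _ => rfl

theorem symm (h : LowEq A B) : LowEq B A := fun a b hab => (h a b hab).symm

theorem trans (h : LowEq A B) (h' : LowEq B C) : LowEq A C :=
  fun a b hab => (h a b hab).trans (h' a b hab)

end LowEq

variable [Field K]

theorem lowEq_lowerPart (A : Matrix (Fin n) (Fin n) K) : LowEq (lowerPart n K A) A := by
  intro a b hab
  simp [lowerPart, hab]

theorem mul_apply_self_of_isUpperTriangular {A B : Matrix (Fin n) (Fin n) K}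
    (hA : A.IsUpperTriangular) (hB : B.IsUpperTriangular) (i : Fin n) :
    (A * B) i i = A i i * B i i := by
  rw [Matrix.mul_apply]
  refine Finset.sum_eq_single i (fun l _ hl => ?_) (by simp)
  rcases lt_or_gt_of_ne hl with hl | hl
  · rw [hA hl, zero_mul]
  · rw [hB hl, mul_zero]

namespace IsUni
variable {g h : Matrix (Fin n) (Fin n) K}

theorem one : IsUni n K 1 :=
  ⟨fun i => Matrix.one_apply_eq i, fun _ _ hij => Matrix.one_apply_ne hij.ne'⟩

theorem isUpperTriangular (hg : IsUni n K g) : g.IsUpperTriangular := fun i j hij => hg.2 i j hij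

theorem mul (hg : IsUni n K g) (hh : IsUni n K h) : IsUni n K (g * h) := by
  refine ⟨fun i => ?_, fun i j hij => hg.isUpperTriangular.mul hh.isUpperTriangular hij⟩
  rw [mul_apply_self_of_isUpperTriangular hg.isUpperTriangular hh.isUpperTriangular, hg.1, hh.1,
    one_mul]

theorem isUnit_det (hg : IsUni n K g) : IsUnit g.det := by
  rw [Matrix.det_of_isUpperTriangular hg.isUpperTriangular,
    Finset.prod_eq_one fun i _ => hg.1 i]
  exact isUnit_one

theorem mul_inv (hg : IsUni n K g) : g * g⁻¹ = 1 := Matrix.mul_nonsing_inv g hg.isUnit_det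

theorem inv_mul (hg : IsUni n K g) : g⁻¹ * g = 1 := Matrix.nonsing_inv_mul g hg.isUnit_det

theorem inv (hg : IsUni n K g) : IsUni n K g⁻¹ := by
  have : Invertible g := g.invertibleOfIsUnitDet hg.isUnit_det
  have hinv : g⁻¹.IsUpperTriangular :=
    Matrix.blockTriangular_inv_of_blockTriangular hg.isUpperTriangular
  refine ⟨fun i => ?_, fun i j hij => hinv hij⟩
  rw [← one_mul (g⁻¹ i i), ← hg.1 i,
    ← mul_apply_self_of_isUpperTriangular hg.isUpperTriangular hinv, hg.mul_inv, hg.1,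
    Matrix.one_apply_eq]

end IsUni

namespace LowEq
variable {A B g : Matrix (Fin n) (Fin n) K}

theorem mul_left (hg : IsUni n K g) (h : LowEq A B) :
    LowEq (g * A) (g * B) := by
  intro a b hab
  simp only [Matrix.mul_apply]
  refine Finset.sum_congr rfl fun l _ => ?_
  rcases lt_or_ge l a with hl | hl
  · rw [hg.2 a l hl, zero_mul, zero_mul]
  · rw [h l b (lt_of_lt_of_le hab hl)]

theorem mul_right (hg : IsUni n K g) (h : LowEq A B) :
    LowEq (A * g) (B * g) := by
  intro a b hab
  simp only [Matrix.mul_apply]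
  refine Finset.sum_congr rfl fun l _ => ?_
  rcases lt_or_ge b l with hl | hl
  · rw [hg.2 l b hl, mul_zero, mul_zero]
  · rw [h a l (lt_of_le_of_lt hl hab)]

theorem inv_mul (hg : IsUni n K g) (h : LowEq (g * A) B) : LowEq A (g⁻¹ * B) := by
  simpa only [← Matrix.mul_assoc, hg.inv_mul, Matrix.one_mul] using h.mul_left hg.inv

theorem mul_inv (hg : IsUni n K g) (h : LowEq (A * g) B) : LowEq A (B * g⁻¹) := by
  simpa only [Matrix.mul_assoc, hg.mul_inv, Matrix.mul_one] using h.mul_right hg.inv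

theorem inv_mul_mul_inv (hg : IsUni n K g) (h : LowEq (g * A) (B * g)) :
    LowEq (g⁻¹ * B) (A * g⁻¹) := by
  have h' : LowEq (g⁻¹ * B * g) A := by simpa only [Matrix.mul_assoc] using (h.inv_mul hg).symm
  exact h'.mul_inv hg

end LowEq

/-- Conjugacy of strictly lower triangular parts under the unitriangular group. -/
def CoadjRel (A B : Matrix (Fin n) (Fin n) K) : Prop :=
  ∃ g, IsUni n K g ∧ LowEq (g * A) (B * g)

namespace CoadjRel
variable {A B C : Matrix (Fin n) (Fin n) K}

theorem symm (h : CoadjRel A B) : CoadjRel B A := by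
  obtain ⟨g, hg, h⟩ := h
  exact ⟨g⁻¹, hg.inv, h.inv_mul_mul_inv hg⟩

theorem trans (h : CoadjRel A B) (h' : CoadjRel B C) : CoadjRel A C := by
  obtain ⟨g, hg, h⟩ := h
  obtain ⟨g', hg', h'⟩ := h'
  refine ⟨g' * g, hg'.mul hg, ?_⟩
  rw [Matrix.mul_assoc, ← Matrix.mul_assoc C]
  refine (h.mul_left hg').trans ?_
  rw [← Matrix.mul_assoc]
  exact h'.mul_right hg

end CoadjRel

theorem matOf_vecOf (A : Matrix (Fin n) (Fin n) K) : LowEq (matOf n K (vecOf n K A)) A := by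
  intro a b hab
  have : IsPosRoot n ((a : ℕ) + 1, (b : ℕ) + 1) :=
    ⟨Nat.succ_pos b, Nat.succ_lt_succ hab, a.isLt⟩
  simp [matOf, this, vecOf]

theorem vecOf_eq_iff {A B : Matrix (Fin n) (Fin n) K} : vecOf n K A = vecOf n K B ↔ LowEq A B := by
  constructor
  · intro h
    exact (matOf_vecOf A).symm.trans (h ▸ matOf_vecOf B)
  · intro h
    funext γ
    obtain ⟨⟨i, j⟩, hj, hji, hin⟩ := γ
    refine h _ _ ?_
    simp only [Fin.lt_def] at *
    omega

theorem vecOf_matOf (v : PRoot n → K) : vecOf n K (matOf n K v) = v := by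
  funext γ
  obtain ⟨⟨i, j⟩, hj, hji, hin⟩ := γ
  simp only at hj hji hin
  have e1 : i - 1 + 1 = i := by omega
  have e2 : j - 1 + 1 = j := by omega
  have : IsPosRoot n (i, j) := ⟨hj, hji, hin⟩
  simp [vecOf, matOf, e1, e2, this]

theorem coadjPt_eq_iff {g : Matrix (Fin n) (Fin n) K} (hg : IsUni n K g) (v w : PRoot n → K) :
    coadjPt n K g v = w ↔ LowEq (g * matOf n K v) (matOf n K w * g) := by
  conv_lhs => rw [← vecOf_matOf w]
  rw [coadjPt, vecOf_eq_iff]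
  constructor
  · intro h
    have h' := ((lowEq_lowerPart _).symm.trans h).mul_right hg
    rwa [Matrix.mul_assoc _ g⁻¹, hg.inv_mul, Matrix.mul_one] at h'
  · intro h
    have h' := h.symm.mul_inv hg
    exact (lowEq_lowerPart _).trans h'.symm

theorem coadjPt_inv_coadjPt {g : Matrix (Fin n) (Fin n) K} (hg : IsUni n K g)
    (v : PRoot n → K) : coadjPt n K g⁻¹ (coadjPt n K g v) = v :=
  (coadjPt_eq_iff hg.inv _ _).mpr (((coadjPt_eq_iff hg _ _).mp rfl).inv_mul_mul_inv hg)

theorem coadjPt_coadjPt_inv {g : Matrix (Fin n) (Fin n) K} (hg : IsUni n K g)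
    (v : PRoot n → K) : coadjPt n K g (coadjPt n K g⁻¹ v) = v := by
  simpa only [Matrix.nonsing_inv_nonsing_inv g hg.isUnit_det] using coadjPt_inv_coadjPt hg.inv v

theorem coadjRel_iff (v w : PRoot n → K) :
    (∃ g, IsUni n K g ∧ coadjPt n K g v = w) ↔ CoadjRel (matOf n K v) (matOf n K w) :=
  exists_congr fun _ => and_congr_right fun hg => coadjPt_eq_iff hg v w

theorem mem_VDvar {D : Set (ℕ × ℕ)} {φ : ℕ × ℕ → K} {v : PRoot n → K} :
    v ∈ VDvar n K D φ ↔ ∃ g h : Matrix (Fin n) (Fin n) K, IsUni n K g ∧ IsUni n K h ∧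
      LowEq (matOf n K v) (g * XDphi n K D φ * h) := by
  constructor
  · rintro ⟨g, h, hg, hh, rfl⟩
    exact ⟨g, h, hg, hh, (matOf_vecOf _).trans (lowEq_lowerPart _)⟩
  · rintro ⟨g, h, hg, hh, he⟩
    refine ⟨g, h, hg, hh, ?_⟩
    rw [← vecOf_matOf v, vecOf_eq_iff]
    exact he.trans (lowEq_lowerPart _).symm

theorem coadjPt_mem_VDvar {D : Set (ℕ × ℕ)} {φ : ℕ × ℕ → K} {v : PRoot n → K}
    {g : Matrix (Fin n) (Fin n) K} (hg : IsUni n K g) (hv : v ∈ VDvar n K D φ) :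
    coadjPt n K g v ∈ VDvar n K D φ := by
  obtain ⟨a, b, ha, hb, h⟩ := mem_VDvar.mp hv
  refine mem_VDvar.mpr ⟨g * a, b * g⁻¹, hg.mul ha, hb.mul hg.inv, ?_⟩
  refine ((matOf_vecOf _).trans (lowEq_lowerPart _)).trans ?_
  have := (h.mul_left hg).mul_right hg.inv
  simpa only [Matrix.mul_assoc] using this

end Orbits

section Labels

variable {n : ℕ} {K : Type} [Field K] {c : Fin n → ℕ} {φ : Fin n → K}
  {b : Matrix (Fin n) (Fin n) K} {e m : Fin n}

/-- The labelling `c` records the column of the nonzero entry in each row of a strictly lower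
triangular matrix with at most one nonzero entry in each row and column; the zero rows get distinct
labels `≥ n`. -/
structure IsLabel (c : Fin n → ℕ) : Prop where
  inj : Function.Injective c
  lt : ∀ e, c e < n → c e < e

/-- The matrix with entry `φ e` in row `e` and column `c e`, and zeros elsewhere. -/
def labelMat (c : Fin n → ℕ) (φ : Fin n → K) : Matrix (Fin n) (Fin n) K :=
  fun e k => if c e = k then φ e else 0

theorem labelMat_mul_apply (b : Matrix (Fin n) (Fin n) K) {k : Fin n} (h : c e = k) (m : Fin n) :
    (labelMat c φ * b) e m = φ e * b k m := by
  rw [Matrix.mul_apply, Finset.sum_eq_single k]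
  · rw [labelMat, if_pos h]
  · intro l _ hl
    rw [labelMat, if_neg fun h' => hl (Fin.ext (h'.symm.trans h)), zero_mul]
  · simp

theorem le_of_labelMat_mul_ne_zero (hb : IsUni n K b) (h : (labelMat c φ * b) e m ≠ 0) :
    c e ≤ m := by
  rw [Matrix.mul_apply] at h
  obtain ⟨l, -, hl⟩ := Finset.exists_ne_zero_of_sum_ne_zero h
  have hcl : c e = l := (ite_ne_right_iff.mp (left_ne_zero_of_mul hl)).1
  rw [hcl]
  exact not_lt.mp fun hml => right_ne_zero_of_mul hl (hb.2 l m hml)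

theorem labelMat_mul_eq_zero (hb : IsUni n K b) (h : (m : ℕ) < c e) :
    (labelMat c φ * b) e m = 0 :=
  by_contra fun h0 => (le_of_labelMat_mul_ne_zero hb h0).not_gt h

theorem labelMat_mul_label (hb : IsUni n K b) (h : c e = m) : (labelMat c φ * b) e m = φ e := by
  rw [labelMat_mul_apply b h, hb.1, mul_one]

theorem labelMat_mul_congr_of_le {b' : Matrix (Fin n) (Fin n) K} (hb : IsUni n K b)
    (hb' : IsUni n K b') (h : m ≤ c e) : (labelMat c φ * b) e m = (labelMat c φ * b') e m := by
  rcases h.lt_or_eq with h | h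
  · rw [labelMat_mul_eq_zero hb h, labelMat_mul_eq_zero hb' h]
  · rw [labelMat_mul_label hb h.symm, labelMat_mul_label hb' h.symm]

end Labels

section SliceOrbits

open Matrix

variable {n : ℕ} {K : Type} [Field K] {c : Fin n → ℕ} {φ : Fin n → K} {k e m : Fin n}
  {a b g p : Matrix (Fin n) (Fin n) K}

theorem eq_zero_of_lowEq (hc : Function.Injective c) (hφ : ∀ e, φ e ≠ 0)
    (ha : IsUni n K a) (hb : IsUni n K b) (hg : IsUni n K g)
    (h : LowEq (g * (labelMat c φ * a)) (labelMat c φ * b * g)) (hke : k < e)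
    (hek : c e < k) (hc_lt : c e < c k) : g k e = 0 := by
  induction hm : c e using Nat.strong_induction_on generalizing e with
  | _ m ih =>
    obtain ⟨f, hf⟩ : ∃ f : Fin n, c e = f := ⟨⟨c e, hek.trans k.isLt⟩, rfl⟩
    have hlow := h k f (by omega)
    rw [Matrix.mul_assoc, labelMat_mul_eq_zero (hb.mul hg) (by omega), Matrix.mul_apply,
      Finset.sum_eq_single e, labelMat_mul_label ha hf] at hlow
    · exact (mul_eq_zero.mp hlow).resolve_right (hφ e)
    · intro l _ hl
      by_contra hne
      have hkl : k ≤ l := not_lt.mp fun hlk => left_ne_zero_of_mul hne (hg.2 k l hlk)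
      have hcl := le_of_labelMat_mul_ne_zero ha (right_ne_zero_of_mul hne)
      have hcle : c l ≠ c e := fun hcl => hl (hc hcl)
      have hkl : k ≠ l := by
        rintro rfl
        omega
      exact left_ne_zero_of_mul hne (ih (c l) (by omega) (by omega) (by omega) (by omega) rfl)
    · simp

/-- The entries of `g` at the places allowed by the pattern of `c`. -/
noncomputable def patPart (c : Fin n → ℕ) (g : Matrix (Fin n) (Fin n) K) :
    Matrix (Fin n) (Fin n) K := fun k e => if k = e ∨ c k < c e then g k e else 0

theorem isPat_patPart (hg : IsUni n K g) : IsPat c (patPart c g) := by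
  refine fun k => ⟨by rw [patPart, if_pos (Or.inl rfl), hg.1], fun l hl => ?_⟩
  obtain ⟨hkl, hne⟩ := ite_ne_right_iff.mp hl
  have hle : k ≤ l := not_lt.mp fun hlk => hne (hg.2 k l hlk)
  exact hkl.imp_right fun hc => ⟨lt_of_le_of_ne hle fun hkl => hc.ne (congrArg c hkl), hc⟩

theorem patPart_apply_of_le (hc : Function.Injective c) (hφ : ∀ e, φ e ≠ 0)
    (ha : IsUni n K a) (hb : IsUni n K b) (hg : IsUni n K g)
    (h : LowEq (g * (labelMat c φ * a)) (labelMat c φ * b * g)) (hek : c e < k) :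
    patPart c g k e = g k e := by
  refine ite_eq_left_iff.mpr fun hn => ?_
  push Not at hn
  rcases lt_or_ge k e with hke | hek'
  · have hne : c k ≠ c e := fun hcke => hn.1 (hc hcke)
    exact (eq_zero_of_lowEq hc hφ ha hb hg h hke hek (by omega)).symm
  · exact (hg.2 k e (lt_of_le_of_ne hek' (Ne.symm hn.1))).symm

theorem maskMat_uncurry_mul {Y : Matrix (Fin n) (Fin n) K} {x : K}
    (h : Y e k ≠ 0 → x ≠ 0 → Tri c k e) : maskMat c (Function.uncurry Y) e k * x = Y e k * x := by
  by_cases ht : Tri c k e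
  · rw [maskMat_apply ht]
    rfl
  · have h0 : Y e k * x = 0 :=
      by_contra fun hne => ht (h (left_ne_zero_of_mul hne) (right_ne_zero_of_mul hne))
    rw [h0, maskMat, if_neg ht, zero_mul]

theorem mul_maskMat_uncurry {Y : Matrix (Fin n) (Fin n) K} {x : K}
    (h : Y e k ≠ 0 → x ≠ 0 → Tri c k e) : x * maskMat c (Function.uncurry Y) e k = x * Y e k := by
  rw [mul_comm, maskMat_uncurry_mul h, mul_comm]

theorem maskMat_mul_apply (hb : IsUni n K b) (hp : IsPat c p) (ht : Tri c k e) :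
    (maskMat c (Function.uncurry (labelMat c φ * b)) * p) e k = (labelMat c φ * b * p) e k := by
  rw [Matrix.mul_apply, Matrix.mul_apply]
  refine Finset.sum_congr rfl fun l _ => maskMat_uncurry_mul fun hbl hpl => ?_
  have hel := le_of_labelMat_mul_ne_zero hb hbl
  have hlk := (hp l).le hpl
  exact ⟨hlk.1.trans_lt ht.1, hlk.2.trans_lt ht.2.1, hel⟩

theorem mul_maskMat_apply (ha : IsUni n K a) (hp : IsPat c p) (ht : Tri c k e) :
    (p * maskMat c (Function.uncurry (labelMat c φ * a))) e k = (p * (labelMat c φ * a)) e k := by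
  rw [Matrix.mul_apply, Matrix.mul_apply]
  refine Finset.sum_congr rfl fun l _ => mul_maskMat_uncurry fun hal hpl => ?_
  have hel := (hp e).le hpl
  exact ⟨ht.1.trans_le hel.1, ht.2.1.trans_le hel.2, le_of_labelMat_mul_ne_zero ha hal⟩

theorem intertwines_patPart (hc : Function.Injective c) (hφ : ∀ e, φ e ≠ 0)
    (ha : IsUni n K a) (hb : IsUni n K b) (hg : IsUni n K g)
    (h : LowEq (g * (labelMat c φ * a)) (labelMat c φ * b * g)) :
    Intertwines c (maskMat c (Function.uncurry (labelMat c φ * a)))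
      (maskMat c (Function.uncurry (labelMat c φ * b))) (patPart c g) := by
  intro k e ht
  have hpat : ∀ {k e : Fin n}, c e < k → patPart c g k e = g k e :=
    fun hek => patPart_apply_of_le hc hφ ha hb hg h hek
  have hlow := h e k ht.1
  rw [maskMat_mul_apply hb (isPat_patPart hg) ht, mul_maskMat_apply ha (isPat_patPart hg) ht]
  rw [Matrix.mul_apply, Matrix.mul_apply] at hlow ⊢
  convert hlow.symm using 1
  · refine Finset.sum_congr rfl fun l _ => mul_eq_mul_left_iff.mpr ?_
    refine or_iff_not_imp_right.mpr fun hne => hpat ?_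
    exact ht.2.1.trans_le (le_of_labelMat_mul_ne_zero hb hne)
  · refine Finset.sum_congr rfl fun l _ => mul_eq_mul_right_iff.mpr ?_
    refine or_iff_not_imp_right.mpr fun hne => hpat ?_
    exact (le_of_labelMat_mul_ne_zero ha hne).trans_lt ht.1

theorem exists_mulVec_labelMat_mul (hc : Function.Injective c) (hφ : ∀ e, φ e ≠ 0)
    (hb : IsUni n K b) {P : Fin n → Prop} (hP : ∀ e, P e → c e < n) (s r : Fin n → K) :
    ∃ x : Fin n → K, (∀ e, P e → ((labelMat c φ * b) *ᵥ x) e = s e) ∧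
      ∀ k : Fin n, (∀ e, c e = k → ¬ P e) → x k = r k := by
  let Q : Fin n → Prop := fun k => ∃ e, c e = k ∧ P e
  let L : Matrix (Fin n) (Fin n) K := fun k => if Q k then b k else Pi.single k 1
  let t : Fin n → K := fun k => if hk : Q k then s hk.choose / φ hk.choose else r k
  have hL : IsUni n K L := by
    refine ⟨fun i => ?_, fun i j hij => ?_⟩
    · by_cases hi : Q i <;> simp [L, hi, hb.1]
    · by_cases hi : Q i <;> simp [L, hi, hb.2 i j hij, hij.ne]
  have hLx : L *ᵥ (L⁻¹ *ᵥ t) = t := by rw [mulVec_mulVec, hL.mul_inv, one_mulVec]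
  refine ⟨L⁻¹ *ᵥ t, fun e he => ?_, fun k hk => ?_⟩
  · have hQ : Q ⟨c e, hP e he⟩ := ⟨e, rfl, he⟩
    have hch : hQ.choose = e := hc hQ.choose_spec.1
    have hLk : b ⟨c e, hP e he⟩ ⬝ᵥ (L⁻¹ *ᵥ t) = s e / φ e := by
      simpa [L, t, mulVec, hQ, hch] using congrFun hLx ⟨c e, hP e he⟩
    have hrow : (labelMat c φ * b) e = φ e • b ⟨c e, hP e he⟩ := funext (labelMat_mul_apply b rfl)
    rw [mulVec, hrow, smul_dotProduct, hLk, smul_eq_mul, mul_div_cancel₀ _ (hφ e)]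
  · have hQ : ¬ Q k := fun ⟨e, hek, he⟩ => hk e hek he
    simpa [L, t, mulVec, hQ] using congrFun hLx k

theorem exists_isUni_of_isPat (hc : Function.Injective c) (hφ : ∀ e, φ e ≠ 0)
    (hb : IsUni n K b) (hp : IsPat c p) (C : Matrix (Fin n) (Fin n) K) :
    ∃ g, IsUni n K g ∧
      (∀ e m : Fin n, c e < m → m < e → c e < c m → (labelMat c φ * b * g) e m = C e m) ∧
      ∀ k m : Fin n, (∀ e, c e = k → ¬ (c e < m ∧ m < e ∧ c e < c m)) → g k m = p k m := by
  choose x hx hx' using fun m : Fin n => exists_mulVec_labelMat_mul hc hφ hb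
    (P := fun e => c e < m ∧ m < e ∧ c e < c m) (fun e he => he.1.trans m.isLt)
    (fun e => C e m) (fun k => p k m)
  have hle : ∀ k m : Fin n, m ≤ k → x m k = p k m := fun k m hmk =>
    hx' m k fun e hek he => he.1.not_ge (hek ▸ hmk)
  refine ⟨fun k m => x m k, ⟨fun m => (hle m m le_rfl).trans (hp m).1, fun k m hmk => ?_⟩,
    fun e m hem hme hcem => hx m e ⟨hem, hme, hcem⟩, fun k m => hx' m k⟩
  exact (hle k m hmk.le).trans (by_contra fun hne => ((hp k).le hne).1.not_gt hmk)

theorem mul_labelMat_mul_apply_of_le (ha : IsUni n K a) (hp : IsPat c p) (h : m ≤ c e) :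
    (p * (labelMat c φ * a)) e m = (labelMat c φ * a) e m := by
  rw [Matrix.mul_apply, Finset.sum_eq_single e, (hp e).1, one_mul]
  · intro l _ hl
    by_contra hne
    have hel := ((hp e).2 l (left_ne_zero_of_mul hne)).resolve_left hl.symm
    have hlm := le_of_labelMat_mul_ne_zero ha (right_ne_zero_of_mul hne)
    omega
  · simp

theorem exists_lowEq_of_isPat (hc : Function.Injective c) (hφ : ∀ e, φ e ≠ 0)
    (ha : IsUni n K a) (hb : IsUni n K b) (hp : IsPat c p)
    (h : Intertwines c (maskMat c (Function.uncurry (labelMat c φ * a)))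
      (maskMat c (Function.uncurry (labelMat c φ * b))) p) :
    ∃ g, IsUni n K g ∧ LowEq (g * (labelMat c φ * a)) (labelMat c φ * b * g) := by
  obtain ⟨g, hg, hgC, hgp⟩ := exists_isUni_of_isPat hc hφ hb hp (p * (labelMat c φ * a))
  refine ⟨g, hg, fun e m hme => ?_⟩
  have hleft : (g * (labelMat c φ * a)) e m = (p * (labelMat c φ * a)) e m := by
    rw [Matrix.mul_apply, Matrix.mul_apply]
    refine Finset.sum_congr rfl fun l _ => mul_eq_mul_right_iff.mpr ?_
    refine or_iff_not_imp_right.mpr fun hne => hgp e l ?_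
    have hlm := le_of_labelMat_mul_ne_zero ha hne
    rintro f hf ⟨-, -, hfl⟩
    omega
  rw [hleft]
  rcases le_or_gt (m : ℕ) (c e) with hmc | hmc
  · rw [mul_labelMat_mul_apply_of_le ha hp hmc, Matrix.mul_assoc]
    exact labelMat_mul_congr_of_le ha (hb.mul hg) hmc
  rcases lt_or_gt_of_ne (hc.ne hme.ne) with hcm | hcm
  · have ht : Tri c m e := ⟨hme, hcm, hmc.le⟩
    rw [← mul_maskMat_apply ha hp ht, ← h m e ht, maskMat_mul_apply hb hp ht, Matrix.mul_apply,
      Matrix.mul_apply]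
    refine Finset.sum_congr rfl fun l _ => mul_eq_mul_left_iff.mpr ?_
    refine or_iff_not_imp_right.mpr fun hne => (hgp l m ?_).symm
    have hel := le_of_labelMat_mul_ne_zero hb hne
    rintro f hf ⟨-, -, hfm⟩
    omega
  · exact (hgC e m hmc hme hcm).symm

end SliceOrbits

section Factorization

variable {n : ℕ} {K σ : Type} [Field K] {c : Fin n → ℕ} {φ : Fin n → K} {i j k : Fin n}
  {t : K} {A G H M : Matrix (Fin n) (Fin n) K}

/-- The lower triangular part of `A` is that of a matrix in the double coset of `labelMat c φ`. -/
def InCell (c : Fin n → ℕ) (φ : Fin n → K) (A : Matrix (Fin n) (Fin n) K) : Prop :=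
  ∃ g h, IsUni n K g ∧ IsUni n K h ∧ LowEq A (g * labelMat c φ * h)

/-- The lower triangular part of `A` is that of a matrix in the right coset of `labelMat c φ`. -/
def InSlice (c : Fin n → ℕ) (φ : Fin n → K) (A : Matrix (Fin n) (Fin n) K) : Prop :=
  ∃ a, IsUni n K a ∧ LowEq A (labelMat c φ * a)

theorem InSlice.inCell (h : InSlice c φ A) : InCell c φ A := by
  obtain ⟨a, ha, h⟩ := h
  exact ⟨1, a, IsUni.one, ha, by rwa [Matrix.one_mul]⟩

theorem InCell.of_lowEq (hG : IsUni n K G) (hH : IsUni n K H) (h : LowEq A (G * M * H))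
    (hA : InCell c φ A) : InCell c φ M := by
  obtain ⟨g, h', hg, hh', hgh⟩ := hA
  refine ⟨G⁻¹ * g, h' * H⁻¹, hG.inv.mul hg, hh'.mul hH.inv, ?_⟩
  rw [Matrix.mul_assoc] at h
  simpa only [Matrix.mul_assoc] using ((h.symm.trans hgh).inv_mul hG).mul_inv hH

theorem InSlice.of_lowEq (hH : IsUni n K H) (h : LowEq A (M * H))
    (hA : InSlice c φ A) : InSlice c φ M := by
  obtain ⟨a, ha, hla⟩ := hA
  refine ⟨a * H⁻¹, ha.mul hH.inv, ?_⟩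
  simpa only [Matrix.mul_assoc] using (h.symm.trans hla).mul_inv hH

/-- The lower triangular part of `M` agrees with `labelMat c φ` in the first `m` columns and in the
rows with label less than `m`. -/
def Cleared (c : Fin n → ℕ) (φ : Fin n → K) (m : ℕ) (M : Matrix (Fin n) (Fin n) K) : Prop :=
  ∀ a b : Fin n, b < a → ((b : ℕ) < m ∨ c a < m) → M a b = labelMat c φ a b

theorem Cleared.apply_eq_mul {g h : Matrix (Fin n) (Fin n) K} (hM : Cleared c φ j M)
    (hh : IsUni n K h) (hgh : LowEq M (g * labelMat c φ * h)) (hk : j < k) (hck : (j : ℕ) ≤ c k) :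
    M k j = (g * labelMat c φ) k j := by
  have hMh : LowEq (M * h⁻¹) (g * labelMat c φ) := by
    have := hgh.mul_right hh.inv
    rwa [Matrix.mul_assoc _ h, hh.mul_inv, Matrix.mul_one] at this
  rw [← hMh k j hk, Matrix.mul_apply, Finset.sum_eq_single j, hh.inv.1, mul_one]
  · intro l _ hl
    rcases lt_or_gt_of_ne hl with hl | hl
    · rw [hM k l (hl.trans hk) (Or.inl hl), labelMat, if_neg (by omega), zero_mul]
    · rw [hh.inv.2 l j hl, mul_zero]
  · simp

theorem mul_labelMat_apply (hc : Function.Injective c) (g : Matrix (Fin n) (Fin n) K)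
    (hij : c i = j) : (g * labelMat c φ) k j = g k i * φ i := by
  rw [Matrix.mul_apply, Finset.sum_eq_single i]
  · rw [labelMat, if_pos hij]
  · intro l _ hl
    rw [labelMat, if_neg fun h => hl (hc (h.trans hij.symm)), mul_zero]
  · simp

theorem InCell.apply_pivot (hc : Function.Injective c) (hM : InCell c φ M) (hcl : Cleared c φ j M)
    (hij : c i = j) (hji : j < i) : M i j = φ i := by
  obtain ⟨g, h, hg, hh, hgh⟩ := hM
  rw [hcl.apply_eq_mul hh hgh hji hij.ge, mul_labelMat_apply hc g hij, hg.1, one_mul]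

theorem InCell.apply_below_pivot (hc : Function.Injective c) (hM : InCell c φ M)
    (hcl : Cleared c φ j M) (hij : c i = j) (hji : j < i) (hik : i < k) : M k j = 0 := by
  obtain ⟨g, h, hg, hh, hgh⟩ := hM
  rcases lt_or_ge (c k) j with hck | hck
  · rw [hcl k j (hji.trans hik) (Or.inr hck), labelMat, if_neg hck.ne]
  · rw [hcl.apply_eq_mul hh hgh (hji.trans hik) hck, mul_labelMat_apply hc g hij, hg.2 k i hik,
      zero_mul]

theorem InCell.cleared_succ (hM : InCell c φ M) (hcl : Cleared c φ j M) (hj : ∀ i, c i ≠ j) :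
    Cleared c φ (j + 1) M := by
  intro a b hab hm
  by_cases hold : (b : ℕ) < j ∨ c a < j
  · exact hcl a b hab hold
  push Not at hold
  have hja := hj a
  obtain rfl : b = j := Fin.ext (by omega)
  obtain ⟨g, h, -, hh, hgh⟩ := hM
  rw [hcl.apply_eq_mul hh hgh hab hold.2, Matrix.mul_apply, labelMat, if_neg hja]
  exact Finset.sum_eq_zero fun l _ => by rw [labelMat, if_neg (hj l), mul_zero]

/-- The matrix whose only nonzero column is column `i`, with the entries of column `j` of `M`
strictly between rows `j` and `i`, divided by `t`. -/
def colElim (i j : Fin n) (t : K) (M : Matrix (Fin n) (Fin n) K) : Matrix (Fin n) (Fin n) K :=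
  fun k l => if l = i ∧ j < k ∧ k < i then M k j / t else 0

/-- The matrix whose only nonzero row is row `j`, with the entries of row `i` of `M` to the right of
column `j`, divided by `t`. -/
def rowElim (i j : Fin n) (t : K) (M : Matrix (Fin n) (Fin n) K) : Matrix (Fin n) (Fin n) K :=
  fun k l => if k = j ∧ j < l then M i l / t else 0

theorem colElim_mul (a b : Fin n) :
    (colElim i j t M * A) a b = if j < a ∧ a < i then M a j / t * A i b else 0 := by
  rw [Matrix.mul_apply, Finset.sum_eq_single i] <;> simp +contextual [colElim]

theorem mul_rowElim (a b : Fin n) :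
    (A * rowElim i j t M) a b = if j < b then A a j * (M i b / t) else 0 := by
  rw [Matrix.mul_apply, Finset.sum_eq_single j] <;> simp +contextual [rowElim]

theorem colElim_mul_self : colElim i j t M * colElim i j t M = 0 := by
  ext a b
  simp [colElim_mul, colElim]

theorem rowElim_mul_self : rowElim i j t M * rowElim i j t M = 0 := by
  ext a b
  simp [mul_rowElim, rowElim]

theorem isUni_one_add {E : Matrix (Fin n) (Fin n) K} (h : ∀ a b, b ≤ a → E a b = 0) :
    IsUni n K (1 + E) := by
  refine ⟨fun i => by simp [h i i le_rfl], fun i j hij => ?_⟩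
  simp [Matrix.one_apply_ne hij.ne', h i j hij.le]

theorem isUni_one_add_colElim : IsUni n K (1 + colElim i j t M) :=
  isUni_one_add fun _ _ hab => if_neg fun h => (h.1 ▸ hab).not_gt h.2.2

theorem isUni_one_add_rowElim : IsUni n K (1 + rowElim i j t M) :=
  isUni_one_add fun _ _ hab => if_neg fun h => (h.1 ▸ hab).not_gt h.2

/-- The result of clearing column `j` above, and row `i` to the right of, the pivot `(i, j)`. -/
def elimMat (i j : Fin n) (t : K) (M : Matrix (Fin n) (Fin n) K) : Matrix (Fin n) (Fin n) K :=
  (1 - colElim i j t M) * M * (1 - rowElim i j t M)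

theorem mul_elimMat_mul :
    (1 + colElim i j t M) * elimMat i j t M * (1 + rowElim i j t M) = M := by
  have hcol : (1 + colElim i j t M) * (1 - colElim i j t M) = 1 := by
    rw [add_mul, mul_sub, mul_sub, colElim_mul_self]
    simp
  have hrow : (1 - rowElim i j t M) * (1 + rowElim i j t M) = 1 := by
    rw [sub_mul, mul_add, mul_add, rowElim_mul_self]
    simp
  rw [elimMat, Matrix.mul_assoc, Matrix.mul_assoc, hrow, Matrix.mul_one, ← Matrix.mul_assoc, hcol,
    Matrix.one_mul]

theorem one_sub_colElim_mul_apply (a b : Fin n) : ((1 - colElim i j t M) * M) a b =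
    M a b - if j < a ∧ a < i then M a j / t * M i b else 0 := by
  rw [sub_mul, Matrix.one_mul, Matrix.sub_apply, colElim_mul]

theorem elimMat_apply_of_le {b : Fin n} (hbj : b ≤ j) (a : Fin n) : elimMat i j t M a b =
    M a b - if j < a ∧ a < i then M a j / t * M i b else 0 := by
  rw [elimMat, mul_sub, Matrix.mul_one, Matrix.sub_apply, mul_rowElim, if_neg hbj.not_gt, sub_zero,
    one_sub_colElim_mul_apply]

theorem elimMat_apply_of_lt (ht : t ≠ 0) (hij : M i j = t) (hkj : ∀ k, i < k → M k j = 0)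
    {a b : Fin n} (hja : j < a) (hjb : j < b) : elimMat i j t M a b =
    M a b - (if a < i then M a j / t * M i b else 0) - if a = i then M i b else 0 := by
  have hj : ((1 - colElim i j t M) * M) a j = if a = i then t else 0 := by
    rw [one_sub_colElim_mul_apply]
    rcases lt_trichotomy a i with h | rfl | h
    · simp [h, h.ne, hja, hij, ht]
    · simp [hij]
    · simp [hkj a h, h.ne']
  rw [elimMat, mul_sub, Matrix.mul_one, Matrix.sub_apply, mul_rowElim, if_pos hjb, hj,
    one_sub_colElim_mul_apply]
  simp [hja, mul_div_cancel₀ _ ht]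

theorem Cleared.elimMat (hc : IsLabel c) (hφ : φ i ≠ 0) (hM : InCell c φ M)
    (hcl : Cleared c φ j M) (hij : c i = j) :
    Cleared c φ (j + 1) (elimMat i j (φ i) M) := by
  have hji : j < i := Fin.lt_def.mpr (hij ▸ hc.lt i (hij ▸ j.isLt))
  have hpiv := hM.apply_pivot hc.inj hcl hij hji
  have hbelow : ∀ k, i < k → M k j = 0 := fun k => hM.apply_below_pivot hc.inj hcl hij hji
  have hci : ∀ {a}, a ≠ i → c a ≠ j := fun hai hca => hai (hc.inj (hca.trans hij.symm))
  intro a b hab hm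
  rcases lt_trichotomy b j with hbj | rfl | hjb
  · have hib : M i b = 0 := by
      rw [hcl i b (hbj.trans hji) (Or.inl hbj), labelMat, if_neg (by omega)]
    rw [elimMat_apply_of_le hbj.le, hib, mul_zero, ite_self, sub_zero, hcl a b hab (Or.inl hbj)]
  · rw [elimMat_apply_of_le le_rfl, labelMat, hpiv, div_mul_cancel₀ _ hφ]
    rcases lt_trichotomy a i with h | rfl | h
    · simp [hab, h, hci h.ne]
    · simp [hpiv, hij]
    · simp [hbelow a h, hci h.ne']
  · rw [elimMat_apply_of_lt hφ hpiv hbelow (hjb.trans hab) hjb]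
    rcases eq_or_ne a i with rfl | hai
    · have hjb' : (j : ℕ) ≠ b := Fin.val_ne_of_ne hjb.ne
      simp [labelMat, hij, hjb']
    · have hca : c a < j := lt_of_le_of_ne (by omega) (hci hai)
      have haj : M a j = 0 := by
        rw [hcl a j (hjb.trans hab) (Or.inr hca), labelMat, if_neg hca.ne]
      simp [haj, hai, hcl a b hab (Or.inr hca)]

/-- A matrix-valued function with regular entries. -/
def MatReg (A : (σ → K) → Matrix (Fin n) (Fin n) K) : Prop :=
  ∀ a b, RegOn Set.univ fun v => A v a b

namespace MatReg
variable {A B M : (σ → K) → Matrix (Fin n) (Fin n) K}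

theorem const (B : Matrix (Fin n) (Fin n) K) : MatReg fun _ : σ → K => B :=
  fun a b => RegOn.const (B a b)

theorem mul (hA : MatReg A) (hB : MatReg B) : MatReg fun v => A v * B v := fun a b =>
  (RegOn.sum Finset.univ fun l _ => (hA a l).mul (hB l b)).congr fun _ _ => Matrix.mul_apply

theorem add (hA : MatReg A) (hB : MatReg B) : MatReg fun v => A v + B v :=
  fun a b => (hA a b).add (hB a b)

theorem sub (hA : MatReg A) (hB : MatReg B) : MatReg fun v => A v - B v :=
  fun a b => (hA a b).sub (hB a b)

theorem colElim (hM : MatReg M) (ht : t ≠ 0) : MatReg fun v => colElim i j t (M v) :=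
  fun k _ => RegOn.ite _ (fun _ => (hM k j).div (RegOn.const t) fun _ _ => ht)
    fun _ => RegOn.const 0

theorem rowElim (hM : MatReg M) (ht : t ≠ 0) : MatReg fun v => rowElim i j t (M v) :=
  fun _ l => RegOn.ite _ (fun _ => (hM i l).div (RegOn.const t) fun _ _ => ht)
    fun _ => RegOn.const 0

theorem elimMat (hM : MatReg M) (ht : t ≠ 0) : MatReg fun v => elimMat i j t (M v) :=
  (((const 1).sub (hM.colElim ht)).mul hM).mul ((const 1).sub (hM.rowElim ht))

end MatReg

theorem InSlice.colElim_eq_zero (hc : IsLabel c) (hM : InSlice c φ M) (hcl : Cleared c φ j M)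
    (hij : c i = j) : colElim i j t M = 0 := by
  ext k l
  refine ite_eq_right_iff.mpr fun ⟨_, hjk, hki⟩ => ?_
  have hne : c k ≠ j := fun hck => hki.ne (hc.inj (hck.trans hij.symm))
  have hkj : M k j = 0 := by
    rcases lt_or_gt_of_ne hne with hlt | hgt
    · rw [hcl k j hjk (Or.inr hlt), labelMat, if_neg hne]
    · obtain ⟨a, ha, h⟩ := hM
      rw [h k j hjk, labelMat_mul_eq_zero ha hgt]
  rw [hkj, zero_div]

/-- The state of the elimination of the entries of `A v` after `m` columns: `A = G * M * H` with `M`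
cleared up to `m`. The left factor is trivial on the slice. -/
structure IsFactorization (c : Fin n → ℕ) (φ : Fin n → K)
    (A : (σ → K) → Matrix (Fin n) (Fin n) K) (m : ℕ)
    (G M H : (σ → K) → Matrix (Fin n) (Fin n) K) : Prop where
  reg_left : MatReg G
  reg_mid : MatReg M
  reg_right : MatReg H
  isUni_left : ∀ v, IsUni n K (G v)
  isUni_right : ∀ v, IsUni n K (H v)
  eq : ∀ v, A v = G v * M v * H v
  cleared : ∀ v, InCell c φ (A v) → Cleared c φ m (M v)
  left_eq_one : ∀ v, InSlice c φ (A v) → G v = 1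

namespace IsFactorization
variable {A G M H : (σ → K) → Matrix (Fin n) (Fin n) K} {m : ℕ}

theorem zero (hA : MatReg A) : IsFactorization c φ A 0 (fun _ => 1) A fun _ => 1 where
  reg_left := .const 1
  reg_mid := hA
  reg_right := .const 1
  isUni_left _ := .one
  isUni_right _ := .one
  eq _ := by rw [Matrix.one_mul, Matrix.mul_one]
  cleared _ _ _ _ _ hm := by omega
  left_eq_one _ _ := rfl

theorem lowEq (h : IsFactorization c φ A m G M H) (v : σ → K) :
    LowEq (A v) (G v * M v * H v) := h.eq v ▸ LowEq.refl _

theorem inCell (h : IsFactorization c φ A m G M H) {v : σ → K} (hv : InCell c φ (A v)) :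
    InCell c φ (M v) := hv.of_lowEq (h.isUni_left v) (h.isUni_right v) (h.lowEq v)

theorem inSlice (h : IsFactorization c φ A m G M H) {v : σ → K} (hv : InSlice c φ (A v)) :
    InSlice c φ (M v) := by
  have hA := h.lowEq v
  rw [h.left_eq_one v hv, Matrix.one_mul] at hA
  exact hv.of_lowEq (h.isUni_right v) hA

theorem succ_of_forall_ne (h : IsFactorization c φ A j G M H) (hj : ∀ i, c i ≠ j) :
    IsFactorization c φ A (j + 1) G M H :=
  { h with cleared := fun v hv => (h.inCell hv).cleared_succ (h.cleared v hv) hj }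

theorem succ (h : IsFactorization c φ A j G M H) (hc : IsLabel c) (hφ : φ i ≠ 0) (hij : c i = j) :
    IsFactorization c φ A (j + 1) (fun v => G v * (1 + colElim i j (φ i) (M v)))
      (fun v => elimMat i j (φ i) (M v)) (fun v => (1 + rowElim i j (φ i) (M v)) * H v) where
  reg_left := h.reg_left.mul ((MatReg.const 1).add (h.reg_mid.colElim hφ))
  reg_mid := h.reg_mid.elimMat hφ
  reg_right := ((MatReg.const 1).add (h.reg_mid.rowElim hφ)).mul h.reg_right
  isUni_left v := (h.isUni_left v).mul isUni_one_add_colElim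
  isUni_right v := isUni_one_add_rowElim.mul (h.isUni_right v)
  eq v := by
    rw [h.eq]
    nth_rw 1 [← mul_elimMat_mul (i := i) (j := j) (t := φ i) (M := M v)]
    simp only [Matrix.mul_assoc]
  cleared v hv := (h.cleared v hv).elimMat hc hφ (h.inCell hv) hij
  left_eq_one v hv := by
    rw [h.left_eq_one v hv, (h.inSlice hv).colElim_eq_zero hc (h.cleared v hv.inCell) hij,
      add_zero, Matrix.one_mul]

end IsFactorization

theorem exists_isFactorization (hc : IsLabel c) (hφ : ∀ e, φ e ≠ 0)
    {A : (σ → K) → Matrix (Fin n) (Fin n) K} (hA : MatReg A) {m : ℕ} (hm : m ≤ n) :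
    ∃ G M H, IsFactorization c φ A m G M H := by
  induction m with
  | zero => exact ⟨_, _, _, .zero hA⟩
  | succ m ih =>
    obtain ⟨G, M, H, h⟩ := ih (Nat.le_of_succ_le hm)
    let j : Fin n := ⟨m, hm⟩
    by_cases hj : ∃ i, c i = j
    · obtain ⟨i, hij⟩ := hj
      exact ⟨_, _, _, IsFactorization.succ (j := j) h hc (hφ i) hij⟩
    · exact ⟨_, _, _, IsFactorization.succ_of_forall_ne (j := j) h (not_exists.mp hj)⟩

theorem IsFactorization.lowEq_labelMat {A G M H : (σ → K) → Matrix (Fin n) (Fin n) K}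
    (h : IsFactorization c φ A n G M H) {v : σ → K} (hv : InCell c φ (A v)) :
    LowEq (A v) (G v * labelMat c φ * H v) := by
  have hM : LowEq (M v) (labelMat c φ) := fun a b hab => h.cleared v hv a b hab (Or.inl b.isLt)
  exact (h.lowEq v).trans ((hM.mul_left (h.isUni_left v)).mul_right (h.isUni_right v))

end Factorization

section SliceReduction
open MvPolynomial

variable {n : ℕ} {K σ : Type} [Field K] {c : Fin n → ℕ} {φ : Fin n → K}

/-- The places of the nonzero entries of `labelMat c φ`. -/
def labelPlaces (c : Fin n → ℕ) : Set (Fin n × Fin n) := {t | c t.1 = t.2}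

/-- The places of the slice `labelMat c φ * UT(n, K)` whose entries are free and matter for the
coadjoint orbit. -/
def freePlaces (c : Fin n → ℕ) : Set (Fin n × Fin n) := triPlaces c \ labelPlaces c

/-- The coordinates of `labelMat c φ * a` at the free places, and of `labelMat c φ` elsewhere. -/
noncomputable def slicePt (c : Fin n → ℕ) (φ : Fin n → K) (a : Matrix (Fin n) (Fin n) K) :
    Fin n × Fin n → K := fun t =>
  if t ∈ freePlaces c then (labelMat c φ * a) t.1 t.2 else labelMat c φ t.1 t.2

/-- The unitriangular matrix whose product with `labelMat c φ` has entries `p` at the free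
places. -/
noncomputable def sliceMat (c : Fin n → ℕ) (φ : Fin n → K) (p : Fin n × Fin n → K) :
    Matrix (Fin n) (Fin n) K :=
  1 + Matrix.of fun k d : Fin n => ∑ e,
    if c e = k ∧ (e, d) ∈ freePlaces c then p (e, d) / φ e else 0

section slice
variable {a b : Matrix (Fin n) (Fin n) K} {p : Fin n × Fin n → K}

theorem isUni_sliceMat : IsUni n K (sliceMat c φ p) := by
  refine isUni_one_add fun k d hdk => ?_
  rw [Matrix.of_apply]
  refine Finset.sum_eq_zero fun e _ => if_neg ?_
  rintro ⟨hek, ⟨_, _, hd⟩, hne⟩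
  exact hne (le_antisymm hd (hek ▸ hdk))

theorem labelMat_mul_sliceMat (hc : Function.Injective c) (hφ : ∀ e, φ e ≠ 0) {e d : Fin n}
    (h : (e, d) ∈ freePlaces c) : (labelMat c φ * sliceMat c φ p) e d = p (e, d) := by
  have hlt : c e < d := lt_of_le_of_ne h.1.2.2 h.2
  let k : Fin n := ⟨c e, hlt.trans d.isLt⟩
  have hkd : k ≠ d := Fin.ne_of_lt hlt
  have hsum : sliceMat c φ p k d = p (e, d) / φ e := by
    rw [sliceMat, Matrix.add_apply, Matrix.one_apply_ne hkd, zero_add, Matrix.of_apply,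
      Finset.sum_eq_single e, if_pos ⟨rfl, h⟩]
    · exact fun e' _ he' => if_neg fun h' => he' (hc h'.1)
    · simp
  rw [labelMat_mul_apply (c := c) (k := k) _ rfl, hsum, mul_div_cancel₀ _ (hφ e)]

theorem slicePt_eq_of_notMem {t : Fin n × Fin n} (ht : t ∉ freePlaces c) :
    slicePt c φ a t = labelMat c φ t.1 t.2 := if_neg ht

theorem slicePt_sliceMat (hc : Function.Injective c) (hφ : ∀ e, φ e ≠ 0)
    (hp : ∀ t ∉ freePlaces c, p t = labelMat c φ t.1 t.2) :
    slicePt c φ (sliceMat c φ p) = p := by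
  funext t
  by_cases ht : t ∈ freePlaces c
  · rw [slicePt, if_pos ht, labelMat_mul_sliceMat hc hφ ht]
  · rw [slicePt_eq_of_notMem ht, hp t ht]

theorem slicePt_congr (h : LowEq (labelMat c φ * a) (labelMat c φ * b)) :
    slicePt c φ a = slicePt c φ b := by
  funext t
  exact ite_congr rfl (fun ht => h t.1 t.2 ht.1.1) fun _ => rfl

theorem maskMat_slicePt (ha : IsUni n K a) :
    maskMat c (slicePt c φ a) = maskMat c (Function.uncurry (labelMat c φ * a)) := by
  ext e k
  refine ite_congr rfl (fun ht => ?_) fun _ => rfl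
  by_cases hek : c e = k
  · rw [slicePt_eq_of_notMem fun hf => hf.2 hek]
    exact (if_pos hek).trans (labelMat_mul_label ha hek).symm
  · exact if_pos ⟨ht, hek⟩

theorem coadjRel_iff_bumpRel (hc : Function.Injective c) (hφ : ∀ e, φ e ≠ 0) (ha : IsUni n K a)
    (hb : IsUni n K b) : CoadjRel (labelMat c φ * a) (labelMat c φ * b) ↔
      BumpRel c ∅ (slicePt c φ a) (slicePt c φ b) := by
  rw [BumpRel, maskMat_slicePt ha, maskMat_slicePt hb]
  constructor
  · rintro ⟨g, hg, h⟩
    exact ⟨fun t ht => ht.elim, _, isPat_patPart hg, intertwines_patPart hc hφ ha hb hg h⟩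
  · rintro ⟨-, p, hp, h⟩
    exact exists_lowEq_of_isPat hc hφ ha hb hp h

end slice

theorem IsFactorization.coadjRel {A G M H : (σ → K) → Matrix (Fin n) (Fin n) K}
    (h : IsFactorization c φ A n G M H) {v : σ → K} (hv : InCell c φ (A v)) :
    CoadjRel (A v) (labelMat c φ * (H v * G v)) := by
  refine CoadjRel.symm ⟨G v, h.isUni_left v, ?_⟩
  simpa only [Matrix.mul_assoc] using ((h.lowEq_labelMat hv).mul_right (h.isUni_left v)).symm

theorem IsFactorization.lowEq_of_inSlice {A G M H : (σ → K) → Matrix (Fin n) (Fin n) K}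
    (h : IsFactorization c φ A n G M H) {v : σ → K} (hv : InSlice c φ (A v)) :
    LowEq (A v) (labelMat c φ * (H v * G v)) := by
  simpa only [h.left_eq_one v hv, Matrix.one_mul, Matrix.mul_one] using h.lowEq_labelMat hv.inCell

namespace MatReg

theorem matOf : MatReg (matOf n K) := by
  intro a b
  by_cases h : IsPosRoot n ((a : ℕ) + 1, (b : ℕ) + 1)
  · exact (RegOn.coord _).congr fun v _ => by rw [_root_.matOf, dif_pos h]
  · exact (RegOn.const 0).congr fun v _ => by rw [_root_.matOf, dif_neg h]

theorem matOf_vecOf {A : (σ → K) → Matrix (Fin n) (Fin n) K} (hA : MatReg A) :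
    MatReg fun v => _root_.matOf n K (vecOf n K (A v)) := by
  intro a b
  by_cases h : IsPosRoot n ((a : ℕ) + 1, (b : ℕ) + 1)
  · exact (hA _ _).congr fun v _ => dif_pos h
  · exact (RegOn.const 0).congr fun v _ => dif_neg h

theorem lowerPart {A : (σ → K) → Matrix (Fin n) (Fin n) K} (hA : MatReg A) :
    MatReg fun v => lowerPart n K (A v) := fun a b =>
  RegOn.ite _ (fun _ => hA a b) fun _ => RegOn.const 0

theorem coadjPt_vecOf {A : (σ → K) → Matrix (Fin n) (Fin n) K} (hA : MatReg A)
    (g : Matrix (Fin n) (Fin n) K) (γ : PRoot n) :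
    RegOn Set.univ fun v => coadjPt n K g (vecOf n K (A v)) γ :=
  (((const g).mul hA.matOf_vecOf).mul (const g⁻¹)).lowerPart _ _

theorem sliceMat (hφ : ∀ e, φ e ≠ 0) : MatReg (sliceMat c φ) := by
  refine (const 1).add fun k d => ?_
  simp only [Matrix.of_apply]
  refine RegOn.sum Finset.univ fun e _ => ?_
  exact RegOn.ite _ (fun _ => (RegOn.coord _).div (RegOn.const _) fun _ _ => hφ e)
    fun _ => RegOn.const 0

theorem slicePt {A : (σ → K) → Matrix (Fin n) (Fin n) K} (hA : MatReg A) (t : Fin n × Fin n) :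
    RegOn Set.univ fun v => slicePt c φ (A v) t :=
  RegOn.ite _ (fun _ => (const _).mul hA _ _) fun _ => RegOn.const _

end MatReg

theorem mem_VDvar_iff_inCell {D : Set (ℕ × ℕ)} {ψ : ℕ × ℕ → K} (hD : XDphi n K D ψ = labelMat c φ)
    {v : PRoot n → K} : v ∈ VDvar n K D ψ ↔ InCell c φ (matOf n K v) := by
  rw [mem_VDvar, hD, InCell]

theorem inSlice_matOf_vecOf {a : Matrix (Fin n) (Fin n) K} (ha : IsUni n K a) :
    InSlice c φ (matOf n K (vecOf n K (labelMat c φ * a))) := ⟨a, ha, matOf_vecOf _⟩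

theorem IsFactorization.exists_coadjPt_eq_iff_bumpRel
    {G M H : (PRoot n → K) → Matrix (Fin n) (Fin n) K}
    (h : IsFactorization c φ (matOf n K) n G M H) (hc : Function.Injective c) (hφ : ∀ e, φ e ≠ 0)
    {v w : PRoot n → K} (hv : InCell c φ (matOf n K v)) (hw : InCell c φ (matOf n K w)) :
    (∃ g, IsUni n K g ∧ coadjPt n K g v = w) ↔
      BumpRel c ∅ (slicePt c φ (H v * G v)) (slicePt c φ (H w * G w)) := by
  rw [coadjRel_iff, ← coadjRel_iff_bumpRel hc hφ ((h.isUni_right v).mul (h.isUni_left v))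
    ((h.isUni_right w).mul (h.isUni_left w))]
  have hv' := h.coadjRel hv
  have hw' := h.coadjRel hw
  exact ⟨fun hvw => hv'.symm.trans (hvw.trans hw'), fun hvw => hv'.trans (hvw.trans hw'.symm)⟩

theorem reduces_slice [Infinite K] (hc : IsLabel c) (hφ : ∀ e, φ e ≠ 0) {D : Set (ℕ × ℕ)}
    {ψ : ℕ × ℕ → K} (hD : XDphi n K D ψ = labelMat c φ)
    (hI : (vanishing (PRoot n) K (VDvar n K D ψ)).IsPrime) :
    Reduces (IrrSet.ofPrime (VDvar n K D ψ) hI)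
      (fun v w => ∃ g, IsUni n K g ∧ coadjPt n K g v = w)
      (affineIrr (freePlaces c) (Function.uncurry (labelMat c φ))) (BumpRel c ∅) := by
  obtain ⟨G, M, H, hGH⟩ := exists_isFactorization hc hφ MatReg.matOf le_rfl
  set T := affineIrr (freePlaces c) (Function.uncurry (labelMat c φ))
  let ρ : (PRoot n → K) → Fin n × Fin n → K := fun v => slicePt c φ (H v * G v)
  let s₀ : (Fin n × Fin n → K) → PRoot n → K := fun p => vecOf n K (labelMat c φ * sliceMat c φ p)
  have hs₀ : ∀ p, s₀ p ∈ VDvar n K D ψ := fun p =>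
    (mem_VDvar_iff_inCell hD).mpr (inSlice_matOf_vecOf isUni_sliceMat).inCell
  have hρs₀ : ∀ p ∈ T.carrier, ρ (s₀ p) = p := fun p hp => by
    have hlow := hGH.lowEq_of_inSlice (v := s₀ p) (inSlice_matOf_vecOf isUni_sliceMat)
    exact (slicePt_congr (hlow.symm.trans (matOf_vecOf _))).trans (slicePt_sliceMat hc.inj hφ hp)
  have hr : ∀ v ∈ VDvar n K D ψ, ∀ w ∈ VDvar n K D ψ,
      ((∃ g, IsUni n K g ∧ coadjPt n K g v = w) ↔ BumpRel c ∅ (ρ v) (ρ w)) := fun v hv w hw =>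
    hGH.exists_coadjPt_eq_iff_bumpRel hc.inj hφ ((mem_VDvar_iff_inCell hD).mp hv)
      ((mem_VDvar_iff_inCell hD).mp hw)
  have hsect : ∀ x ∈ VDvar n K D ψ, ∃ g, IsUni n K g ∧ coadjPt n K g (s₀ (ρ x)) = x := by
    intro x hx
    rw [hr _ (hs₀ _) x hx, hρs₀ _ fun t => slicePt_eq_of_notMem]
    exact BumpRel.refl _ _ _
  choose! u hu hux using hsect
  have hmem : ∀ x ∈ VDvar n K D ψ, ∀ p, coadjPt n K (u x) (s₀ p) ∈ VDvar n K D ψ := fun x hx p =>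
    coadjPt_mem_VDvar (hu x hx) (hs₀ p)
  refine Reduces.of_sections (q := 1) (q' := 1) (ρ := ρ) (s := fun x p => coadjPt n K (u x) (s₀ p))
    ?_ ?_ ?_ ?_ ?_ ?_ ?_ ?_ <;> simp only [IrrSet.basicOpen_one]
  · exact ⟨s₀ 0, hs₀ 0⟩
  · exact fun t => ((hGH.reg_right.mul hGH.reg_left).slicePt t).mono (Set.subset_univ _)
  · exact fun v _ t => slicePt_eq_of_notMem
  · exact fun p hp => ⟨s₀ p, hs₀ p, hρs₀ p hp⟩
  · exact hr
  · exact fun x _ γ => (((MatReg.const _).mul (.sliceMat hφ)).coadjPt_vecOf _ γ).mono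
      (Set.subset_univ _)
  · exact hux
  · refine fun x hx p hp => ⟨hmem x hx p, ?_⟩
    rw [← hρs₀ p hp, ← hr _ (hmem x hx _) _ (hs₀ _), hρs₀ p hp]
    exact ⟨(u x)⁻¹, (hu x hx).inv, coadjPt_inv_coadjPt (hu x hx) _⟩

theorem exists_eval_eq_eval_coadjPt (g : Matrix (Fin n) (Fin n) K) (f : MvPolynomial (PRoot n) K) :
    ∃ f' : MvPolynomial (PRoot n) K, ∀ v, eval v f' = eval (coadjPt n K g v) f := by
  have hgen : ∀ v, (eval v).mapMatrix (genMat n K) = matOf n K v := by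
    intro v
    ext a b
    by_cases h : IsPosRoot n ((a : ℕ) + 1, (b : ℕ) + 1) <;> simp [genMat, matOf, h]
  have hC : ∀ (v : PRoot n → K) (h : Matrix (Fin n) (Fin n) K),
      (eval v).mapMatrix (C.mapMatrix h) = h := by
    intro v h
    ext a b
    exact eval_C _
  let P : Matrix (Fin n) (Fin n) (MvPolynomial (PRoot n) K) :=
    C.mapMatrix g * genMat n K * C.mapMatrix g⁻¹
  have hP : ∀ v, (eval v).mapMatrix P = g * matOf n K v * g⁻¹ := fun v => by
    rw [map_mul, map_mul, hgen, hC, hC]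
  have hQ : ∀ γ : PRoot n, ∃ Q : MvPolynomial (PRoot n) K, ∀ v, eval v Q = coadjPt n K g v γ := by
    intro γ
    obtain ⟨i, j, hγ⟩ : ∃ i j, ∀ A, vecOf n K A γ = A i j := ⟨_, _, fun _ => rfl⟩
    refine ⟨P i j, fun v => ?_⟩
    rw [coadjPt, vecOf_eq_iff.mpr (lowEq_lowerPart _), hγ, ← hP, RingHom.mapMatrix_apply,
      Matrix.map_apply]
  choose Q hQ using hQ
  refine ⟨bind₁ Q f, fun v => ?_⟩
  rw [← funext fun γ => hQ γ v]
  exact eval₂Hom_bind₁ _ _ _ _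

theorem tendsto_coadjPt {D : Set (ℕ × ℕ)} {ψ : ℕ × ℕ → K}
    (hI : (vanishing (PRoot n) K (VDvar n K D ψ)).IsPrime) {g : Matrix (Fin n) (Fin n) K}
    (hg : IsUni n K g) : Filter.Tendsto (coadjPt n K g)
      (IrrSet.ofPrime (VDvar n K D ψ) hI).gen (IrrSet.ofPrime (VDvar n K D ψ) hI).gen := by
  rintro U ⟨f, ⟨v, hv, hfv⟩, hU⟩
  obtain ⟨f', hf'⟩ := exists_eval_eq_eval_coadjPt g f
  refine ⟨f', ⟨coadjPt n K g⁻¹ v, coadjPt_mem_VDvar hg.inv hv, ?_⟩, fun w ⟨hw, hfw⟩ => ?_⟩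
  · rwa [hf', coadjPt_coadjPt_inv hg]
  · exact hU ⟨coadjPt_mem_VDvar hg hw, by rwa [← hf']⟩

end SliceReduction

section DiagramRun

variable {n : ℕ} {c₀ c c' : Fin n → ℕ} {s : MState} {b e e' k : Fin n}

/-- The places that are still to be processed when the marking procedure has reached row `r` of
column `b`: those in a later column, or in column `b` above row `r`. -/
def Rem (b r e k : ℕ) : Prop := b < k ∨ (k = b ∧ e < r)

/-- The places which are unmarked because of the still unprocessed entries of the labelling `c₀`. -/
def ExtPlace (c₀ : Fin n → ℕ) (b r : ℕ) (e k : Fin n) : Prop :=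
  c₀ e = k ∨ (∃ i, e < i ∧ c₀ i = k ∧ Rem b r i k ∧ (k : ℕ) ≤ c₀ e) ∨
    (c₀ e < k ∧ Rem b r e (c₀ e) ∧ c₀ e ≤ c₀ k)

/-- The root with zero-based row `e` and column `k`. -/
def rootAt (e k : Fin n) : ℕ × ℕ := ((e : ℕ) + 1, (k : ℕ) + 1)

/-- The relation between a marking state `s` and the labelling `c` obtained from `c₀` by bumping,
when the places outside `Rem b r` have been processed. -/
structure RunInv (c₀ c : Fin n → ℕ) (s : MState) (b r : ℕ) : Prop where
  inj : Function.Injective c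
  unmarked_iff : ∀ e k : Fin n, k < e → Rem b r e k →
    (s (rootAt e k) = none ↔ Tri c k e ∨ ExtPlace c₀ b r e k)
  rem_of_tri : ∀ e k : Fin n, Tri c k e → Rem b r e k
  eq_of_rem : ∀ a : Fin n, Rem b r a (c₀ a) → c a = c₀ a
  exists_eq_of_not_rem : ∀ a : Fin n, ¬ Rem b r a (c₀ a) →
    ∃ a' : Fin n, ¬ Rem b r a' (c₀ a') ∧ c a = c₀ a'

theorem RunInv.congr {b r b' r' : ℕ} (hc₀ : IsLabel c₀) (h : RunInv c₀ c s b r)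
    (hb : b < n) (hb' : b' < n) (hR : ∀ e k : Fin n, k < e → (Rem b r e k ↔ Rem b' r' e k)) :
    RunInv c₀ c s b' r' := by
  have hlab : ∀ a : Fin n, Rem b r a (c₀ a) ↔ Rem b' r' a (c₀ a) := by
    intro a
    by_cases ha : c₀ a < n
    · exact hR a ⟨c₀ a, ha⟩ (hc₀.lt a ha)
    · exact iff_of_true (Or.inl (by omega)) (Or.inl (by omega))
  have hext : ∀ e k : Fin n, k < e → (ExtPlace c₀ b r e k ↔ ExtPlace c₀ b' r' e k) := by
    intro e k hke
    unfold ExtPlace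
    rw [hlab e]
    refine or_congr_right (or_congr_left (exists_congr fun i => and_congr_right fun hi => ?_))
    rw [hR i k (hke.trans hi)]
  refine ⟨h.inj, fun e k hke hr => ?_, fun e k ht => ?_, fun a ha => ?_, fun a ha => ?_⟩
  · rw [h.unmarked_iff e k hke ((hR e k hke).mpr hr), hext e k hke]
  · exact (hR e k ht.1).mp (h.rem_of_tri e k ht)
  · exact h.eq_of_rem a ((hlab a).mpr ha)
  · obtain ⟨a', hrem, hc⟩ := h.exists_eq_of_not_rem a (mt (hlab a).mp ha)
    exact ⟨a', mt (hlab a').mpr hrem, hc⟩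

theorem rootAt_inj {e k e' k' : Fin n} : rootAt e k = rootAt e' k' ↔ e = e' ∧ k = k' := by
  simp [rootAt, Fin.ext_iff]

theorem markStep_col_eq_none (hbe : b < e') (he : e' < e) :
    markStep s (rootAt e b) (rootAt e' b) = none ↔
      s (rootAt e' b) = none ∧ s (rootAt e e') ≠ none := by
  simp only [markStep]
  grind [rootAt]

theorem markStep_row_eq_none (hbk : b < k) (hke : k < e) :
    markStep s (rootAt e b) (rootAt e k) = none ↔
      s (rootAt e k) = none ∧ s (rootAt k b) ≠ none := by
  simp only [markStep]
  grind [rootAt]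

theorem markStep_eq_none_of_ne (he : e' ≠ e) (hk : k ≠ b) :
    markStep s (rootAt e b) (rootAt e' k) = none ↔ s (rootAt e' k) = none := by
  simp only [markStep]
  grind [rootAt]

theorem extPlace_iff_of_ne (h : c₀ e = b → e' ≠ e ∧ k ≠ b) :
    ExtPlace c₀ b e e' k ↔ ExtPlace c₀ b (e + 1) e' k := by
  unfold ExtPlace Rem
  grind

namespace RunInv

theorem unmarked_self_iff (h : RunInv c₀ c s b (e + 1)) (hbe : b < e) :
    s (rootAt e b) = none ↔ Tri c b e ∨ c₀ e = b := by
  have hext : ExtPlace c₀ b (e + 1) e b ↔ c₀ e = b := by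
    unfold ExtPlace Rem
    grind
  rw [h.unmarked_iff e b hbe (Or.inr ⟨rfl, by omega⟩), hext]

theorem isBump (h : RunInv c₀ c s b (e + 1)) (ht : Tri c b e) : IsBump c b e where
  inj := h.inj
  tri := ht
  min := fun k e' ht' => by
    have := h.rem_of_tri e' k ht'
    unfold Rem at this
    omega
  max := fun e' ht' => by
    have := h.rem_of_tri e' b ht'
    unfold Rem at this
    omega

theorem not_rem_of_tri (h : RunInv c₀ c s b (e + 1)) (ht : Tri c b e) :
    ¬ Rem b e b (c₀ b) ∧ ¬ Rem b e e (c₀ e) := by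
  have hb := h.eq_of_rem b
  have he := h.eq_of_rem e
  unfold Tri at ht
  unfold Rem at *
  omega

theorem le_label_of_extPlace (h : RunInv c₀ c s b (e + 1)) (hke : k < e)
    (hext : ExtPlace c₀ b (e + 1) k b) : b ≤ c k := by
  have := h.eq_of_rem k
  unfold ExtPlace Rem at *
  grind

theorem label_lt_of_not_rem (hc₀ : IsLabel c₀) (h : RunInv c₀ c s b (e + 1)) (he : c₀ e = b)
    {a : Fin n} (ha : ¬ Rem b (e + 1) a (c₀ a)) : c a < b := by
  obtain ⟨a', ha', hca⟩ := h.exists_eq_of_not_rem a ha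
  have hinj := @hc₀.inj a' e
  unfold Rem at ha'
  grind

theorem col_iff_of_tri (h : RunInv c₀ c s b (e + 1)) (ht : Tri c b e) (he : c₀ e ≠ b)
    (hbe : b < e') (hee : e' < e) :
    s (rootAt e' b) = none ∧ s (rootAt e e') ≠ none ↔
      Tri c b e' ∧ c e < c e' ∨ ExtPlace c₀ b e e' b := by
  have hrem := (h.not_rem_of_tri ht).2
  have hle : ExtPlace c₀ b (e + 1) e' b → b ≤ c e' := h.le_label_of_extPlace hee
  have hext : ¬ ExtPlace c₀ b (e + 1) e e' := by
    unfold ExtPlace Rem at *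
    grind
  have hne : c e' ≠ c e := fun hc => hee.ne (h.inj hc)
  rw [h.unmarked_iff e' b hbe (Or.inr ⟨rfl, by omega⟩), Ne, h.unmarked_iff e e' hee (Or.inl hbe),
    extPlace_iff_of_ne fun hc => absurd hc he]
  unfold Tri at *
  grind

theorem row_iff_of_tri (h : RunInv c₀ c s b (e + 1)) (ht : Tri c b e) (he : c₀ e ≠ b)
    (hbk : b < k) (hke : k < e) :
    s (rootAt e k) = none ∧ s (rootAt k b) ≠ none ↔
      Tri c k e ∧ ¬ Tri c b k ∨ ExtPlace c₀ b e e k := by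
  have hrem := (h.not_rem_of_tri ht).2
  have hle : ExtPlace c₀ b (e + 1) k b → b ≤ c k := h.le_label_of_extPlace hke
  have hext : ¬ ExtPlace c₀ b (e + 1) e k := by
    unfold ExtPlace Rem at *
    grind
  rw [h.unmarked_iff e k hke (Or.inl hbk), Ne, h.unmarked_iff k b hbk (Or.inr ⟨rfl, by omega⟩),
    extPlace_iff_of_ne (e' := e) fun hc => absurd hc he]
  unfold Tri at *
  grind

theorem tri_row_iff_of_eq (hc₀ : IsLabel c₀) (h : RunInv c₀ c s b (e + 1)) (he : c₀ e = b)
    (hbk : b < k) (hke : k < e) : Tri c k e ↔ c₀ k < b := by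
  have : c₀ k ≠ b := fun hc => hke.ne (hc₀.inj (hc.trans he.symm))
  have hce := h.eq_of_rem e
  have hck := h.eq_of_rem k
  have hlt : ¬ Rem b (e + 1) k (c₀ k) → c k < b := h.label_lt_of_not_rem hc₀ he
  unfold Tri
  unfold Rem at *
  omega

theorem row_eq_none_of_eq (hc₀ : IsLabel c₀) (h : RunInv c₀ c s b (e + 1)) (he : c₀ e = b)
    (hbk : b < k) (hke : k < e) : s (rootAt e k) = none := by
  rw [h.unmarked_iff e k hke (Or.inl hbk), h.tri_row_iff_of_eq hc₀ he hbk hke]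
  unfold ExtPlace Rem
  omega

theorem col_iff_of_eq (hc₀ : IsLabel c₀) (h : RunInv c₀ c s b (e + 1)) (he : c₀ e = b)
    (hbe : b < e') (hee : e' < e) :
    s (rootAt e' b) = none ∧ s (rootAt e e') ≠ none ↔
      Tri c b e' ∧ c e < c e' ∨ ExtPlace c₀ b e e' b := by
  have hce := h.eq_of_rem e
  refine iff_of_false (fun hs => hs.2 (h.row_eq_none_of_eq hc₀ he hbe hee)) ?_
  have hinj : ∀ i, c₀ i = b → i = e := fun i hi => hc₀.inj (hi.trans he.symm)
  unfold Tri ExtPlace Rem at *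
  grind

theorem row_iff_of_eq (hc₀ : IsLabel c₀) (h : RunInv c₀ c s b (e + 1)) (he : c₀ e = b)
    (hbk : b < k) (hke : k < e) :
    s (rootAt e k) = none ∧ s (rootAt k b) ≠ none ↔
      Tri c k e ∧ ¬ Tri c b k ∨ ExtPlace c₀ b e e k := by
  have : ∀ i, c₀ i = b → i = e := fun i hi => hc₀.inj (hi.trans he.symm)
  have hext : ¬ ExtPlace c₀ b e e k := by
    unfold ExtPlace Rem
    grind
  have hext' : ExtPlace c₀ b (e + 1) k b ↔ ¬ c₀ k < b := by
    unfold ExtPlace Rem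
    grind
  rw [h.tri_row_iff_of_eq hc₀ he hbk hke, Ne, h.unmarked_iff k b hbk (Or.inr ⟨rfl, by omega⟩),
    hext']
  have := h.row_eq_none_of_eq hc₀ he hbk hke
  tauto

theorem markStep_eq_none_iff (hc₀ : IsLabel c₀) (h : RunInv c₀ c s b (e + 1))
    (hs : Tri c b e ∨ c₀ e = b) (hke : k < e') (hr : Rem b e e' k) :
    markStep s (rootAt e b) (rootAt e' k) = none ↔
      (Tri c k e' ∧ ¬ (k = b ∧ c e' ≤ c e) ∧ ¬ (e' = e ∧ Tri c b k)) ∨ ExtPlace c₀ b e e' k := by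
  rcases eq_or_ne k b with rfl | hk
  · have hee : e' < e := by
      unfold Rem at hr
      omega
    rw [markStep_col_eq_none hke hee]
    by_cases he : c₀ e = k
    · simp [h.col_iff_of_eq hc₀ he hke hee, hee.ne]
    · simp [h.col_iff_of_tri (hs.resolve_right he) he hke hee, hee.ne]
  have hbk : b < k := by
    have := Fin.val_ne_of_ne hk
    unfold Rem at hr
    omega
  rcases eq_or_ne e' e with rfl | hee
  · rw [markStep_row_eq_none hbk hke]
    by_cases he : c₀ e' = b
    · simp [h.row_iff_of_eq hc₀ he hbk hke, hk]
    · simp [h.row_iff_of_tri (hs.resolve_right he) he hbk hke, hk]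
  · rw [markStep_eq_none_of_ne hee hk, h.unmarked_iff e' k hke (Or.inl hbk),
      extPlace_iff_of_ne fun _ => ⟨hee, hk⟩]
    simp [hk, hee]

theorem skip (h : RunInv c₀ c s b (e + 1)) (ht : ¬ Tri c b e) (he : c₀ e ≠ b) :
    RunInv c₀ c s b e := by
  have hlab : ∀ a : Fin n, Rem b e a (c₀ a) ↔ Rem b (e + 1) a (c₀ a) := by
    unfold Rem
    grind
  refine ⟨h.inj, fun e' k hke hr => ?_, fun e' k ht' => ?_, fun a ha => ?_, ?_⟩
  · rw [h.unmarked_iff e' k hke (by unfold Rem at *; omega),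
      extPlace_iff_of_ne fun hc => absurd hc he]
  · have := h.rem_of_tri e' k ht'
    unfold Rem at *
    grind
  · exact h.eq_of_rem a ((hlab a).mp ha)
  · simpa only [hlab] using h.exists_eq_of_not_rem

theorem step (hc₀ : IsLabel c₀) (h : RunInv c₀ c s b (e + 1)) (hs : Tri c b e ∨ c₀ e = b)
    (hinj : Function.Injective c')
    (htri : ∀ k e', Tri c' k e' ↔ Tri c k e' ∧ ¬ (k = b ∧ c e' ≤ c e) ∧ ¬ (e' = e ∧ Tri c b k))
    (hrem : ∀ a : Fin n, Rem b e a (c₀ a) → c' a = c a)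
    (hnot : ∀ a : Fin n, ¬ Rem b e a (c₀ a) → ∃ a' : Fin n, ¬ Rem b e a' (c₀ a') ∧ c' a = c a') :
    RunInv c₀ c' (markStep s (rootAt e b)) b e := by
  have hmono : ∀ {a : Fin n}, Rem b e a (c₀ a) → Rem b (e + 1) a (c₀ a) := by
    unfold Rem
    omega
  refine ⟨hinj, fun e' k hke hr => ?_, fun e' k ht => ?_, fun a ha => ?_, fun a ha => ?_⟩
  · rw [htri, h.markStep_eq_none_iff hc₀ hs hke hr]
  · obtain ⟨ht, hcol, -⟩ := (htri k e').mp ht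
    have := h.rem_of_tri e' k ht
    unfold Rem at *
    grind
  · rw [hrem a ha, h.eq_of_rem a (hmono ha)]
  · obtain ⟨a', ha', hca⟩ := hnot a ha
    by_cases hra : Rem b (e + 1) a' (c₀ a')
    · exact ⟨a', ha', hca.trans (h.eq_of_rem a' hra)⟩
    · obtain ⟨a'', ha'', hca'⟩ := h.exists_eq_of_not_rem a' hra
      exact ⟨a'', mt hmono ha'', hca.trans hca'⟩

theorem bump (hc₀ : IsLabel c₀) (h : RunInv c₀ c s b (e + 1)) (ht : Tri c b e) :
    RunInv c₀ (bumpLabel c b e) (markStep s (rootAt e b)) b e := by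
  obtain ⟨hb, he⟩ := h.not_rem_of_tri ht
  refine h.step hc₀ (Or.inl ht) (bumpLabel_injective h.inj b e) (h.isBump ht).tri_iff
    (fun a ha => ?_) (fun a ha => ?_)
  · exact bumpLabel_of_ne c (by rintro rfl; exact hb ha) (by rintro rfl; exact he ha)
  · rcases eq_or_ne a b with rfl | hab
    · exact ⟨e, he, bumpLabel_left c a e⟩
    rcases eq_or_ne a e with rfl | hae
    · exact ⟨b, hb, bumpLabel_right c b a⟩
    · exact ⟨a, ha, bumpLabel_of_ne c hab hae⟩

theorem mark_of_not_tri (hc₀ : IsLabel c₀) (h : RunInv c₀ c s b (e + 1)) (hbe : b < e)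
    (ht : ¬ Tri c b e) (he : c₀ e = b) : RunInv c₀ c (markStep s (rootAt e b)) b e := by
  have hce : c e = b := (h.eq_of_rem e (Or.inr ⟨he, by omega⟩)).trans he
  have hb : ∀ k, ¬ Tri c b k := by
    unfold Tri at *
    omega
  refine h.step hc₀ (Or.inr he) h.inj (fun k e' => ?_) (fun a _ => rfl) fun a ha => ⟨a, ha, rfl⟩
  have hcol : ¬ (k = b ∧ Tri c k e') := fun ⟨hk, hk'⟩ => hb e' (hk ▸ hk')
  have := hb k
  tauto

end RunInv

end DiagramRun

section DiagramChain

variable {n : ℕ} {c₀ c : Fin n → ℕ} {s : MState} {b r : ℕ} {e d : Fin n} {l : List (ℕ × ℕ)}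
  {D : Set (ℕ × ℕ)}

/-- The order `≻` in which the positive roots are processed. -/
def RootGT (γ δ : ℕ × ℕ) : Prop := γ.2 < δ.2 ∨ (γ.2 = δ.2 ∧ δ.1 < γ.1)

theorem IsPosRoot.exists_rootAt {γ : ℕ × ℕ} (h : IsPosRoot n γ) :
    ∃ e k : Fin n, k < e ∧ γ = rootAt e k := by
  obtain ⟨hj, hji, hin⟩ := h
  refine ⟨⟨γ.1 - 1, by omega⟩, ⟨γ.2 - 1, by omega⟩, Fin.mk_lt_mk.mpr (by omega), ?_⟩
  ext <;> dsimp only [rootAt] <;> omega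

theorem isPosRoot_rootAt {e k : Fin n} : IsPosRoot n (rootAt e k) ↔ k < e := by
  unfold IsPosRoot rootAt
  omega

theorem exists_index_of_isPosRoot {S : Set (ℕ × ℕ)} (hS : ∀ γ ∈ S, IsPosRoot n γ) :
    ∃ f : S → Fin n × Fin n, Function.Injective f ∧ Set.range f = {t | rootAt t.1 t.2 ∈ S} := by
  choose p q _ hpq using fun γ : S => (hS γ γ.2).exists_rootAt
  refine ⟨fun γ => (p γ, q γ), fun γ δ h => ?_, Set.ext fun t => ⟨?_, fun ht => ?_⟩⟩
  · obtain ⟨hp, hq⟩ := Prod.mk.inj h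
    exact Subtype.ext (by rw [hpq γ, hpq δ, hp, hq])
  · rintro ⟨γ, rfl⟩
    exact (hpq γ).subst (motive := (· ∈ S)) γ.2
  · obtain ⟨hp, hq⟩ := rootAt_inj.mp (hpq ⟨_, ht⟩)
    exact ⟨⟨_, ht⟩, Prod.ext hp.symm hq.symm⟩

theorem rootAt_mem_tail_iff (hl : ∀ γ ∈ l, RootGT (rootAt e d) γ)
    (hmem : ∀ e' k : Fin n, k < e' → (rootAt e' k ∈ rootAt e d :: l ↔ Rem b r e' k)) (hde : d < e)
    (e' k : Fin n) (hk : k < e') : rootAt e' k ∈ l ↔ Rem d e e' k := by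
  have hhead := (hmem e d hde).mp List.mem_cons_self
  have hcons := hmem e' k hk
  have hgt := hl (rootAt e' k)
  rw [List.mem_cons, rootAt_inj] at hcons
  unfold RootGT rootAt at *
  unfold Rem at *
  grind

theorem rem_iff_of_mem_cons (hl : ∀ γ ∈ l, RootGT (rootAt e d) γ)
    (hmem : ∀ e' k : Fin n, k < e' → (rootAt e' k ∈ rootAt e d :: l ↔ Rem b r e' k)) (hde : d < e)
    (e' k : Fin n) (hk : k < e') : Rem b r e' k ↔ Rem d (e + 1) e' k := by
  rw [← hmem e' k hk, List.mem_cons, rootAt_inj, rootAt_mem_tail_iff hl hmem hde e' k hk]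
  unfold Rem
  grind

theorem exists_bumpChain (hc₀ : IsLabel c₀) (hb : 0 < n → b < n) (hpos : ∀ γ ∈ l, IsPosRoot n γ)
    (hl : l.Pairwise RootGT) (hmem : ∀ e k : Fin n, k < e → (rootAt e k ∈ l ↔ Rem b r e k))
    (h : RunInv c₀ c s b r) :
    ∃ L, BumpChain c L ∧ ∀ e k : Fin n, c₀ e ≠ k →
      ((e, k) ∈ L ↔ rootAt e k ∈ (diagRun s l).map Prod.fst) := by
  induction l generalizing c s b r with
  | nil =>
    refine ⟨[], .nil fun k e ht => ?_, fun e k _ => by simp [diagRun]⟩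
    simpa using (hmem e k ht.1).mpr (h.rem_of_tri e k ht)
  | cons ξ l ih =>
    obtain ⟨e, d, hde, rfl⟩ := (hpos ξ List.mem_cons_self).exists_rootAt
    obtain ⟨hgt, hl⟩ := List.pairwise_cons.mp hl
    have hinv : RunInv c₀ c s d (e + 1) :=
      h.congr hc₀ (hb e.pos) d.2 (rem_iff_of_mem_cons hgt hmem hde)
    have hnext : ∀ {c' : Fin n → ℕ} {s' : MState}, RunInv c₀ c' s' d e →
        ∃ L, BumpChain c' L ∧ ∀ e k : Fin n, c₀ e ≠ k →
          ((e, k) ∈ L ↔ rootAt e k ∈ (diagRun s' l).map Prod.fst) :=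
      ih (fun _ => d.2) (fun γ hγ => hpos γ (List.mem_cons_of_mem _ hγ)) hl
        (rootAt_mem_tail_iff hgt hmem hde)
    have hself := hinv.unmarked_self_iff hde
    by_cases ht : Tri c d e
    · obtain ⟨L, hL, hiff⟩ := hnext (hinv.bump hc₀ ht)
      refine ⟨(e, d) :: L, .cons (hinv.isBump ht) hL, fun e' k hk => ?_⟩
      rw [diagRun, if_pos (hself.mpr (Or.inl ht)), List.map_cons, List.mem_cons, List.mem_cons,
        hiff e' k hk, rootAt_inj, Prod.mk.injEq]
    by_cases he : c₀ e = d
    · obtain ⟨L, hL, hiff⟩ := hnext (hinv.mark_of_not_tri hc₀ hde ht he)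
      refine ⟨L, hL, fun e' k hk => ?_⟩
      rw [diagRun, if_pos (hself.mpr (Or.inr he)), List.map_cons, List.mem_cons, hiff e' k hk,
        rootAt_inj]
      refine (or_iff_right ?_).symm
      rintro ⟨rfl, rfl⟩
      exact hk he
    · obtain ⟨L, hL, hiff⟩ := hnext (hinv.skip ht he)
      refine ⟨L, hL, fun e' k hk => ?_⟩
      rw [diagRun, if_neg fun hs => (hself.mp hs).elim ht he, hiff e' k hk]

theorem mem_rootList {γ : ℕ × ℕ} : γ ∈ rootList n ↔ IsPosRoot n γ := by
  obtain ⟨i, j⟩ := γ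
  simp only [rootList, List.mem_flatMap, List.mem_filterMap, List.mem_range, IsPosRoot,
    Option.ite_none_right_eq_some, Option.some.injEq, Prod.mk.injEq]
  constructor
  · rintro ⟨j0, _, k, _, _, _, _⟩
    omega
  · rintro ⟨hj, hji, hin⟩
    exact ⟨j - 1, by omega, n - i, by omega, by omega, by omega, by omega⟩

theorem pairwise_rootList : (rootList n).Pairwise RootGT := by
  rw [rootList, List.pairwise_flatMap]
  refine ⟨fun j _ => ?_, List.pairwise_lt_range.imp fun {j j'} hlt γ hγ δ hδ => ?_⟩
  · rw [List.pairwise_filterMap]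
    refine List.pairwise_lt_range.imp fun {k k'} hlt γ hγ δ hδ => ?_
    simp only [Option.ite_none_right_eq_some, Option.some.injEq] at hγ hδ
    unfold RootGT
    grind
  · simp only [List.mem_filterMap, Option.ite_none_right_eq_some, Option.some.injEq] at hγ hδ
    unfold RootGT
    grind

theorem mem_of_mem_diagRun {γ : ℕ × ℕ} (h : γ ∈ (diagRun s l).map Prod.fst) : γ ∈ l := by
  induction l generalizing s with
  | nil => simp [diagRun] at h
  | cons ξ l ih =>
    rw [diagRun] at h
    split_ifs at h
    · rw [List.map_cons, List.mem_cons] at h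
      exact List.mem_cons.mpr (h.imp_right ih)
    · exact List.mem_cons_of_mem _ (ih h)

theorem isPosRoot_of_mem_CD {γ : ℕ × ℕ} (h : γ ∈ CD n D) : IsPosRoot n γ :=
  mem_rootList.mp (mem_of_mem_diagRun h)

theorem isSingular_rootAt_iff (hlab : ∀ e k : Fin n, rootAt e k ∈ D ↔ c₀ e = k) {e k : Fin n}
    (hke : k < e) : IsSingular n D (rootAt e k) ↔ c₀ e < k ∨ ∃ i, e < i ∧ c₀ i = k := by
  constructor
  · rintro ⟨-, β, γ, hβ, ⟨hαβ, rfl⟩ | ⟨hαβ, rfl⟩, hγ⟩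
    · obtain ⟨a, m, hma, rfl⟩ := hβ.exists_rootAt
      have hm := (hlab e m).mp hγ
      simp only [rootAt, Fin.lt_def] at hαβ hma
      exact Or.inl (by omega)
    · obtain ⟨i, m, hmi, rfl⟩ := hβ.exists_rootAt
      have hi := (hlab i k).mp hγ
      simp only [rootAt, Fin.lt_def] at hαβ hmi
      exact Or.inr ⟨i, Fin.lt_def.mpr (by omega), hi⟩
  · refine fun h => ⟨isPosRoot_rootAt.mpr hke, ?_⟩
    rcases h with h | ⟨i, hei, hi⟩
    · let m : Fin n := ⟨c₀ e, h.trans k.2⟩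
      exact ⟨rootAt k m, rootAt e m, isPosRoot_rootAt.mpr h, Or.inl ⟨rfl, rfl⟩, (hlab e m).mpr rfl⟩
    · exact ⟨rootAt i e, rootAt i k, isPosRoot_rootAt.mpr hei, Or.inr ⟨rfl, rfl⟩,
        (hlab i k).mpr hi⟩

theorem initMark_rootAt_eq_none_iff (hlab : ∀ e k : Fin n, rootAt e k ∈ D ↔ c₀ e = k)
    {e k : Fin n} (hke : k < e) :
    initMark n D (rootAt e k) = none ↔ c₀ e = k ∨ c₀ e < k ∨ ∃ i, e < i ∧ c₀ i = k := by
  rw [← isSingular_rootAt_iff hlab hke, ← hlab]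
  simp only [initMark, MD, Set.mem_ofPred_eq, isPosRoot_rootAt.mpr hke, true_and, ite_eq_right_iff,
    reduceCtorEq, imp_false]
  tauto

theorem runInv_initMark (hc₀ : IsLabel c₀) (hlab : ∀ e k : Fin n, rootAt e k ∈ D ↔ c₀ e = k) :
    RunInv c₀ c₀ (initMark n D) 0 n := by
  have hrem : ∀ (e : Fin n) (k : ℕ), Rem 0 n e k := by
    unfold Rem
    omega
  refine ⟨hc₀.inj, fun e k hke _ => ?_, fun e k _ => hrem e k, fun a _ => rfl,
    fun a ha => absurd (hrem a _) ha⟩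
  rw [initMark_rootAt_eq_none_iff hlab hke, ExtPlace, Tri]
  simp only [hrem, true_and]
  grind

theorem exists_bumpChain_CD (hc : IsLabel c) (hlab : ∀ e k : Fin n, rootAt e k ∈ D ↔ c e = k) :
    ∃ L, BumpChain c L ∧ ∀ e k : Fin n, c e ≠ k → ((e, k) ∈ L ↔ rootAt e k ∈ CD n D) :=
  exists_bumpChain hc id (fun _ => mem_rootList.mp) pairwise_rootList
    (fun e k hke => iff_of_true (mem_rootList.mpr (isPosRoot_rootAt.mpr hke))
      (by unfold Rem; omega)) (runInv_initMark hc hlab)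

theorem exists_isLabel (hD : IsBasic n D) :
    ∃ c : Fin n → ℕ, IsLabel c ∧ ∀ e k : Fin n, rootAt e k ∈ D ↔ c e = k := by
  obtain ⟨hpos, hrow, hcol⟩ := hD
  have hex : ∀ e : Fin n, ∃ m : ℕ, (∃ k : Fin n, m = k ∧ rootAt e k ∈ D) ∨
      (m = n + e ∧ ∀ k : Fin n, rootAt e k ∉ D) := by
    intro e
    by_cases h : ∃ k : Fin n, rootAt e k ∈ D
    · obtain ⟨k, hk⟩ := h
      exact ⟨k, Or.inl ⟨k, rfl, hk⟩⟩
    · exact ⟨n + e, Or.inr ⟨rfl, not_exists.mp h⟩⟩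
  choose c hc using hex
  have hlab : ∀ e k : Fin n, rootAt e k ∈ D ↔ c e = k := by
    intro e k
    rcases hc e with ⟨k', hk', hmem⟩ | ⟨hn, hnot⟩
    · rw [hk']
      refine ⟨fun h => ?_, fun h => ?_⟩
      · rw [(rootAt_inj.mp (hrow _ h _ hmem rfl)).2]
      · rwa [← Fin.ext h]
    · exact iff_of_false (hnot k) (by omega)
  refine ⟨c, ⟨fun e e' h => ?_, fun e h => ?_⟩, hlab⟩
  · rcases hc e with ⟨k, hk, hmem⟩ | ⟨hn, _⟩
    · exact (rootAt_inj.mp (hcol _ hmem _ ((hlab e' k).mpr (h.symm.trans hk)) rfl)).1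
    · rcases hc e' with ⟨k, hk, _⟩ | ⟨hn', _⟩
      · omega
      · exact Fin.ext (by omega)
  · exact isPosRoot_rootAt.mp (hpos _ ((hlab e ⟨c e, h⟩).mpr rfl))

end DiagramChain

theorem exists_XDphi_eq_labelMat {n : ℕ} {K : Type} [Field K] {D : Set (ℕ × ℕ)} {φ : ℕ × ℕ → K}
    {c : Fin n → ℕ} (hlab : ∀ e k : Fin n, rootAt e k ∈ D ↔ c e = k) (hφ : ∀ γ ∈ D, φ γ ≠ 0) :
    ∃ ψ : Fin n → K, (∀ e, ψ e ≠ 0) ∧ XDphi n K D φ = labelMat c ψ := by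
  refine ⟨fun e => if c e < n then φ (e + 1, c e + 1) else 1, fun e => ?_, ?_⟩
  · dsimp only
    split_ifs with h
    · exact hφ _ ((hlab e ⟨c e, h⟩).mpr rfl)
    · exact one_ne_zero
  · ext e k
    have hmem : ((e : ℕ) + 1, (k : ℕ) + 1) ∈ D ↔ c e = k := hlab e k
    by_cases hk : c e = k <;> simp [XDphi, labelMat, hmem, hk]

theorem stmt15_general (n : ℕ) (K : Type) [Field K] [Infinite K]
    (D : Set (ℕ × ℕ)) (hD : IsBasic n D)
    (φ : ℕ × ℕ → K) (hφ : ∀ γ ∈ D, φ γ ≠ 0)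
    [hI : (vanishing (PRoot n) K (VDvar n K D φ)).IsPrime] :
    ∃ F : {γ : ℕ × ℕ // γ ∈ CD n D ∧ γ ∉ D} → RatFld n K (VDvar n K D φ),
      (∀ ξ, IsInvariantRat n K (VDvar n K D φ) (F ξ)) ∧
      AlgebraicIndependent K F ∧
      (∀ G ∈ IntermediateField.adjoin K (Set.range F),
        IsInvariantRat n K (VDvar n K D φ) G) ∧
      (∀ G, IsInvariantRat n K (VDvar n K D φ) G →
        G ∈ IntermediateField.adjoin K (Set.range F)) := by
  obtain ⟨c, hc, hlab⟩ := exists_isLabel hD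
  obtain ⟨ψ, hψ, hX⟩ := exists_XDphi_eq_labelMat hlab hφ
  obtain ⟨L, hL, hLC⟩ := exists_bumpChain_CD hc hlab
  obtain ⟨e, he, hrange⟩ := exists_index_of_isPosRoot (S := {γ | γ ∈ CD n D ∧ γ ∉ D})
    fun γ hγ => isPosRoot_of_mem_CD hγ.1
  have hplaces : Set.range e = (∅ ∪ {t | t ∈ L}) \ labelPlaces c := by
    rw [hrange, Set.empty_union]
    ext ⟨i, j⟩
    have hij : ((i, j) ∈ labelPlaces c) ↔ c i = j := Iff.rfl
    have hmem := hLC i j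
    simp only [Set.mem_ofPred_eq, Set.mem_sdiff, hlab, hij]
    tauto
  have hslice := reduces_slice hc hψ hX hI
  have hchain := hL.reduces (Col := ∅) (F := labelPlaces c) (y₀ := Function.uncurry (labelMat c ψ))
    (by simp) (fun _ _ _ => id) fun t ht => (if_pos ht).trans_ne (hψ t.1)
  rw [Set.union_empty, ← hplaces] at hchain
  exact exists_generators_of_reduces (fun _ => tendsto_coadjPt hI) exists_eval_eq_eval_coadjPt he
    (hslice.trans hchain)

/-- the field of invariants `K(V_{D,φ})^N` of the coadjoint
action of `N = UT(n,K)` on the basic variety `V_{D,φ}` is a purely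
transcendental extension of `K` of transcendence degree `|C(D)| − |D|`:
there is a family `{F_ξ : ξ ∈ C(D) ∖ D}` of invariants, algebraically
independent over `K`, whose `K`-extension inside `K(V_{D,φ})` is exactly the
field of invariants. -/
theorem stmt15 (n : ℕ) (hn : 2 ≤ n) (K : Type) [Field K] [CharZero K]
    (D : Set (ℕ × ℕ)) (hD : IsBasic n D)
    (φ : ℕ × ℕ → K) (hφ : ∀ γ ∈ D, φ γ ≠ 0)
    [hI : (vanishing (PRoot n) K (VDvar n K D φ)).IsPrime] :
    ∃ F : {γ : ℕ × ℕ // γ ∈ CD n D ∧ γ ∉ D} → RatFld n K (VDvar n K D φ),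
      (∀ ξ, IsInvariantRat n K (VDvar n K D φ) (F ξ)) ∧
      AlgebraicIndependent K F ∧
      (∀ G ∈ IntermediateField.adjoin K (Set.range F),
        IsInvariantRat n K (VDvar n K D φ) G) ∧
      (∀ G, IsInvariantRat n K (VDvar n K D φ) G →
        G ∈ IntermediateField.adjoin K (Set.range F)) := by
  have : Infinite K := CharZero.infinite K
  exact stmt15_general n K D hD φ hφ
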